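/- Let (h_i, p_i) be a contracting-on-average iterated function system on ℝ^d as above, with unique invariant probability measure ν. Assume in addition that each h_i is conformal and that the system satisfies the regular open set condition. Then the Hausdorff dimension of ν exists and equals s = (∫ ∑_i p_i(x) log p_i(x) dν(x)) / (∫ ∑_i p_i(x) log h_i'(x) dν(x)). -/

import Mathlib

open MeasureTheory Metric Filter ENNReal NNReal

noncomputable section

/-- The upper Hausdorff dimension of a measure: the infimum of the Hausdorff
dimensions of sets of full measure. -/
def upperDimH {X : Type*} [EMetricSpace X] [MeasurableSpace X]
    (μ : Measure X) : ℝ≥0∞ :=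
  ⨅ (s : Set X) (_ : μ sᶜ = 0), dimH s

/-- The lower Hausdorff dimension of a measure: the infimum of the Hausdorff
dimensions of sets of positive measure. -/
def lowerDimH {X : Type*} [EMetricSpace X] [MeasurableSpace X]
    (μ : Measure X) : ℝ≥0∞ :=
  ⨅ (s : Set X) (_ : 0 < μ s), dimH s

/-!
Average contraction of `log dist` gives, at a small exponent `β`, a chain that contracts `dist ^ β`
in mean. Hence the distortion along a random word is summable, and the Birkhoff sums of `log p_i`
and `log ‖D h_i‖` satisfy a law of large numbers: a typical word of length `n` has probability about
`exp (-n H)` and contracts by about `exp (-n χ)`, where `s = H / χ`.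

* Upper bound: about `exp (n H)` words carry most of the mass, and their images of a small ball have
  radius about `exp (-n χ)`.
* Lower bound: under the open set condition the images of the open set under distinct words of
  length `n` are disjoint, so by conformality a volume count lets only `exp (o(n))` typical words
  end in a given ball of radius `exp (-n χ)`. A cover of a set of positive measure uses balls of
  many scales at once; hence the exceptional words must have small probability simultaneously for
  all lengths, which follows from a maximal inequality for suffixes of words under the invariant
  measure.

The maps `h_i` are not assumed Lipschitz or injective: both follow from the bounds on `log ‖D h_i‖`,
injectivity via Hadamard's global inversion theorem.
-/

/-! ### Global inversion -/

section Hadamard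

open Topology

/-- `f` has local right inverses through each of its points, all of them `K`-Lipschitz. For `C¹`
maps this encodes a uniform bound on the inverse of the derivative. -/
def HasLipschitzLocalSections {X Y : Type*} [PseudoEMetricSpace X] [PseudoEMetricSpace Y]
    (K : ℝ≥0) (f : X → Y) : Prop :=
  ∀ z, ∃ g : Y → X, g (f z) = z ∧ ∃ U ∈ 𝓝 (f z), Set.RightInvOn g f U ∧ LipschitzOnWith K g U

/-- `γ` lifts the segment `s ↦ f z + s • v` through `f` on `[0, t]` and lies over its time-`t` point
afterwards; prescribing `f ∘ γ` for all times makes the condition closed in `(t, γ)`. -/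
structure IsSegmentLift {X V : Type*} [PseudoEMetricSpace X] [NormedAddCommGroup V]
    [NormedSpace ℝ V] (K : ℝ≥0) (f : X → V) (z : X) (v : V) (t : ℝ) (γ : ℝ → X) : Prop where
  lipschitzWith : LipschitzWith (K * ‖v‖₊) γ
  apply_zero : γ 0 = z
  map_apply : ∀ s, 0 ≤ s → f (γ s) = f z + min s t • v

lemma lipschitzWith_of_lipschitzOnWith_Iic_Ici {X : Type*} [PseudoMetricSpace X] {K : ℝ≥0}
    {γ : ℝ → X} {t : ℝ} (hl : LipschitzOnWith K γ (Set.Iic t))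
    (hr : LipschitzOnWith K γ (Set.Ici t)) : LipschitzWith K γ := by
  have key : ∀ s s', s ≤ s' → dist (γ s) (γ s') ≤ K * dist s s' := by
    intro s s' hss'
    rcases le_total s' t with hs' | hs'
    · exact hl.dist_le_mul _ (hss'.trans hs') _ hs'
    rcases le_total t s with hs | hs
    · exact hr.dist_le_mul _ hs _ hs'
    calc dist (γ s) (γ s') ≤ dist (γ s) (γ t) + dist (γ t) (γ s') := dist_triangle _ _ _
      _ ≤ K * dist s t + K * dist t s' :=
        add_le_add (hl.dist_le_mul _ hs _ Set.self_mem_Iic)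
          (hr.dist_le_mul _ Set.self_mem_Ici _ hs')
      _ = K * dist s s' := by
        rw [← mul_add, Real.dist_eq, Real.dist_eq, Real.dist_eq, abs_of_nonpos (sub_nonpos.2 hs),
          abs_of_nonpos (sub_nonpos.2 hs'), abs_of_nonpos (sub_nonpos.2 hss')]
        ring
  refine LipschitzWith.of_dist_le_mul fun s s' => ?_
  rcases le_total s s' with h | h
  · exact key s s' h
  · rw [dist_comm (γ s), dist_comm s]
    exact key s' s h

variable {X V : Type*} [MetricSpace X] [NormedAddCommGroup V] [NormedSpace ℝ V]
  {K : ℝ≥0} {f : X → V} {z : X} {v : V} {t : ℝ} {γ : ℝ → X}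

lemma isSegmentLift_zero : IsSegmentLift K f z v 0 fun _ => z where
  lipschitzWith := LipschitzWith.const' z
  apply_zero := rfl
  map_apply s hs := by simp [hs]

lemma isClosed_setOf_isSegmentLift (hf : Continuous f) :
    IsClosed {q : ℝ × (ℝ → X) | IsSegmentLift K f z v q.1 q.2} := by
  have h_eq : {q : ℝ × (ℝ → X) | IsSegmentLift K f z v q.1 q.2} =
      (⋂ s : ℝ, ⋂ s' : ℝ, {q | dist (q.2 s) (q.2 s') ≤ ↑(K * ‖v‖₊) * dist s s'}) ∩
        {q | q.2 0 = z} ∩ ⋂ s : ℝ, ⋂ _ : 0 ≤ s, {q | f (q.2 s) = f z + min s q.1 • v} := by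
    ext q
    simp only [Set.mem_inter_iff, Set.mem_iInter, Set.mem_ofPred_eq,
      ← lipschitzWith_iff_dist_le_mul]
    exact ⟨fun h => ⟨⟨h.1, h.2⟩, h.3⟩, fun h => ⟨h.1.1, h.1.2, h.2⟩⟩
  rw [h_eq]
  refine ((isClosed_iInter fun s => isClosed_iInter fun s' => ?_).inter ?_).inter
    (isClosed_iInter fun s => isClosed_iInter fun _ => ?_)
  · exact isClosed_le (by fun_prop) (by fun_prop)
  · exact isClosed_eq (by fun_prop) (by fun_prop)
  · exact isClosed_eq (by fun_prop) (by fun_prop)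

-- Lifts from a fixed point stay in a product of closed balls, which is compact by Tychonoff.
lemma isClosed_setOf_exists_isSegmentLift [ProperSpace X] (hf : Continuous f) :
    IsClosed ({t | ∃ γ, IsSegmentLift K f z v t γ} ∩ Set.Icc 0 1) := by
  have h_compact : IsCompact (Set.Icc (0 : ℝ) 1 ×ˢ
      Set.univ.pi fun s : ℝ => closedBall z (↑(K * ‖v‖₊) * dist s 0)) :=
    isCompact_Icc.prod (isCompact_univ_pi fun s => isCompact_closedBall _ _)
  have h_eq : {t | ∃ γ, IsSegmentLift K f z v t γ} ∩ Set.Icc 0 1 = Prod.fst ''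
      ((Set.Icc (0 : ℝ) 1 ×ˢ Set.univ.pi fun s : ℝ => closedBall z (↑(K * ‖v‖₊) * dist s 0)) ∩
        {q | IsSegmentLift K f z v q.1 q.2}) := by
    ext t
    constructor
    · rintro ⟨⟨γ, hγ⟩, ht⟩
      refine ⟨(t, γ), ⟨⟨ht, fun s _ => ?_⟩, hγ⟩, rfl⟩
      rw [mem_closedBall, ← hγ.apply_zero]
      exact hγ.lipschitzWith.dist_le_mul s 0
    · rintro ⟨⟨t, γ⟩, ⟨⟨ht, -⟩, hγ⟩, rfl⟩
      exact ⟨⟨γ, hγ⟩, ht⟩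
  rw [h_eq]
  exact ((h_compact.inter_right (isClosed_setOf_isSegmentLift hf)).image
    continuous_fst).isClosed

lemma lipschitzWith_add_min_smul (a v : V) (t : ℝ) :
    LipschitzWith ‖v‖₊ fun s : ℝ => a + min s t • v := by
  refine LipschitzWith.of_dist_le_mul fun s s' => ?_
  rw [dist_add_left, dist_eq_norm, ← sub_smul, norm_smul, mul_comm]
  exact mul_le_mul_of_nonneg_left
    (by simpa [Real.dist_eq] using abs_min_sub_min_le_max s t s' t) (norm_nonneg v)

lemma IsSegmentLift.extend {g : V → X} {U : Set V} {t' : ℝ} (hγ : IsSegmentLift K f z v t γ)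
    (ht : 0 ≤ t) (htt' : t ≤ t') (hg : g (f (γ t)) = γ t) (hgf : Set.RightInvOn g f U)
    (hgL : LipschitzOnWith K g U) (hU : ∀ s ∈ Set.Icc t t', f z + s • v ∈ U) :
    IsSegmentLift K f z v t' fun s => if s ≤ t then γ s else g (f z + min s t' • v) := by
  set γ' : ℝ → X := fun s => if s ≤ t then γ s else g (f z + min s t' • v)
  have h_left : Set.EqOn γ' γ (Set.Iic t) := fun s hs => if_pos hs
  have h_right : Set.EqOn γ' (fun s => g (f z + min s t' • v)) (Set.Ici t) := by
    intro s hs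
    rcases (Set.mem_Ici.1 hs).eq_or_lt with rfl | hs
    · rw [h_left Set.self_mem_Iic]
      simp only
      rw [min_eq_left htt', ← hg, hγ.map_apply t ht, min_self]
    · exact if_neg hs.not_ge
  have h_mem : Set.MapsTo (fun s => f z + min s t' • v) (Set.Ici t) U := fun s hs =>
    hU _ ⟨le_min hs htt', min_le_right _ _⟩
  refine ⟨lipschitzWith_of_lipschitzOnWith_Iic_Ici (t := t) ?_ ?_, ?_, fun s hs => ?_⟩
  · intro s hs s' hs'
    rw [h_left hs, h_left hs']
    exact hγ.lipschitzWith s s'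
  · intro s hs s' hs'
    rw [h_right hs, h_right hs']
    exact hgL.comp (lipschitzWith_add_min_smul _ v t').lipschitzOnWith h_mem hs hs'
  · rw [h_left ht, hγ.apply_zero]
  · rcases le_total s t with hst | hst
    · rw [h_left hst, hγ.map_apply s hs, min_eq_left hst, min_eq_left (hst.trans htt')]
    · rw [h_right hst]
      exact hgf (h_mem hst)

lemma HasLipschitzLocalSections.exists_isSegmentLift_gt (hf : HasLipschitzLocalSections K f)
    (hγ : IsSegmentLift K f z v t γ) (ht : 0 ≤ t) {y : ℝ} (hy : t < y) :
    ∃ t' ∈ Set.Ioc t y, ∃ γ', IsSegmentLift K f z v t' γ' := by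
  obtain ⟨g, hg, U, hU, hgf, hgL⟩ := hf (γ t)
  have h_nhds : ∀ᶠ s in 𝓝 t, f z + s • v ∈ U := by
    have hcont : Continuous fun s : ℝ => f z + s • v := by fun_prop
    refine hcont.continuousAt.eventually_mem ?_
    rwa [hγ.map_apply t ht, min_self] at hU
  obtain ⟨ε, hε, hεU⟩ := Metric.eventually_nhds_iff_ball.1 h_nhds
  refine ⟨min y (t + ε / 2), ⟨lt_min hy (by linarith), min_le_left _ _⟩, _,
    hγ.extend ht (le_min hy.le (by linarith)) hg hgf hgL fun s hs => hεU s ?_⟩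
  have hs' := hs.2.trans (min_le_right _ _)
  rw [mem_ball, Real.dist_eq, abs_of_nonneg (sub_nonneg.2 hs.1)]
  linarith

lemma HasLipschitzLocalSections.exists_isSegmentLift [ProperSpace X]
    (hf : HasLipschitzLocalSections K f) (hfc : Continuous f) (z : X) (v : V) :
    ∃ γ, IsSegmentLift K f z v 1 γ := by
  have h_sub : Set.Icc (0 : ℝ) 1 ⊆ {t | ∃ γ, IsSegmentLift K f z v t γ} := by
    refine (isClosed_setOf_exists_isSegmentLift hfc).Icc_subset_of_forall_exists_gt
      ⟨_, isSegmentLift_zero⟩ ?_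
    rintro t ⟨⟨γ, hγ⟩, ht⟩ y hy
    obtain ⟨t', ht', γ', hγ'⟩ := hf.exists_isSegmentLift_gt hγ ht.1 hy
    exact ⟨t', ⟨γ', hγ'⟩, ht'⟩
  exact h_sub (Set.right_mem_Icc.2 zero_le_one)

/-- **Hadamard's global inversion theorem**, in metric form. Lifting all segments that start at
`f z` gives a continuous section `σ` of `f`; uniqueness of lifts to a connected space forces
`σ ∘ f = id`. -/
lemma antilipschitzWith_of_hasLipschitzLocalSections [ProperSpace X] [PreconnectedSpace X]
    (hf : IsLocalHomeomorph f) (hK : HasLipschitzLocalSections K f) : AntilipschitzWith K f := by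
  refine AntilipschitzWith.of_le_mul_dist fun x z => ?_
  choose Γ hΓ using fun a : V => hK.exists_isSegmentLift hf.continuous z (a - f z)
  have h_cont : Continuous fun q : unitInterval × V => Γ q.2 q.1 := by
    refine hf.continuous_lift (T2Space.isSeparatedMap f)
      ⟨fun q => f z + (q.1 : ℝ) • (q.2 - f z), by fun_prop⟩ ?_ ?_ fun a => ?_
    · ext q
      simp [(hΓ q.2).map_apply _ q.1.2.1, min_eq_left q.1.2.2]
    · simp only [Set.Icc.coe_zero, (hΓ _).apply_zero]
      exact continuous_const
    · exact (hΓ a).lipschitzWith.continuous.comp continuous_subtype_val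
  have h_section : ∀ a, f (Γ a 1) = a := fun a => by simp [(hΓ a).map_apply 1 zero_le_one]
  have h_dist : ∀ a, dist (Γ a 1) z ≤ K * dist a (f z) := fun a => by
    simpa [(hΓ a).apply_zero, dist_eq_norm] using (hΓ a).lipschitzWith.dist_le_mul 1 0
  have h_id : (fun y => Γ (f y) 1) = id := by
    refine (T2Space.isSeparatedMap f).eq_of_comp_eq hf.isLocallyInjective ?_ continuous_id
      (funext fun y => h_section (f y)) z (dist_le_zero.1 (by simpa using h_dist (f z)))
    exact (h_cont.comp (Continuous.prodMk_right (1 : unitInterval))).comp hf.continuous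
  simpa only [congrFun h_id x, id] using h_dist (f x)

lemma antilipschitzWith_of_nnnorm_fderiv_symm_lt {E F : Type*} [NormedAddCommGroup E]
    [NormedSpace ℝ E] [FiniteDimensional ℝ E] [NormedAddCommGroup F] [NormedSpace ℝ F]
    {f : E → F} (hf : ContDiff ℝ 1 f)
    (hder : ∀ x, ∃ A : E ≃L[ℝ] F, (A : E →L[ℝ] F) = fderiv ℝ f x ∧ ‖(A.symm : F →L[ℝ] E)‖₊ < K) :
    AntilipschitzWith K f := by
  have := FiniteDimensional.proper ℝ E
  have := FiniteDimensional.complete ℝ E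
  choose A hA hAK using hder
  have h_strict (x : E) : HasStrictFDerivAt f (A x : E →L[ℝ] F) x := by
    rw [hA x]
    exact hf.contDiffAt.hasStrictFDerivAt one_ne_zero
  refine antilipschitzWith_of_hasLipschitzLocalSections ?_ fun z => ?_
  · exact IsLocalHomeomorph.mk f fun x => ⟨(h_strict x).toOpenPartialHomeomorph f,
      (h_strict x).mem_toOpenPartialHomeomorph_source,
      fun y _ => by rw [HasStrictFDerivAt.toOpenPartialHomeomorph_coe]⟩
  · obtain ⟨U, hU, hLip⟩ :=
      (h_strict z).to_localInverse.exists_lipschitzOnWith_of_nnnorm_lt K (hAK z)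
    exact ⟨(h_strict z).localInverse f (A z) z, (h_strict z).localInverse_apply_image,
      _, inter_mem hU (h_strict z).eventually_right_inverse, fun y hy => hy.2,
      hLip.mono Set.inter_subset_left⟩

end Hadamard

/-! ### Iterated function systems and random words -/

/-- An iterated function system with place-dependent probabilities: continuous maps `map i`,
of which `map i` is applied at `x` with probability `prob i x`. -/
structure IFS (ι X : Type*) [Fintype ι] [TopologicalSpace X] where
  map : ι → X → X
  prob : ι → X → ℝ
  continuous_map : ∀ i, Continuous (map i)
  continuous_prob : ∀ i, Continuous (prob i)
  prob_pos : ∀ i x, 0 < prob i x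
  sum_prob : ∀ x, ∑ i, prob i x = 1

namespace IFS

scoped instance {ι : Type*} : MeasurableSpace (List ι) := ⊤

scoped instance {ι : Type*} : DiscreteMeasurableSpace (List ι) := ⟨fun _ => trivial⟩

section Words

variable {ι X M : Type*} [Fintype ι] [TopologicalSpace X] (S : IFS ι X)

/-- The composition of the maps along a word; the first letter is applied first. -/
def wordMap (w : List ι) (x : X) : X := w.foldl (fun y i => S.map i y) x

/-- The Birkhoff sum of `φ` along the orbit of `x` that follows the word. -/
def wordSum [AddMonoid M] (φ : ι → X → M) : List ι → X → M
  | [], _ => 0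
  | i :: w, x => φ i x + wordSum φ w (S.map i x)

/-- The logarithms of the weights. -/
def logProb (i : ι) (x : X) : ℝ := Real.log (S.prob i x)

/-- The law of the first `n` letters chosen by the chain that starts at `x`. -/
def law : ℕ → X → Measure (List ι)
  | 0, _ => Measure.dirac []
  | n + 1, x => ∑ i, ENNReal.ofReal (S.prob i x) • (law n (S.map i x)).map (i :: ·)

@[simp] lemma wordMap_nil (x : X) : S.wordMap [] x = x := rfl

@[simp] lemma wordMap_cons (i : ι) (w : List ι) (x : X) :
    S.wordMap (i :: w) x = S.wordMap w (S.map i x) := rfl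

lemma wordMap_append (u v : List ι) (x : X) :
    S.wordMap (u ++ v) x = S.wordMap v (S.wordMap u x) := List.foldl_append

@[simp] lemma wordSum_nil [AddMonoid M] (φ : ι → X → M) (x : X) : S.wordSum φ [] x = 0 := rfl

@[simp] lemma wordSum_cons [AddMonoid M] (φ : ι → X → M) (i : ι) (w : List ι) (x : X) :
    S.wordSum φ (i :: w) x = φ i x + S.wordSum φ w (S.map i x) := rfl

lemma continuous_wordMap (w : List ι) : Continuous (S.wordMap w) := by
  induction w with
  | nil => exact continuous_id
  | cons i w ih => exact ih.comp (S.continuous_map i)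

lemma prob_le_one (i : ι) (x : X) : S.prob i x ≤ 1 := by
  rw [← S.sum_prob x]
  exact Finset.single_le_sum (fun j _ => (S.prob_pos j x).le) (Finset.mem_univ i)

lemma logProb_nonpos (i : ι) (x : X) : S.logProb i x ≤ 0 :=
  Real.log_nonpos (S.prob_pos i x).le (S.prob_le_one i x)

lemma exp_logProb (i : ι) (x : X) : Real.exp (S.logProb i x) = S.prob i x :=
  Real.exp_log (S.prob_pos i x)

lemma sum_ofReal_prob (x : X) : ∑ i, ENNReal.ofReal (S.prob i x) = 1 := by
  rw [← ENNReal.ofReal_sum_of_nonneg fun i _ => (S.prob_pos i x).le, S.sum_prob,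
    ENNReal.ofReal_one]

@[simp] lemma lintegral_law_zero (F : List ι → ℝ≥0∞) (x : X) :
    ∫⁻ w, F w ∂S.law 0 x = F [] := lintegral_dirac _ _

lemma lintegral_law_succ (n : ℕ) (F : List ι → ℝ≥0∞) (x : X) :
    ∫⁻ w, F w ∂S.law (n + 1) x =
      ∑ i, ENNReal.ofReal (S.prob i x) * ∫⁻ w, F (i :: w) ∂S.law n (S.map i x) := by
  rw [law, lintegral_finsetSum_measure]
  refine Finset.sum_congr rfl fun i _ => ?_
  rw [lintegral_smul_measure, lintegral_map .of_discrete .of_discrete, smul_eq_mul]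

lemma lintegral_law_append (m n : ℕ) (F : List ι → ℝ≥0∞) (x : X) :
    ∫⁻ w, F w ∂S.law (m + n) x =
      ∫⁻ u, ∫⁻ v, F (u ++ v) ∂S.law n (S.wordMap u x) ∂S.law m x := by
  induction m generalizing F x with
  | zero => simp
  | succ m ih =>
    simp only [Nat.succ_add, lintegral_law_succ, ih, List.cons_append, wordMap_cons]

lemma lintegral_law_concat (n : ℕ) (F : List ι → ℝ≥0∞) (x : X) :
    ∫⁻ w, F w ∂S.law (n + 1) x =
      ∫⁻ u, ∑ i, ENNReal.ofReal (S.prob i (S.wordMap u x)) * F (u ++ [i]) ∂S.law n x := by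
  rw [lintegral_law_append]
  simp only [lintegral_law_succ, lintegral_law_zero]

instance isProbabilityMeasure_law (n : ℕ) (x : X) : IsProbabilityMeasure (S.law n x) := by
  refine ⟨?_⟩
  simp only [← lintegral_one]
  induction n generalizing x with
  | zero => rw [lintegral_law_zero]
  | succ n ih => simp only [lintegral_law_succ, ih, mul_one, sum_ofReal_prob]

lemma ae_length_eq (n : ℕ) (x : X) : ∀ᵐ w ∂S.law n x, w.length = n := by
  simp only [ae_iff, ← lintegral_indicator_one MeasurableSet.of_discrete]
  induction n generalizing x with
  | zero => simp [law]
  | succ n ih =>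
    rw [lintegral_law_succ]
    refine Finset.sum_eq_zero fun i _ => mul_eq_zero_of_right _ ?_
    simpa [Set.indicator] using ih (S.map i x)

lemma law_singleton (v : List ι) (x : X) :
    S.law v.length x {v} = ENNReal.ofReal (Real.exp (S.wordSum S.logProb v x)) := by
  classical
  rw [← lintegral_indicator_one .of_discrete]
  induction v generalizing x with
  | nil => simp
  | cons j v ih =>
    rw [List.length_cons, lintegral_law_succ, Finset.sum_eq_single_of_mem j (Finset.mem_univ j)]
    · rw [wordSum_cons, Real.exp_add, ENNReal.ofReal_mul (Real.exp_nonneg _), exp_logProb, ← ih]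
      simp [Set.indicator]
    · intro i _ hij
      simp [Set.indicator, hij]

lemma law_coe_finset {n : ℕ} {W : Finset (List ι)} (hW : ∀ w ∈ W, w.length = n) (x : X) :
    S.law n x W = ∑ w ∈ W, ENNReal.ofReal (Real.exp (S.wordSum S.logProb w x)) := by
  rw [← sum_measure_singleton]
  refine Finset.sum_congr rfl fun w hw => ?_
  rw [← S.law_singleton w x, hW w hw]

end Words

section Invariant

variable {ι X M : Type*} [Fintype ι] [TopologicalSpace X] [MeasurableSpace X] [BorelSpace X]
  (S : IFS ι X)

lemma measurable_wordSum [AddMonoid M] [MeasurableSpace M] [MeasurableAdd₂ M] {φ : ι → X → M}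
    (hφ : ∀ i, Measurable (φ i)) (w : List ι) : Measurable (S.wordSum φ w) := by
  induction w with
  | nil => exact measurable_const
  | cons i w ih => exact (hφ i).add (ih.comp (S.continuous_map i).measurable)

lemma measurable_lintegral_law {α : Type*} [MeasurableSpace α] (n : ℕ) {F : α → List ι → ℝ≥0∞}
    (hF : ∀ w, Measurable fun a => F a w) {φ : α → X} (hφ : Measurable φ) :
    Measurable fun a => ∫⁻ w, F a w ∂S.law n (φ a) := by
  induction n generalizing F φ with
  | zero => simpa using hF []
  | succ n ih =>
    simp only [lintegral_law_succ]
    exact Finset.measurable_sum _ fun i _ =>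
      ((S.continuous_prob i).measurable.comp hφ).ennreal_ofReal.mul
        (ih (fun w => hF (i :: w)) ((S.continuous_map i).measurable.comp hφ))

lemma measurable_law_apply (n : ℕ) {P : X → List ι → Prop} (hP : ∀ w, MeasurableSet {x | P x w}) :
    Measurable fun x => S.law n x {w | P x w} := by
  simp only [← lintegral_indicator_one (MeasurableSet.of_discrete (s := {w | P _ w}))]
  exact S.measurable_lintegral_law n (fun w => measurable_const.indicator (hP w)) measurable_id

/-- `ν` is a stationary measure of the Markov chain that moves from `x` to `S.map i x` with
probability `S.prob i x`. -/
def IsInvariant (ν : Measure X) : Prop :=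
  ν = ∑ i, Measure.map (S.map i) (ν.withDensity fun x => ENNReal.ofReal (S.prob i x))

variable {S} {ν : Measure X}

lemma IsInvariant.lintegral_sum (hν : S.IsInvariant ν) {f : X → ℝ≥0∞} (hf : Measurable f) :
    ∫⁻ x, ∑ i, ENNReal.ofReal (S.prob i x) * f (S.map i x) ∂ν = ∫⁻ x, f x ∂ν := by
  have h_meas (i : ι) : Measurable fun x => ENNReal.ofReal (S.prob i x) :=
    (S.continuous_prob i).measurable.ennreal_ofReal
  have h_comp (i : ι) : Measurable fun x => f (S.map i x) :=
    hf.comp (S.continuous_map i).measurable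
  conv_rhs => rw [hν]
  rw [lintegral_finsetSum_measure,
    lintegral_finsetSum _ fun i _ => by exact (h_meas i).mul (h_comp i)]
  refine Finset.sum_congr rfl fun i _ => ?_
  rw [lintegral_map hf (S.continuous_map i).measurable,
    lintegral_withDensity_eq_lintegral_mul _ (h_meas i) (h_comp i)]
  rfl

lemma IsInvariant.lintegral_lintegral_law (hν : S.IsInvariant ν) (n : ℕ) {f : X → ℝ≥0∞}
    (hf : Measurable f) : ∫⁻ x, ∫⁻ w, f (S.wordMap w x) ∂S.law n x ∂ν = ∫⁻ x, f x ∂ν := by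
  induction n with
  | zero => simp
  | succ n ih =>
    have h_meas : Measurable fun x => ∫⁻ w, f (S.wordMap w x) ∂S.law n x :=
      S.measurable_lintegral_law n (fun w => hf.comp (S.continuous_wordMap w).measurable)
        measurable_id
    rw [← ih, ← hν.lintegral_sum h_meas]
    simp only [lintegral_law_succ, wordMap_cons]

end Invariant

end IFS

/-! ### Chernoff bound and maximal inequality -/

lemma sum_mul_exp_le {ι : Type*} [Fintype ι] {p t : ι → ℝ} (hp : ∀ i, 0 ≤ p i)
    (hsum : ∑ i, p i = 1) {l B : ℝ} (hl : 0 ≤ l) (ht : ∀ i, |t i| ≤ B) (hlB : l * B ≤ 1) :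
    ∑ i, p i * Real.exp (l * t i) ≤ 1 + l * ∑ i, p i * t i + (l * B) ^ 2 := by
  have h_term (i : ι) : Real.exp (l * t i) ≤ 1 + l * t i + (l * B) ^ 2 := by
    have h_abs : |l * t i| ≤ l * B := by
      rw [abs_mul, abs_of_nonneg hl]
      exact mul_le_mul_of_nonneg_left (ht i) hl
    have h_taylor := (abs_le.1 (Real.abs_exp_sub_one_sub_id_le (h_abs.trans hlB))).2
    linarith [sq_le_sq' (abs_le.1 h_abs).1 (abs_le.1 h_abs).2]
  calc ∑ i, p i * Real.exp (l * t i)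
      ≤ ∑ i, p i * (1 + l * t i + (l * B) ^ 2) :=
        Finset.sum_le_sum fun i _ => mul_le_mul_of_nonneg_left (h_term i) (hp i)
    _ = ∑ i, (p i * (1 + (l * B) ^ 2) + l * (p i * t i)) :=
        Finset.sum_congr rfl fun i _ => by ring
    _ = 1 + l * ∑ i, p i * t i + (l * B) ^ 2 := by
        rw [Finset.sum_add_distrib, ← Finset.sum_mul, hsum, ← Finset.mul_sum]
        ring

namespace IFS

section Chernoff

variable {ι X : Type*} [Fintype ι] [TopologicalSpace X] (S : IFS ι X)

lemma lintegral_exp_wordSum_le {φ : ι → X → ℝ} {c : ℝ}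
    (hφ : ∀ x, ∑ i, S.prob i x * Real.exp (φ i x) ≤ Real.exp c) (n : ℕ) (x : X) :
    ∫⁻ w, ENNReal.ofReal (Real.exp (S.wordSum φ w x)) ∂S.law n x ≤
      ENNReal.ofReal (Real.exp (n * c)) := by
  induction n generalizing x with
  | zero => simp
  | succ n ih =>
    calc ∫⁻ w, ENNReal.ofReal (Real.exp (S.wordSum φ w x)) ∂S.law (n + 1) x
        = ∑ i, ENNReal.ofReal (S.prob i x * Real.exp (φ i x)) *
            ∫⁻ w, ENNReal.ofReal (Real.exp (S.wordSum φ w (S.map i x)))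
              ∂S.law n (S.map i x) := by
          rw [lintegral_law_succ]
          refine Finset.sum_congr rfl fun i _ => ?_
          simp only [wordSum_cons, Real.exp_add, ENNReal.ofReal_mul (Real.exp_nonneg _)]
          rw [lintegral_const_mul _ .of_discrete, ENNReal.ofReal_mul (S.prob_pos i x).le,
            mul_assoc]
      _ ≤ ∑ i, ENNReal.ofReal (S.prob i x * Real.exp (φ i x)) *
            ENNReal.ofReal (Real.exp (n * c)) := by
          gcongr with i
          exact ih _
      _ ≤ ENNReal.ofReal (Real.exp c) * ENNReal.ofReal (Real.exp (n * c)) := by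
          rw [← Finset.sum_mul, ← ENNReal.ofReal_sum_of_nonneg fun i _ =>
            mul_nonneg (S.prob_pos i x).le (Real.exp_nonneg _)]
          gcongr
          exact hφ x
      _ = ENNReal.ofReal (Real.exp ((n + 1 : ℕ) * c)) := by
          rw [← ENNReal.ofReal_mul (Real.exp_nonneg _), ← Real.exp_add]
          congr 2
          push_cast
          ring

lemma wordSum_const_mul (l : ℝ) (φ : ι → X → ℝ) (w : List ι) (x : X) :
    S.wordSum (fun i x => l * φ i x) w x = l * S.wordSum φ w x := by
  induction w generalizing x with
  | nil => simp
  | cons i w ih => simp only [wordSum_cons, ih, mul_add]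

lemma exists_law_le_exp_neg {φ : ι → X → ℝ} {B : ℝ} (hB : ∀ i x, |φ i x| ≤ B)
    (h_mean : ∀ x, ∑ i, S.prob i x * φ i x ≤ 0) {ε : ℝ} (hε : 0 < ε) :
    ∃ θ > 0, ∀ (n : ℕ) (x : X),
      S.law n x {w | n * ε ≤ S.wordSum φ w x} ≤ ENNReal.ofReal (Real.exp (-(θ * n))) := by
  set b := max B 1
  have hb : 0 < b := lt_max_of_lt_right one_pos
  obtain ⟨l, hl, hlb, hlε⟩ : ∃ l > 0, l * b ≤ 1 ∧ l * b ^ 2 ≤ ε / 2 := by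
    refine ⟨min (1 / b) (ε / 2 / b ^ 2), by positivity, ?_, ?_⟩
    · exact (le_div_iff₀ hb).1 (min_le_left _ _)
    · exact (le_div_iff₀ (by positivity)).1 (min_le_right _ _)
  refine ⟨l * (ε / 2), by positivity, fun n x => ?_⟩
  have h_exp (y : X) : ∑ i, S.prob i y * Real.exp (l * φ i y) ≤ Real.exp (l * (ε / 2)) := by
    have h_mgf := sum_mul_exp_le (fun i => (S.prob_pos i y).le) (S.sum_prob y) hl.le
      (fun i => (hB i y).trans (le_max_left B 1)) hlb
    refine h_mgf.trans (le_trans ?_ (Real.add_one_le_exp _))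
    nlinarith [mul_le_mul_of_nonneg_left (h_mean y) hl.le, mul_le_mul_of_nonneg_left hlε hl.le]
  have h_markov := meas_ge_le_lintegral_div (μ := S.law n x)
    (f := fun w => ENNReal.ofReal (Real.exp (l * S.wordSum φ w x))) .of_discrete
    (ε := ENNReal.ofReal (Real.exp (l * (n * ε)))) (by simpa using Real.exp_pos _) ofReal_ne_top
  calc S.law n x {w | n * ε ≤ S.wordSum φ w x}
      ≤ S.law n x {w | ENNReal.ofReal (Real.exp (l * (n * ε))) ≤
          ENNReal.ofReal (Real.exp (l * S.wordSum φ w x))} := by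
        gcongr
        intro hw
        gcongr
    _ ≤ ENNReal.ofReal (Real.exp (n * (l * (ε / 2)))) /
          ENNReal.ofReal (Real.exp (l * (n * ε))) := by
        refine h_markov.trans ?_
        gcongr
        simpa only [wordSum_const_mul] using S.lintegral_exp_wordSum_le h_exp n x
    _ = ENNReal.ofReal (Real.exp (-(l * (ε / 2) * n))) := by
        rw [← ENNReal.ofReal_div_of_pos (Real.exp_pos _), ← Real.exp_sub]
        congr 2
        ring

end Chernoff

section Maximal

variable {ι X : Type*} [Fintype ι] [TopologicalSpace X] (S : IFS ι X)

/-- The queue length after a word, started at `m`: in each step `G` at the current position is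
added and `c` is removed, with truncation at `0`. -/
def queue (G : X → ℝ≥0∞) (c : ℝ≥0∞) : List ι → X → ℝ≥0∞ → ℝ≥0∞
  | [], _, m => m
  | i :: w, x, m => queue G c w (S.map i x) (m + G x - c)

variable {G : X → ℝ≥0∞} {c : ℝ≥0∞}

lemma queue_mono {w : List ι} {x : X} {m m' : ℝ≥0∞} (hm : m ≤ m') :
    S.queue G c w x m ≤ S.queue G c w x m' := by
  induction w generalizing x m m' with
  | nil => exact hm
  | cons i _ ih => exact ih (tsub_le_tsub_right (add_le_add hm le_rfl) _)

lemma queue_append (u v : List ι) (x : X) (m : ℝ≥0∞) :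
    S.queue G c (u ++ v) x m = S.queue G c v (S.wordMap u x) (S.queue G c u x m) := by
  induction u generalizing x m with
  | nil => rfl
  | cons i _ ih => exact ih _ _

lemma wordSum_le_queue_add (v : List ι) (x : X) (m : ℝ≥0∞) :
    m + S.wordSum (fun _ => G) v x ≤ S.queue G c v x m + v.length * c := by
  induction v generalizing x m with
  | nil => simp [queue]
  | cons i v ih =>
    calc m + S.wordSum (fun _ => G) (i :: v) x
        = m + G x + S.wordSum (fun _ => G) v (S.map i x) := by rw [wordSum_cons, add_assoc]
      _ ≤ m + G x - c + c + S.wordSum (fun _ => G) v (S.map i x) :=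
          add_le_add le_tsub_add le_rfl
      _ = m + G x - c + S.wordSum (fun _ => G) v (S.map i x) + c := by ring
      _ ≤ S.queue G c v (S.map i x) (m + G x - c) + v.length * c + c :=
          add_le_add (ih _ _) le_rfl
      _ = S.queue G c (i :: v) x m + (i :: v).length * c := by
          rw [queue, List.length_cons]
          push_cast
          ring

lemma queue_pos_of_lt_wordSum {u v : List ι} {x : X}
    (h : v.length * c < S.wordSum (fun _ => G) v (S.wordMap u x)) :
    0 < S.queue G c (u ++ v) x 0 := by
  rw [queue_append]
  by_contra! h_zero
  have h_le := S.wordSum_le_queue_add (G := G) (c := c) v (S.wordMap u x) (S.queue G c u x 0)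
  rw [nonpos_iff_eq_zero.1 h_zero, zero_add] at h_le
  exact absurd (le_add_self.trans h_le) h.not_ge

variable [MeasurableSpace X] [BorelSpace X] {S} {ν : Measure X}

lemma measurable_queue (hG : Measurable G) (w : List ι) :
    Measurable fun x => S.queue G c w x 0 := by
  suffices ∀ {f : X → X} {m : X → ℝ≥0∞}, Measurable f → Measurable m →
      Measurable fun x => S.queue G c w (f x) (m x) from this measurable_id measurable_const
  induction w with
  | nil => exact fun _ hm => hm
  | cons i _ ih =>
    exact fun hf hm => ih ((S.continuous_map i).measurable.comp hf)
      ((hm.add (hG.comp hf)).sub_const c)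

lemma measurable_lintegral_queue (hG : Measurable G) (n : ℕ) :
    Measurable fun x => ∫⁻ w, S.queue G c w x 0 ∂S.law n x :=
  S.measurable_lintegral_law n (measurable_queue hG) measurable_id

lemma IsInvariant.lintegral_queue_le_succ (hν : S.IsInvariant ν) (hG : Measurable G) (n : ℕ) :
    ∫⁻ x, ∫⁻ w, S.queue G c w x 0 ∂S.law n x ∂ν ≤
      ∫⁻ x, ∫⁻ w, S.queue G c w x 0 ∂S.law (n + 1) x ∂ν := by
  rw [← hν.lintegral_sum (measurable_lintegral_queue hG n)]
  refine lintegral_mono fun x => ?_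
  rw [lintegral_law_succ]
  gcongr with i
  exact S.queue_mono zero_le

-- A queue of positive length has just served `c`.
lemma IsInvariant.mul_lintegral_law_queue_pos_add_le (hν : S.IsInvariant ν) (hG : Measurable G)
    (n : ℕ) :
    c * ∫⁻ x, S.law (n + 1) x {w | 0 < S.queue G c w x 0} ∂ν +
      ∫⁻ x, ∫⁻ w, S.queue G c w x 0 ∂S.law (n + 1) x ∂ν ≤
      ∫⁻ x, ∫⁻ w, S.queue G c w x 0 ∂S.law n x ∂ν + ∫⁻ x, G x ∂ν := by
  have h_meas : Measurable fun x => S.law (n + 1) x {w | 0 < S.queue G c w x 0} :=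
    S.measurable_law_apply _ fun w => measurableSet_lt measurable_const (measurable_queue hG w)
  rw [← hν.lintegral_lintegral_law n hG, ← lintegral_const_mul _ h_meas,
    ← lintegral_add_left (h_meas.const_mul c),
    ← lintegral_add_left (measurable_lintegral_queue hG n)]
  refine lintegral_mono fun x => ?_
  simp only
  rw [← lintegral_indicator_one .of_discrete, ← lintegral_const_mul _ .of_discrete,
    ← lintegral_add_left .of_discrete, ← lintegral_add_left .of_discrete, lintegral_law_concat]
  refine lintegral_mono fun u => ?_
  have h_step (i : ι) :
      c * {w | 0 < S.queue G c w x 0}.indicator 1 (u ++ [i]) + S.queue G c (u ++ [i]) x 0 ≤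
        S.queue G c u x 0 + G (S.wordMap u x) := by
    have h_eq : S.queue G c (u ++ [i]) x 0 = S.queue G c u x 0 + G (S.wordMap u x) - c :=
      queue_append ..
    by_cases h : 0 < S.queue G c (u ++ [i]) x 0
    · rw [Set.indicator_of_mem (by exact h), Pi.one_apply, mul_one, h_eq,
        add_tsub_cancel_of_le (tsub_pos_iff_lt.1 (h_eq ▸ h)).le]
    · rw [Set.indicator_of_notMem (by exact h), mul_zero, zero_add, h_eq]
      exact tsub_le_self
  calc _ ≤ ∑ i, ENNReal.ofReal (S.prob i (S.wordMap u x)) *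
        (S.queue G c u x 0 + G (S.wordMap u x)) := by
        exact Finset.sum_le_sum fun i _ => mul_le_mul_right (h_step i) _
    _ = _ := by rw [← Finset.sum_mul, sum_ofReal_prob, one_mul]

-- The queue with input `G` and service `c` is nonempty after every word with such a suffix.
lemma IsInvariant.mul_lintegral_law_exists_lt_wordSum_le (hν : S.IsInvariant ν)
    (hG : Measurable G) (N : ℕ) :
    c * ∫⁻ x, S.law N x
      {w | ∃ u v, w = u ++ v ∧ v.length * c < S.wordSum (fun _ => G) v (S.wordMap u x)} ∂ν ≤
      ∫⁻ x, G x ∂ν := by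
  by_cases hG_top : ∫⁻ x, G x ∂ν = ∞
  · rw [hG_top]
    exact le_top
  have h_finite (n : ℕ) : ∫⁻ x, ∫⁻ w, S.queue G c w x 0 ∂S.law n x ∂ν ≠ ∞ := by
    induction n with
    | zero => simp [queue]
    | succ n ih =>
      exact ne_top_of_le_ne_top (ENNReal.add_ne_top.2 ⟨ih, hG_top⟩)
        (le_add_self.trans (hν.mul_lintegral_law_queue_pos_add_le hG n))
  calc _ ≤ c * ∫⁻ x, S.law N x {w | 0 < S.queue G c w x 0} ∂ν := by
        gcongr with x
        rintro ⟨u, v, rfl, h⟩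
        exact S.queue_pos_of_lt_wordSum h
    _ ≤ _ := by
        cases N with
        | zero => simp [queue, law]
        | succ n =>
          refine (ENNReal.add_le_add_iff_left (h_finite n)).1 ?_
          rw [add_comm]
          exact (add_le_add le_rfl (hν.lintegral_queue_le_succ hG n)).trans
            (hν.mul_lintegral_law_queue_pos_add_le hG n)

end Maximal

end IFS

/-! ### The transfer operator -/

namespace IFS

section Transfer

variable {ι X : Type*} [Fintype ι] [TopologicalSpace X] (S : IFS ι X)

/-- The conditional mean of `φ` along one step of the chain. -/
def stepMean (φ : ι → X → ℝ) (x : X) : ℝ := ∑ i, S.prob i x * φ i x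

/-- The Markov operator of the chain, dual to the action of the system on measures. -/
def transfer : (X → ℝ) →ₗ[ℝ] X → ℝ where
  toFun f := S.stepMean fun i x => f (S.map i x)
  map_add' f g := by ext x; simp [stepMean, mul_add, Finset.sum_add_distrib]
  map_smul' c f := by ext x; simp [stepMean, Finset.mul_sum, mul_left_comm]

/-- The Cesàro averages of the iterates of the transfer operator. -/
def transferAverage (n : ℕ) (f : X → ℝ) : X → ℝ := birkhoffAverage ℝ S.transfer id n f

lemma transfer_apply (f : X → ℝ) (x : X) :
    S.transfer f x = ∑ i, S.prob i x * f (S.map i x) := rfl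

lemma abs_stepMean_le {φ : ι → X → ℝ} {B : ℝ} (hφ : ∀ i x, |φ i x| ≤ B) (x : X) :
    |S.stepMean φ x| ≤ B :=
  calc |∑ i, S.prob i x * φ i x|
      ≤ ∑ i, |S.prob i x * φ i x| := Finset.abs_sum_le_sum_abs _ _
    _ ≤ ∑ i, S.prob i x * B := by
        gcongr with i
        rw [abs_mul, abs_of_pos (S.prob_pos i x)]
        exact mul_le_mul_of_nonneg_left (hφ i x) (S.prob_pos i x).le
    _ = B := by rw [← Finset.sum_mul, S.sum_prob, one_mul]

lemma abs_transfer_le {f : X → ℝ} {B : ℝ} (hf : ∀ x, |f x| ≤ B) (x : X) :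
    |S.transfer f x| ≤ B :=
  S.abs_stepMean_le (fun _ _ => hf _) x

lemma abs_iterate_transfer_le {f : X → ℝ} {B : ℝ} (hf : ∀ x, |f x| ≤ B) (n : ℕ) (x : X) :
    |(S.transfer^[n] f) x| ≤ B := by
  induction n generalizing x with
  | zero => exact hf x
  | succ n ih =>
    rw [Function.iterate_succ_apply']
    exact S.abs_transfer_le ih x

lemma transfer_transferAverage (n : ℕ) (f : X → ℝ) :
    S.transfer (S.transferAverage n f) = S.transferAverage n (S.transfer f) := by
  rw [transferAverage, map_birkhoffAverage ℝ ℝ]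
  simp only [transferAverage, birkhoffAverage, birkhoffSum, ← Function.iterate_succ_apply,
    Function.iterate_succ_apply', Function.comp_apply, id]

lemma tendsto_transfer_transferAverage_sub {f : X → ℝ} {B : ℝ} (hf : ∀ x, |f x| ≤ B) (x : X) :
    Tendsto (fun n => S.transfer (S.transferAverage n f) x - S.transferAverage n f x) atTop
      (nhds 0) := by
  have h_bounded : Bornology.IsBounded (Set.range fun j => (S.transfer^[j] f) x) :=
    isBounded_iff_forall_norm_le.2
      ⟨B, by rintro _ ⟨j, rfl⟩; exact S.abs_iterate_transfer_le hf j x⟩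
  have h_eval (n : ℕ) (g : X → ℝ) : S.transferAverage n g x =
      birkhoffAverage ℝ S.transfer (fun g => g x) n g :=
    map_birkhoffAverage ℝ ℝ (LinearMap.proj (R := ℝ) (φ := fun _ : X => ℝ) x) S.transfer id n g
  simpa only [transfer_transferAverage, h_eval] using
    tendsto_birkhoffAverage_apply_sub_birkhoffAverage ℝ h_bounded

end Transfer

section InvariantMeasure

variable {ι X : Type*} [Fintype ι] [TopologicalSpace X] [MeasurableSpace X] [BorelSpace X]
  {S : IFS ι X} {ν : Measure X}

lemma integral_map_withDensity_prob (i : ι) {f : X → ℝ}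
    (hf : Integrable f ((ν.withDensity fun x => ENNReal.ofReal (S.prob i x)).map (S.map i))) :
    Integrable (fun x => S.prob i x * f (S.map i x)) ν ∧
      ∫ x, f x ∂(ν.withDensity fun x => ENNReal.ofReal (S.prob i x)).map (S.map i) =
        ∫ x, S.prob i x * f (S.map i x) ∂ν := by
  have h_meas : Measurable fun x => ENNReal.ofReal (S.prob i x) :=
    (S.continuous_prob i).measurable.ennreal_ofReal
  have h_map : AEMeasurable (S.map i) (ν.withDensity fun x => ENNReal.ofReal (S.prob i x)) :=
    (S.continuous_map i).measurable.aemeasurable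
  have h_lt_top : ∀ᵐ x ∂ν, ENNReal.ofReal (S.prob i x) < ∞ := ae_of_all _ fun _ => ofReal_lt_top
  have h_comp := (integrable_map_measure hf.aestronglyMeasurable h_map).1 hf
  rw [integrable_withDensity_iff_integrable_smul' h_meas h_lt_top] at h_comp
  rw [integral_map h_map hf.aestronglyMeasurable,
    integral_withDensity_eq_integral_toReal_smul h_meas h_lt_top]
  simpa [ENNReal.toReal_ofReal (S.prob_pos i _).le] using h_comp

omit [BorelSpace X] in
lemma IsInvariant.integrable_map_withDensity_prob (hν : S.IsInvariant ν) {f : X → ℝ}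
    (hf : Integrable f ν) (i : ι) :
    Integrable f ((ν.withDensity fun x => ENNReal.ofReal (S.prob i x)).map (S.map i)) := by
  rw [hν] at hf
  exact integrable_finsetSum_measure.1 hf i (Finset.mem_univ i)

lemma IsInvariant.integrable_transfer (hν : S.IsInvariant ν) {f : X → ℝ}
    (hf : Integrable f ν) : Integrable (S.transfer f) ν :=
  integrable_finsetSum _ fun i _ =>
    (integral_map_withDensity_prob i (hν.integrable_map_withDensity_prob hf i)).1

lemma IsInvariant.integral_transfer (hν : S.IsInvariant ν) {f : X → ℝ} (hf : Integrable f ν) :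
    ∫ x, S.transfer f x ∂ν = ∫ x, f x ∂ν := by
  have h_int := hν.integrable_map_withDensity_prob hf
  conv_rhs => rw [hν]
  rw [integral_finsetSum_measure fun i _ => h_int i]
  simp only [transfer_apply, (integral_map_withDensity_prob _ (h_int _)).2]
  exact integral_finsetSum _ fun i _ => (integral_map_withDensity_prob i (h_int i)).1

lemma IsInvariant.integral_transferAverage (hν : S.IsInvariant ν) {f : X → ℝ}
    (hf : Integrable f ν) {n : ℕ} (hn : n ≠ 0) :
    ∫ x, S.transferAverage n f x ∂ν = ∫ x, f x ∂ν := by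
  have h_iterate (j : ℕ) :
      Integrable (S.transfer^[j] f) ν ∧ ∫ x, (S.transfer^[j] f) x ∂ν = ∫ x, f x ∂ν := by
    induction j with
    | zero => exact ⟨hf, rfl⟩
    | succ j ih =>
      rw [Function.iterate_succ_apply']
      exact ⟨hν.integrable_transfer ih.1, (hν.integral_transfer ih.1).trans ih.2⟩
  simp only [transferAverage, birkhoffAverage, birkhoffSum, Pi.smul_apply, Finset.sum_apply, id,
    smul_eq_mul]
  rw [integral_const_mul, integral_finsetSum _ fun j _ => (h_iterate j).1]
  simp [h_iterate, hn]

lemma IsInvariant.quasiMeasurePreserving_map (hν : S.IsInvariant ν) (i : ι) :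
    Measure.QuasiMeasurePreserving (S.map i) ν ν := by
  have h_meas := (S.continuous_map i).measurable
  have h_ac : ν ≪ ν.withDensity fun x => ENNReal.ofReal (S.prob i x) :=
    withDensity_absolutelyContinuous' (S.continuous_prob i).measurable.ennreal_ofReal.aemeasurable
      (ae_of_all _ fun x => (ENNReal.ofReal_pos.2 (S.prob_pos i x)).ne')
  refine ⟨h_meas, (h_ac.map h_meas).trans fun s hs => ?_⟩
  rw [hν, Measure.finsetSum_apply, Finset.sum_eq_zero_iff] at hs
  exact hs i (Finset.mem_univ i)

lemma IsInvariant.map_mem_support [HereditarilyLindelofSpace X] (hν : S.IsInvariant ν) (i : ι)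
    {x : X} (hx : x ∈ ν.support) : S.map i x ∈ ν.support :=
  Measure.support_subset_of_isClosed (Measure.isClosed_support.preimage (S.continuous_map i))
    ((hν.quasiMeasurePreserving_map i).tendsto_ae Measure.support_mem_ae) hx

-- The conditional variance `∑ i, p i * (f ∘ h i - f) ^ 2 = P (f ^ 2) - f ^ 2` integrates to zero.
lemma IsInvariant.apply_map_eq_of_transfer_eq (hν : S.IsInvariant ν) {f : X → ℝ}
    (hf : Continuous f) (hf_sq : Integrable (f ^ 2) ν) (h_fixed : S.transfer f = f) (i : ι)
    {x : X} (hx : x ∈ ν.support) : f (S.map i x) = f x := by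
  set V : X → ℝ := fun x => ∑ i, S.prob i x * (f (S.map i x) - f x) ^ 2
  have h_terms (x : X) (i : ι) : 0 ≤ S.prob i x * (f (S.map i x) - f x) ^ 2 :=
    mul_nonneg (S.prob_pos i x).le (sq_nonneg _)
  have hV_cont : Continuous V := continuous_finsetSum _ fun i _ =>
    (S.continuous_prob i).mul (((hf.comp (S.continuous_map i)).sub hf).pow 2)
  have hV_eq : V = S.transfer (f ^ 2) - f ^ 2 := by
    ext x
    have h_expand (i : ι) : S.prob i x * (f (S.map i x) - f x) ^ 2 = S.prob i x *
        f (S.map i x) ^ 2 - 2 * f x * (S.prob i x * f (S.map i x)) + S.prob i x * f x ^ 2 := by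
      ring
    have h_mean : ∑ i, S.prob i x * f (S.map i x) = f x := congr_fun h_fixed x
    simp only [V, h_expand, Finset.sum_add_distrib, Finset.sum_sub_distrib, ← Finset.mul_sum,
      ← Finset.sum_mul, S.sum_prob, h_mean, Pi.sub_apply, transfer_apply, Pi.pow_apply]
    ring
  have hV_int : ∫ x, V x ∂ν = 0 := by
    rw [hV_eq, integral_sub' (hν.integrable_transfer hf_sq) hf_sq, hν.integral_transfer hf_sq,
      sub_self]
  have hV_ae : V =ᵐ[ν] 0 := (integral_eq_zero_iff_of_nonneg
    (fun x => Finset.sum_nonneg fun i _ => h_terms x i)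
    (show Integrable V ν by rw [hV_eq]; exact (hν.integrable_transfer hf_sq).sub hf_sq)).1 hV_int
  have hVx : V x = 0 := Measure.support_subset_of_isClosed
    (isClosed_eq hV_cont continuous_const) hV_ae hx
  have h_term := (Finset.sum_eq_zero_iff_of_nonneg fun i _ => h_terms x i).1 hVx i
    (Finset.mem_univ i)
  simpa [(S.prob_pos i x).ne', sub_eq_zero] using h_term

end InvariantMeasure

end IFS

section HolderClass

variable {X : Type*} [PseudoMetricSpace X]

lemma holderWith_iff_dist_le {Y : Type*} [PseudoMetricSpace Y] {K β : ℝ≥0} {f : X → Y} :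
    HolderWith K β f ↔ ∀ x y, dist (f x) (f y) ≤ K * dist x y ^ (β : ℝ) := by
  refine ⟨fun hf => hf.dist_le, fun hf x y => ?_⟩
  rw [edist_nndist, edist_nndist, ← ENNReal.coe_rpow_of_nonneg _ β.coe_nonneg,
    ← ENNReal.coe_mul, ENNReal.coe_le_coe, ← NNReal.coe_le_coe]
  simpa using hf x y

/-- The functions bounded by `B` and `β`-Hölder with constant `K`. They form a convex set that is
compact for pointwise convergence. -/
def holderClass (X : Type*) [PseudoMetricSpace X] (β B K : ℝ≥0) : Set (X → ℝ) :=
  {f | (∀ x, |f x| ≤ B) ∧ HolderWith K β f}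

variable {β B K : ℝ≥0}

lemma mem_holderClass {f : X → ℝ} : f ∈ holderClass X β B K ↔
    (∀ x, |f x| ≤ B) ∧ ∀ x y, |f x - f y| ≤ K * dist x y ^ (β : ℝ) := by
  simp only [← Real.dist_eq, ← holderWith_iff_dist_le]; rfl

lemma convex_holderClass : Convex ℝ (holderClass X β B K) := by
  have h_abs {u v a b M : ℝ} (hu : |u| ≤ M) (hv : |v| ≤ M) (ha : 0 ≤ a) (hb : 0 ≤ b)
      (hab : a + b = 1) : |a * u + b * v| ≤ M := by
    simpa using convex_closedBall (0 : ℝ) M (by simpa using hu) (by simpa using hv) ha hb hab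
  intro f hf g hg a b ha hb hab
  rw [mem_holderClass] at hf hg ⊢
  refine ⟨fun x => h_abs (hf.1 x) (hg.1 x) ha hb hab, fun x y => ?_⟩
  convert! h_abs (hf.2 x y) (hg.2 x y) ha hb hab using 2
  simp only [Pi.add_apply, Pi.smul_apply, smul_eq_mul]
  ring

lemma isCompact_holderClass : IsCompact (holderClass X β B K) := by
  refine (isCompact_univ_pi fun _ : X => isCompact_Icc (a := -(B : ℝ)) (b := B)).of_isClosed_subset
    ?_ fun f hf x _ => abs_le.1 (hf.1 x)
  have h_inter : holderClass X β B K = (⋂ x, {f : X → ℝ | |f x| ≤ B}) ∩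
      ⋂ x, ⋂ y, {f : X → ℝ | |f x - f y| ≤ K * dist x y ^ (β : ℝ)} := by
    ext f
    simp [mem_holderClass]
  rw [h_inter]
  refine (isClosed_iInter fun x => ?_).inter (isClosed_iInter fun x => isClosed_iInter fun y => ?_)
  · exact isClosed_le (continuous_apply x).abs continuous_const
  · exact isClosed_le ((continuous_apply x).sub (continuous_apply y)).abs continuous_const

end HolderClass

namespace IFS

section HolderContracting

variable {ι X : Type*} [Fintype ι] [PseudoMetricSpace X]

/-- Contraction on average at the exponent `β`, in the form in which it is used: the weights are
`β`-Hölder and one step of the chain contracts `dist ^ β` in mean. -/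
structure IsHolderContracting (S : IFS ι X) (β C q : ℝ≥0) : Prop where
  exponent_pos : 0 < β
  rate_lt_one : q < 1
  holderWith_prob : ∀ i, HolderWith C β (S.prob i)
  sum_dist_rpow_le : ∀ x y,
    ∑ i, S.prob i x * dist (S.map i x) (S.map i y) ^ (β : ℝ) ≤ q * dist x y ^ (β : ℝ)

variable {S : IFS ι X} {β C q B K : ℝ≥0}

namespace IsHolderContracting

lemma abs_stepMean_sub_le (hS : S.IsHolderContracting β C q) {φ : ι → X → ℝ}
    (hφ : ∀ i x, |φ i x| ≤ B) (x y : X) :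
    |S.stepMean φ x - S.stepMean φ y| ≤
      ∑ i, S.prob i x * |φ i x - φ i y| + Fintype.card ι * C * B * dist x y ^ (β : ℝ) := by
  have h_split : S.stepMean φ x - S.stepMean φ y =
      ∑ i, (S.prob i x * (φ i x - φ i y) + (S.prob i x - S.prob i y) * φ i y) := by
    rw [stepMean, stepMean, ← Finset.sum_sub_distrib]
    exact Finset.sum_congr rfl fun i _ => by ring
  have h_term (i : ι) : |S.prob i x * (φ i x - φ i y) + (S.prob i x - S.prob i y) * φ i y| ≤
      S.prob i x * |φ i x - φ i y| + C * dist x y ^ (β : ℝ) * B := by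
    refine (abs_add_le _ _).trans (add_le_add ?_ ?_)
    · rw [abs_mul, abs_of_pos (S.prob_pos i x)]
    · rw [abs_mul, ← Real.dist_eq]
      exact mul_le_mul ((hS.holderWith_prob i).dist_le x y) (hφ i y) (abs_nonneg _) (by positivity)
  calc |S.stepMean φ x - S.stepMean φ y|
      ≤ ∑ i, (S.prob i x * |φ i x - φ i y| + C * dist x y ^ (β : ℝ) * B) := by
        rw [h_split]
        exact (Finset.abs_sum_le_sum_abs _ _).trans (Finset.sum_le_sum fun i _ => h_term i)
    _ = ∑ i, S.prob i x * |φ i x - φ i y| + Fintype.card ι * C * B * dist x y ^ (β : ℝ) := by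
        rw [Finset.sum_add_distrib, Finset.sum_const, nsmul_eq_mul, Finset.card_univ]
        ring

lemma stepMean_mem_holderClass (hS : S.IsHolderContracting β C q) {φ : ι → X → ℝ}
    (hφ : ∀ i, φ i ∈ holderClass X β B K) :
    S.stepMean φ ∈ holderClass X β B (K + Fintype.card ι * C * B) := by
  simp only [mem_holderClass] at hφ ⊢
  refine ⟨S.abs_stepMean_le fun i => (hφ i).1, fun x y => ?_⟩
  calc |S.stepMean φ x - S.stepMean φ y|
      ≤ ∑ i, S.prob i x * (K * dist x y ^ (β : ℝ)) +
          Fintype.card ι * C * B * dist x y ^ (β : ℝ) := by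
        refine (hS.abs_stepMean_sub_le (fun i => (hφ i).1) x y).trans ?_
        gcongr with i
        · exact (S.prob_pos i x).le
        · exact (hφ i).2 x y
    _ = (K + Fintype.card ι * C * B : ℝ≥0) * dist x y ^ (β : ℝ) := by
        rw [← Finset.sum_mul, S.sum_prob]
        push_cast
        ring

lemma transfer_mem_holderClass (hS : S.IsHolderContracting β C q)
    (hK : q * K + Fintype.card ι * C * B ≤ K) {f : X → ℝ} (hf : f ∈ holderClass X β B K) :
    S.transfer f ∈ holderClass X β B K := by
  rw [mem_holderClass] at hf ⊢
  refine ⟨S.abs_transfer_le hf.1, fun x y => ?_⟩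
  calc |S.transfer f x - S.transfer f y|
      ≤ ∑ i, S.prob i x * (K * dist (S.map i x) (S.map i y) ^ (β : ℝ)) +
          Fintype.card ι * C * B * dist x y ^ (β : ℝ) := by
        refine (hS.abs_stepMean_sub_le (fun _ _ => hf.1 _) x y).trans ?_
        gcongr with i
        · exact (S.prob_pos i x).le
        · exact hf.2 _ _
    _ ≤ K * (q * dist x y ^ (β : ℝ)) + Fintype.card ι * C * B * dist x y ^ (β : ℝ) := by
        simp only [mul_left_comm _ (K : ℝ), ← Finset.mul_sum]
        gcongr
        exact hS.sum_dist_rpow_le x y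
    _ = (q * K + Fintype.card ι * C * B : ℝ≥0) * dist x y ^ (β : ℝ) := by
        push_cast
        ring
    _ ≤ K * dist x y ^ (β : ℝ) := by gcongr

lemma transferAverage_mem_holderClass (hS : S.IsHolderContracting β C q)
    (hK : q * K + Fintype.card ι * C * B ≤ K) {f : X → ℝ} (hf : f ∈ holderClass X β B K) (n : ℕ) :
    S.transferAverage n f ∈ holderClass X β B K := by
  have h_iterate (j : ℕ) : S.transfer^[j] f ∈ holderClass X β B K :=
    Set.MapsTo.iterate (fun _ => hS.transfer_mem_holderClass hK) j hf
  rcases eq_or_ne n 0 with rfl | hn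
  · rw [transferAverage, birkhoffAverage_zero, mem_holderClass]
    refine ⟨fun x => by simp, fun x y => ?_⟩
    simpa using by positivity
  · rw [transferAverage, birkhoffAverage, birkhoffSum, Finset.smul_sum]
    exact convex_holderClass.sum_mem (fun _ _ => by positivity) (by simp [hn])
      fun j _ => h_iterate j

lemma exists_dist_rpow_map_le (hS : S.IsHolderContracting β C q) (x y : X) :
    ∃ i, dist (S.map i x) (S.map i y) ^ (β : ℝ) ≤ q * dist x y ^ (β : ℝ) := by
  have h_nonempty : (Finset.univ : Finset ι).Nonempty :=
    Finset.nonempty_of_sum_ne_zero (f := fun i => S.prob i x) (by simp [S.sum_prob])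
  have h_sum : ∑ i, S.prob i x * dist (S.map i x) (S.map i y) ^ (β : ℝ) ≤
      ∑ i, S.prob i x * (q * dist x y ^ (β : ℝ)) := by
    rw [← Finset.sum_mul, S.sum_prob, one_mul]
    exact hS.sum_dist_rpow_le x y
  obtain ⟨i, -, hi⟩ := Finset.exists_le_of_sum_le h_nonempty h_sum
  exact ⟨i, le_of_mul_le_mul_left hi (S.prob_pos i x)⟩

-- Follow, at each step, a map that contracts `dist ^ β`.
lemma eq_of_forall_map_eq (hS : S.IsHolderContracting β C q) {s : Set X}
    (hs : ∀ i, ∀ x ∈ s, S.map i x ∈ s) {f : X → ℝ} (hf : HolderWith K β f)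
    (h_map : ∀ i, ∀ x ∈ s, f (S.map i x) = f x) {x y : X} (hx : x ∈ s) (hy : y ∈ s) :
    f x = f y := by
  have h_bound (n : ℕ) : ∀ x ∈ s, ∀ y ∈ s,
      dist (f x) (f y) ≤ K * ((q : ℝ) ^ n * dist x y ^ (β : ℝ)) := by
    induction n with
    | zero => exact fun x _ y _ => by simpa using hf.dist_le x y
    | succ n ih =>
      intro x hx y hy
      obtain ⟨i, hi⟩ := hS.exists_dist_rpow_map_le x y
      rw [← h_map i x hx, ← h_map i y hy]
      refine (ih _ (hs i x hx) _ (hs i y hy)).trans ?_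
      rw [pow_succ, mul_assoc]
      gcongr
  have h_lim : Tendsto (fun n : ℕ => K * ((q : ℝ) ^ n * dist x y ^ (β : ℝ))) atTop
      (nhds (K * (0 * dist x y ^ (β : ℝ)))) :=
    ((tendsto_pow_atTop_nhds_zero_of_lt_one q.coe_nonneg
      (NNReal.coe_lt_one.2 hS.rate_lt_one)).mul_const _).const_mul _
  rw [zero_mul, mul_zero] at h_lim
  exact dist_le_zero.1 (ge_of_tendsto' h_lim fun n => h_bound n x hx y hy)

end IsHolderContracting

end HolderContracting

section MeanErgodic

variable {ι X : Type*} [Fintype ι] [PseudoMetricSpace X] [SecondCountableTopology X]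
  [MeasurableSpace X] [BorelSpace X] {S : IFS ι X} {ν : Measure X} [IsProbabilityMeasure ν]
  {β C q B K : ℝ≥0} {f : X → ℝ}

omit [SecondCountableTopology X] in
lemma integrable_of_mem_holderClass (hβ : 0 < β) (hf : f ∈ holderClass X β B K) :
    Integrable f ν :=
  .of_bound (hf.2.continuous hβ).aestronglyMeasurable B (ae_of_all _ hf.1)

namespace IsHolderContracting

lemma eq_of_transfer_eq (hS : S.IsHolderContracting β C q) (hν : S.IsInvariant ν)
    (hf : f ∈ holderClass X β B K) (h_fixed : S.transfer f = f) {x y : X}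
    (hx : x ∈ ν.support) (hy : y ∈ ν.support) : f x = f y := by
  have h_cont := hf.2.continuous hS.exponent_pos
  have h_sq : Integrable (f ^ 2) ν := by
    refine .of_bound (h_cont.pow 2).aestronglyMeasurable ((B : ℝ) ^ 2) (ae_of_all _ fun x => ?_)
    rw [Pi.pow_apply, norm_pow]
    exact pow_le_pow_left₀ (norm_nonneg _) (hf.1 x) 2
  exact hS.eq_of_forall_map_eq (fun i _ => hν.map_mem_support i) hf.2
    (fun i _ => hν.apply_map_eq_of_transfer_eq h_cont h_sq h_fixed i) hx hy

-- Every pointwise cluster point of the averages is a fixed point of the transfer operator.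
lemma tendsto_transferAverage_sub (hS : S.IsHolderContracting β C q) (hν : S.IsInvariant ν)
    (hK : q * K + Fintype.card ι * C * B ≤ K) (hf : f ∈ holderClass X β B K) {x y : X}
    (hx : x ∈ ν.support) (hy : y ∈ ν.support) :
    Tendsto (fun n => S.transferAverage n f x - S.transferAverage n f y) atTop (nhds 0) := by
  rw [tendsto_iff_ultrafilter]
  intro 𝒰 h𝒰
  obtain ⟨g, hg, h_lim⟩ := isCompact_holderClass.ultrafilter_le_nhds'
    (𝒰.map fun n => S.transferAverage n f)
    (mem_map.2 <| univ_mem' fun n => hS.transferAverage_mem_holderClass hK hf n)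
  have h_apply (x : X) : Tendsto (fun n => S.transferAverage n f x) 𝒰 (nhds (g x)) :=
    ((continuous_apply x).tendsto g).comp h_lim
  have h_fixed : S.transfer g = g := by
    ext x
    have h_transfer : Tendsto (fun n => S.transfer (S.transferAverage n f) x) 𝒰
        (nhds (S.transfer g x)) :=
      tendsto_finsetSum _ fun i _ => (h_apply (S.map i x)).const_mul _
    exact sub_eq_zero.1 <| tendsto_nhds_unique (h_transfer.sub (h_apply x))
      ((S.tendsto_transfer_transferAverage_sub hf.1 x).mono_left h𝒰)
  have h_sub := (h_apply x).sub (h_apply y)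
  rwa [hS.eq_of_transfer_eq hν hg h_fixed hx hy, sub_self] at h_sub

lemma tendsto_transferAverage (hS : S.IsHolderContracting β C q) (hν : S.IsInvariant ν)
    (hK : q * K + Fintype.card ι * C * B ≤ K) (hf : f ∈ holderClass X β B K) {x : X}
    (hx : x ∈ ν.support) :
    Tendsto (fun n => S.transferAverage n f x) atTop (nhds (∫ y, f y ∂ν)) := by
  have h_mem := hS.transferAverage_mem_holderClass hK hf
  have h_int (n : ℕ) : Integrable (S.transferAverage n f) ν :=
    integrable_of_mem_holderClass hS.exponent_pos (h_mem n)
  have h_sub : Tendsto (fun n => ∫ y, (S.transferAverage n f x - S.transferAverage n f y) ∂ν)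
      atTop (nhds (∫ _, (0 : ℝ) ∂ν)) := by
    refine tendsto_integral_of_dominated_convergence (fun _ => B + B)
      (fun n => ((integrable_const _).sub (h_int n)).aestronglyMeasurable) (integrable_const _)
      (fun n => ae_of_all _ fun y => ?_) ?_
    · exact (norm_sub_le _ _).trans (add_le_add ((h_mem n).1 x) ((h_mem n).1 y))
    · filter_upwards [Measure.support_mem_ae (μ := ν)] with y hy
      exact hS.tendsto_transferAverage_sub hν hK hf hx hy
  have h_add := h_sub.add_const (∫ y, f y ∂ν)
  rw [integral_zero, zero_add] at h_add
  refine h_add.congr' ?_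
  filter_upwards [eventually_ne_atTop 0] with n hn
  rw [integral_sub (integrable_const _) (h_int n),
    hν.integral_transferAverage (integrable_of_mem_holderClass hS.exponent_pos hf) hn]
  simp

theorem exists_lintegral_transferAverage_sub_le (hS : S.IsHolderContracting β C q)
    (hν : S.IsInvariant ν) (hf : f ∈ holderClass X β B K) {δ : ℝ≥0∞} (hδ : 0 < δ) :
    ∃ n ≠ 0, Continuous (S.transferAverage n f) ∧
      ∫⁻ x, ENNReal.ofReal |S.transferAverage n f x - ∫ y, f y ∂ν| ∂ν ≤ δ := by
  obtain ⟨L, hKL, hL⟩ : ∃ L, K ≤ L ∧ q * L + Fintype.card ι * C * B ≤ L := by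
    refine ⟨max K (Fintype.card ι * C * B / (1 - q)), le_max_left _ _, ?_⟩
    set L := max K (Fintype.card ι * C * B / (1 - q))
    have h_rate : Fintype.card ι * C * B ≤ L * (1 - q) :=
      (div_le_iff₀ (tsub_pos_of_lt hS.rate_lt_one)).1 (le_max_right _ _)
    calc q * L + Fintype.card ι * C * B ≤ q * L + L * (1 - q) := by gcongr
      _ = L := by
        rw [mul_comm q, ← mul_add, add_tsub_cancel_of_le hS.rate_lt_one.le, mul_one]
  have hf_L : f ∈ holderClass X β B L := ⟨hf.1, hf.2.mono hKL⟩
  have h_mem := hS.transferAverage_mem_holderClass hL hf_L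
  have h_cont (n : ℕ) := (h_mem n).2.continuous hS.exponent_pos
  have h_lim : Tendsto (fun n => ∫⁻ x, ENNReal.ofReal |S.transferAverage n f x - ∫ y, f y ∂ν| ∂ν)
      atTop (nhds (∫⁻ _, 0 ∂ν)) := by
    refine tendsto_lintegral_of_dominated_convergence
      (fun _ => ENNReal.ofReal (B + |∫ y, f y ∂ν|))
      (fun n => ((h_cont n).sub continuous_const).abs.measurable.ennreal_ofReal)
      (fun n => ae_of_all _ fun x => ENNReal.ofReal_le_ofReal ?_) (by simp) ?_
    · exact (abs_sub _ _).trans (add_le_add ((h_mem n).1 x) le_rfl)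
    · filter_upwards [Measure.support_mem_ae (μ := ν)] with x hx
      have h_abs := ((hS.tendsto_transferAverage hν hL hf_L hx).sub_const (∫ y, f y ∂ν)).abs
      rw [sub_self, abs_zero] at h_abs
      simpa using ENNReal.tendsto_ofReal h_abs
  rw [lintegral_zero] at h_lim
  obtain ⟨n, hn_lt, hn⟩ := ((h_lim.eventually_lt_const hδ).and (eventually_ne_atTop 0)).exists
  exact ⟨n, hn, h_cont n, hn_lt.le⟩

end IsHolderContracting

end MeanErgodic

end IFS

/-! ### A law of large numbers for suffixes -/

namespace IFS

section LongSuffix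

variable {ι X : Type*} [Fintype ι] [TopologicalSpace X] (S : IFS ι X)

/-- Along the orbit of `x` that follows `w`, the last `n` letters or some longer suffix `v` of `w`
satisfy `P y v`, where `y` is the point from which `v` is read. -/
def HasLongSuffix (P : X → List ι → Prop) (n : ℕ) (x : X) (w : List ι) : Prop :=
  ∃ u v, w = u ++ v ∧ n ≤ v.length ∧ P (S.wordMap u x) v

variable {S} {P Q : X → List ι → Prop}

lemma HasLongSuffix.mono {m n : ℕ} (hmn : m ≤ n)
    (hPQ : ∀ x v, m ≤ v.length → P x v → Q x v) {x : X} {w : List ι}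
    (hw : S.HasLongSuffix P n x w) : S.HasLongSuffix Q m x w := by
  obtain ⟨u, v, rfl, hv, hP⟩ := hw
  exact ⟨u, v, rfl, hmn.trans hv, hPQ _ v (hmn.trans hv) hP⟩

lemma hasLongSuffix_or {n : ℕ} {x : X} {w : List ι} :
    S.HasLongSuffix (fun y v => P y v ∨ Q y v) n x w ↔
      S.HasLongSuffix P n x w ∨ S.HasLongSuffix Q n x w := by
  simp only [HasLongSuffix, ← exists_or, ← and_or_left]

lemma measurableSet_hasLongSuffix [MeasurableSpace X] [BorelSpace X]
    (hP : ∀ v, MeasurableSet {x | P x v}) (n : ℕ) (w : List ι) :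
    MeasurableSet {x | S.HasLongSuffix P n x w} := by
  simp only [HasLongSuffix, Set.ofPred_exists]
  refine .iUnion fun u => .iUnion fun v => ?_
  by_cases h_split : w = u ++ v ∧ n ≤ v.length
  · simpa [h_split] using (S.continuous_wordMap u).measurable (hP v)
  · simp [← and_assoc, h_split]

variable (S) in
lemma law_add_apply (m n : ℕ) (E : Set (List ι)) (x : X) :
    S.law (m + n) x E = ∫⁻ u, S.law n (S.wordMap u x) {v | u ++ v ∈ E} ∂S.law m x := by
  simp only [← lintegral_indicator_one (MeasurableSet.of_discrete (α := List ι)),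
    lintegral_law_append]
  rfl

lemma law_exists_suffix_le {n : ℕ} {a : ℝ≥0∞} (hP : ∀ x, S.law n x {v | P x v} ≤ a) (N : ℕ)
    (x : X) :
    S.law N x {w | ∃ u v, w = u ++ v ∧ v.length = n ∧ P (S.wordMap u x) v} ≤ a := by
  rcases le_or_gt n N with hn | hn
  · obtain ⟨m, rfl⟩ := Nat.exists_eq_add_of_le' hn
    calc S.law (m + n) x {w | ∃ u v, w = u ++ v ∧ v.length = n ∧ P (S.wordMap u x) v}
        = ∫⁻ u, S.law n (S.wordMap u x) {v' | ∃ u' v, u ++ v' = u' ++ v ∧ v.length = n ∧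
            P (S.wordMap u' x) v} ∂S.law m x := S.law_add_apply m n _ x
      _ ≤ ∫⁻ _, a ∂S.law m x := by
        refine lintegral_mono fun u => (measure_mono_ae ?_).trans (hP (S.wordMap u x))
        filter_upwards [S.ae_length_eq n (S.wordMap u x)] with v' hv' h_split
        obtain ⟨u', v, h_eq, hv, h⟩ := h_split
        obtain ⟨rfl, rfl⟩ := List.append_inj' h_eq (hv'.trans hv.symm)
        exact h
      _ = a := by simp
  · have h_null : S.law N x
        {w | ∃ u v, w = u ++ v ∧ v.length = n ∧ P (S.wordMap u x) v} = 0 := by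
      refine measure_mono_null ?_ (S.ae_length_eq N x)
      rintro w ⟨u, v, rfl, rfl, -⟩ (h_length : (u ++ v).length = N)
      rw [List.length_append] at h_length
      lia
    simp [h_null]

lemma law_hasLongSuffix_le {a : ℕ → ℝ≥0∞} (hP : ∀ n x, S.law n x {v | P x v} ≤ a n) (n N : ℕ)
    (x : X) : S.law N x {w | S.HasLongSuffix P n x w} ≤ ∑' m, a (m + n) :=
  calc S.law N x {w | S.HasLongSuffix P n x w}
      ≤ S.law N x (⋃ m, {w | ∃ u v, w = u ++ v ∧ v.length = m + n ∧ P (S.wordMap u x) v}) := by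
        refine measure_mono ?_
        rintro w ⟨u, v, rfl, hv, h⟩
        exact Set.mem_iUnion.2 ⟨v.length - n, u, v, rfl, (Nat.sub_add_cancel hv).symm, h⟩
    _ ≤ ∑' m, a (m + n) := (measure_iUnion_le _).trans <|
        ENNReal.tsum_le_tsum fun m => law_exists_suffix_le (hP (m + n)) N x

lemma exists_law_hasLongSuffix_le {A θ : ℝ} (hθ : 0 < θ)
    (hP : ∀ (n : ℕ) x, S.law n x {v | P x v} ≤ ENNReal.ofReal (A * Real.exp (-(θ * n))))
    {δ : ℝ≥0∞} (hδ : 0 < δ) : ∃ n, ∀ N x, S.law N x {w | S.HasLongSuffix P n x w} ≤ δ := by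
  have h_summable : Summable fun n : ℕ => A * Real.exp (-(θ * n)) := by
    simpa only [mul_neg, mul_comm] using
      (Real.summable_exp_nat_mul_iff.2 (neg_lt_zero.2 hθ)).mul_left A
  have h_tail := ENNReal.tendsto_sum_nat_add _ h_summable.tsum_ofReal_ne_top
  obtain ⟨n, hn⟩ := (h_tail.eventually_le_const hδ).exists
  exact ⟨n, fun N x => (law_hasLongSuffix_le hP n N x).trans hn⟩

end LongSuffix

section LargeNumbers

variable {ι X : Type*} [Fintype ι] [TopologicalSpace X] (S : IFS ι X)

/-- The average of `φ` along the orbit of `x` that follows `w` is not within `ε` of `c`. -/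
def Deviates (φ : ι → X → ℝ) (c ε : ℝ) (x : X) (w : List ι) : Prop :=
  w.length * ε < |S.wordSum φ w x - w.length * c|

lemma measurableSet_deviates [MeasurableSpace X] [BorelSpace X] {φ : ι → X → ℝ}
    (hφ : ∀ i, Measurable (φ i)) (c ε : ℝ) (w : List ι) :
    MeasurableSet {x | S.Deviates φ c ε x w} :=
  measurableSet_lt measurable_const ((S.measurable_wordSum hφ w).sub_const _).abs

lemma transfer_birkhoffSum (n : ℕ) (f : X → ℝ) :
    S.transfer (birkhoffSum S.transfer id n f) =
      birkhoffSum S.transfer id n f + (S.transfer^[n] f - f) := by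
  rw [map_birkhoffSum, ← sub_eq_iff_eq_add']
  convert! birkhoffSum_apply_sub_birkhoffSum S.transfer id n f using 2
  simp only [birkhoffSum, Function.comp_apply, id, ← Function.iterate_succ_apply,
    Function.iterate_succ_apply']

lemma exists_eq_transferAverage_add_sub_transfer {f : X → ℝ} {B : ℝ} (hf : ∀ x, |f x| ≤ B)
    {n : ℕ} (hn : n ≠ 0) :
    ∃ u : X → ℝ, (∀ x, |u x| ≤ n * B) ∧ f = S.transferAverage n f + u - S.transfer u := by
  refine ⟨(n : ℝ)⁻¹ • ∑ m ∈ Finset.range n, birkhoffSum S.transfer id m f, fun x => ?_, ?_⟩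
  · have hB : 0 ≤ B := (abs_nonneg _).trans (hf x)
    have h_sum {m : ℕ} (hm : m ∈ Finset.range n) : |birkhoffSum S.transfer id m f x| ≤ n * B := by
      rw [birkhoffSum, Finset.sum_apply]
      calc |∑ j ∈ Finset.range m, (S.transfer^[j] f) x|
          ≤ ∑ _j ∈ Finset.range m, B := (Finset.abs_sum_le_sum_abs _ _).trans <|
            Finset.sum_le_sum fun j _ => S.abs_iterate_transfer_le hf j x
        _ ≤ n * B := by
          rw [Finset.sum_const, Finset.card_range, nsmul_eq_mul]
          gcongr
          exact (Finset.mem_range.1 hm).le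
    rw [Pi.smul_apply, Finset.sum_apply, smul_eq_mul, abs_mul, abs_of_nonneg (by positivity),
      inv_mul_le_iff₀ (by positivity)]
    calc |∑ m ∈ Finset.range n, birkhoffSum S.transfer id m f x|
        ≤ ∑ _m ∈ Finset.range n, n * B :=
          (Finset.abs_sum_le_sum_abs _ _).trans (Finset.sum_le_sum fun _ => h_sum)
      _ = n * (n * B) := by rw [Finset.sum_const, Finset.card_range, nsmul_eq_mul]
  · have h_average : S.transferAverage n f = (n : ℝ)⁻¹ • ∑ m ∈ Finset.range n, S.transfer^[m] f :=
      rfl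
    simp only [map_smul, map_sum, transfer_birkhoffSum, Finset.sum_add_distrib,
      Finset.sum_sub_distrib, h_average, smul_add, smul_sub, Finset.sum_const, Finset.card_range,
      ← Nat.cast_smul_eq_nsmul ℝ, inv_smul_smul₀ (Nat.cast_ne_zero.2 hn : (n : ℝ) ≠ 0)]
    abel

/-- **Gordin's martingale approximation**: `φ` is a martingale difference plus a Cesàro average
of its conditional mean, up to a coboundary. -/
lemma exists_eq_martingale_add_coboundary {φ : ι → X → ℝ} {B : ℝ} (hφ : ∀ i x, |φ i x| ≤ B)
    {n : ℕ} (hn : n ≠ 0) :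
    ∃ (D : ι → X → ℝ) (u : X → ℝ) (U : ℝ), (∀ i x, |D i x| ≤ U) ∧ S.stepMean D = 0 ∧
      (∀ x, |u x| ≤ U) ∧
      ∀ i x, φ i x = D i x + S.transferAverage n (S.stepMean φ) x + u x - u (S.map i x) := by
  have hψ := S.abs_stepMean_le hφ
  obtain ⟨u, hu, h_eq⟩ := S.exists_eq_transferAverage_add_sub_transfer hψ hn
  have h_coboundary (x : X) := congrFun h_eq x
  simp only [Pi.add_apply, Pi.sub_apply] at h_coboundary
  refine ⟨fun i x => φ i x - S.transferAverage n (S.stepMean φ) x - u x + u (S.map i x), u,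
    2 * B + 2 * (n * B), fun i x => ?_, ?_, fun x => ?_, fun i x => by ring⟩
  · have hφ_abs := abs_le.1 (hφ i x)
    have hψ_abs := abs_le.1 (hψ x)
    have hu_abs := abs_le.1 (hu (S.map i x))
    have hPu_abs := abs_le.1 (S.abs_transfer_le hu x)
    rw [abs_le]
    constructor <;> linarith [h_coboundary x]
  · ext x
    have h_coboundary_x := h_coboundary x
    simp only [stepMean, transfer_apply] at h_coboundary_x
    simp only [stepMean, mul_sub, mul_add, Finset.sum_sub_distrib, Finset.sum_add_distrib,
      ← Finset.sum_mul, S.sum_prob, one_mul, Pi.zero_apply]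
    linarith
  · have hψ_abs := (abs_nonneg _).trans (hψ x)
    have hu_abs := (abs_nonneg _).trans (hu x)
    exact (hu x).trans (by linarith)

lemma wordSum_eq_add_coboundary {φ D : ι → X → ℝ} {a u : X → ℝ}
    (h : ∀ i x, φ i x = D i x + a x + u x - u (S.map i x)) (w : List ι) (x : X) :
    S.wordSum φ w x =
      S.wordSum D w x + S.wordSum (fun _ => a) w x + u x - u (S.wordMap w x) := by
  induction w generalizing x with
  | nil => simp
  | cons i w ih =>
    simp only [wordSum_cons, wordMap_cons, ih, h]
    ring

lemma abs_wordSum_sub_le (f : X → ℝ) (c : ℝ) (w : List ι) (x : X) :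
    ENNReal.ofReal |S.wordSum (fun _ => f) w x - w.length * c| ≤
      S.wordSum (fun _ x => ENNReal.ofReal |f x - c|) w x := by
  induction w generalizing x with
  | nil => simp
  | cons i w ih =>
    rw [wordSum_cons, wordSum_cons, List.length_cons]
    calc ENNReal.ofReal |f x + S.wordSum (fun _ => f) w (S.map i x) - (w.length + 1 : ℕ) * c|
        = ENNReal.ofReal |(f x - c) + (S.wordSum (fun _ => f) w (S.map i x) - w.length * c)| := by
          push_cast
          ring_nf
      _ ≤ _ := (ENNReal.ofReal_le_ofReal (abs_add_le _ _)).trans <|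
          ENNReal.ofReal_add_le.trans (add_le_add le_rfl (ih _))

variable {S} in
lemma Deviates.of_add_coboundary {φ D : ι → X → ℝ} {a u : X → ℝ} {c ε U : ℝ}
    (h : ∀ i x, φ i x = D i x + a x + u x - u (S.map i x)) (hu : ∀ x, |u x| ≤ U) {x : X}
    {w : List ι} (hw : 2 * U ≤ w.length * (ε / 3)) (h_dev : S.Deviates φ c ε x w) :
    S.Deviates D 0 (ε / 3) x w ∨ S.Deviates (fun _ => a) c (ε / 3) x w := by
  have h_word := S.wordSum_eq_add_coboundary h w x
  have hu_start := abs_le.1 (hu x)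
  have hu_end := abs_le.1 (hu (S.wordMap w x))
  by_contra! h_not
  simp only [Deviates, mul_zero, sub_zero, not_lt, abs_le] at h_not
  refine lt_irrefl _ (h_dev.trans_le (abs_le.2 ⟨?_, ?_⟩)) <;> linarith

lemma exists_law_hasLongSuffix_deviates_zero_le {φ : ι → X → ℝ} {B : ℝ}
    (hB : ∀ i x, |φ i x| ≤ B) (h_mean : S.stepMean φ = 0) {ε : ℝ} (hε : 0 < ε) {δ : ℝ≥0∞}
    (hδ : 0 < δ) :
    ∃ n, ∀ N x, S.law N x {w | S.HasLongSuffix (S.Deviates φ 0 ε) n x w} ≤ δ := by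
  obtain ⟨θ₁, hθ₁, h₁⟩ := S.exists_law_le_exp_neg hB (fun x => (congrFun h_mean x).le) hε
  obtain ⟨θ₂, hθ₂, h₂⟩ := S.exists_law_le_exp_neg (φ := fun i x => -1 * φ i x)
    (fun i x => by simpa using hB i x)
    (fun x => by simpa [stepMean] using (congrFun h_mean x).ge) hε
  refine exists_law_hasLongSuffix_le (A := 2) (lt_min hθ₁ hθ₂) (fun n x => ?_) hδ
  calc S.law n x {w | S.Deviates φ 0 ε x w}
      ≤ S.law n x ({w | n * ε ≤ S.wordSum φ w x} ∪
          {w | n * ε ≤ S.wordSum (fun i x => -1 * φ i x) w x}) := by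
        refine measure_mono_ae ?_
        filter_upwards [S.ae_length_eq n x] with w hw (h_dev : S.Deviates φ 0 ε x w)
        rw [Deviates, hw, mul_zero, sub_zero, lt_abs] at h_dev
        refine h_dev.imp le_of_lt fun h => ?_
        rw [Set.mem_ofPred_eq, wordSum_const_mul, neg_one_mul]
        exact h.le
    _ ≤ ENNReal.ofReal (Real.exp (-(θ₁ * n))) + ENNReal.ofReal (Real.exp (-(θ₂ * n))) :=
        (measure_union_le _ _).trans (add_le_add (h₁ n x) (h₂ n x))
    _ ≤ ENNReal.ofReal (2 * Real.exp (-(min θ₁ θ₂ * n))) := by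
        rw [← ENNReal.ofReal_add (by positivity) (by positivity), two_mul]
        gcongr
        exacts [min_le_left _ _, min_le_right _ _]

lemma IsInvariant.mul_lintegral_law_hasLongSuffix_deviates_le [MeasurableSpace X] [BorelSpace X]
    {S : IFS ι X} {ν : Measure X} (hν : S.IsInvariant ν) {f : X → ℝ} (hf : Measurable f)
    (c ε : ℝ) (n N : ℕ) :
    ENNReal.ofReal ε * ∫⁻ x, S.law N x
      {w | S.HasLongSuffix (S.Deviates (fun _ => f) c ε) n x w} ∂ν ≤
      ∫⁻ x, ENNReal.ofReal |f x - c| ∂ν := by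
  rcases le_or_gt ε 0 with hε | hε
  · simp [ENNReal.ofReal_of_nonpos hε]
  refine le_trans ?_ (hν.mul_lintegral_law_exists_lt_wordSum_le (c := ENNReal.ofReal ε)
    (hf.sub_const c).abs.ennreal_ofReal N)
  gcongr with x w
  rintro ⟨u, v, rfl, -, h_dev : _ < _⟩
  refine ⟨u, v, rfl, lt_of_lt_of_le ?_ (S.abs_wordSum_sub_le f c v _)⟩
  rw [← ENNReal.ofReal_natCast, ← ENNReal.ofReal_mul (Nat.cast_nonneg _)]
  exact (ENNReal.ofReal_lt_ofReal_iff (h_dev.trans_le' (by positivity))).2 h_dev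

end LargeNumbers

section Ergodic

variable {ι X : Type*} [Fintype ι] [PseudoMetricSpace X] [SecondCountableTopology X]
  [MeasurableSpace X] [BorelSpace X] {S : IFS ι X} {ν : Measure X} [IsProbabilityMeasure ν]
  {β C q B K : ℝ≥0}

theorem IsHolderContracting.exists_lintegral_law_hasLongSuffix_deviates_le
    (hS : S.IsHolderContracting β C q) (hν : S.IsInvariant ν) {φ : ι → X → ℝ}
    (hφ : ∀ i, φ i ∈ holderClass X β B K) {ε : ℝ} (hε : 0 < ε) {δ : ℝ≥0∞} (hδ : 0 < δ) :
    ∃ n, ∀ N, ∫⁻ x, S.law N x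
      {w | S.HasLongSuffix (S.Deviates φ (∫ y, S.stepMean φ y ∂ν) ε) n x w} ∂ν ≤ δ := by
  set c := ∫ y, S.stepMean φ y ∂ν
  have hψ := hS.stepMean_mem_holderClass hφ
  have hε' : 0 < ENNReal.ofReal (ε / 3) := by positivity
  obtain ⟨m, hm, ha_cont, ha_mean⟩ := hS.exists_lintegral_transferAverage_sub_le hν hψ
    (ENNReal.mul_pos hε'.ne' (ENNReal.half_pos hδ.ne').ne')
  obtain ⟨D, u, U, hD, hD_mean, hu, h_eq⟩ :=
    S.exists_eq_martingale_add_coboundary (fun i => (hφ i).1) hm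
  set a := S.transferAverage m (S.stepMean φ)
  obtain ⟨n₁, h₁⟩ := S.exists_law_hasLongSuffix_deviates_zero_le hD hD_mean
    (div_pos hε three_pos) (ENNReal.half_pos hδ.ne')
  obtain ⟨n₂, hn₂⟩ := exists_nat_ge (2 * U / (ε / 3))
  rw [div_le_iff₀ (by positivity)] at hn₂
  refine ⟨max n₁ n₂, fun N => ?_⟩
  have h_mean : ∫⁻ x, S.law N x
      {w | S.HasLongSuffix (S.Deviates (fun _ => a) c (ε / 3)) n₂ x w} ∂ν ≤ δ / 2 := by
    refine (ENNReal.mul_le_mul_iff_right hε'.ne' ofReal_ne_top).1 ?_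
    exact (hν.mul_lintegral_law_hasLongSuffix_deviates_le ha_cont.measurable c (ε / 3) n₂ N).trans
      ha_mean
  calc ∫⁻ x, S.law N x {w | S.HasLongSuffix (S.Deviates φ c ε) (max n₁ n₂) x w} ∂ν
      ≤ ∫⁻ x, (δ / 2 + S.law N x
          {w | S.HasLongSuffix (S.Deviates (fun _ => a) c (ε / 3)) n₂ x w}) ∂ν := by
        refine lintegral_mono fun x => (measure_mono ?_).trans <|
          (measure_union_le _ _).trans (add_le_add (h₁ N x) le_rfl)
        rintro w ⟨u, v, rfl, hv, h_dev⟩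
        rw [max_le_iff] at hv
        have h_length : 2 * U ≤ v.length * (ε / 3) := hn₂.trans (by gcongr; exact hv.2)
        exact (h_dev.of_add_coboundary h_eq hu h_length).imp (fun h => ⟨u, v, rfl, hv.1, h⟩)
          fun h => ⟨u, v, rfl, hv.2, h⟩
    _ = δ / 2 + ∫⁻ x, S.law N x
          {w | S.HasLongSuffix (S.Deviates (fun _ => a) c (ε / 3)) n₂ x w} ∂ν := by
        rw [lintegral_add_left measurable_const, lintegral_const, measure_univ, mul_one]
    _ ≤ δ := (add_le_add le_rfl h_mean).trans (ENNReal.add_halves δ).le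

end Ergodic

end IFS

/-! ### Bounded distortion -/

namespace IFS

section Distortion

variable {ι X : Type*} [Fintype ι] [PseudoMetricSpace X]

/-- `g i` behaves like the logarithm of the derivative of `map i`: it is bounded and Hölder, and
`map i` expands small balls around `x` by at most about `exp (g i x)`. On average the `β`-th powers
of these factors contract. -/
structure HasLogDeriv (S : IFS ι X) (g : ι → X → ℝ) (β C q B : ℝ≥0) : Prop
    extends S.IsHolderContracting β C q where
  mem_holderClass : ∀ i, g i ∈ holderClass X β B C
  logProb_mem_holderClass : ∀ i, S.logProb i ∈ holderClass X β B C
  sum_exp_le : ∀ x, ∑ i, S.prob i x * Real.exp (β * g i x) ≤ q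
  dist_map_lt : ∀ i x z (r : ℝ), dist z x < r →
    dist (S.map i z) (S.map i x) < Real.exp (g i x + C * r ^ (β : ℝ)) * r

/-- The sum over the prefixes `u` of a word of `exp (β * wordSum g u x)`. Up to a factor of order
`ρ ^ β` it bounds the distortion along the word of the ball of radius `ρ` around `x`. -/
def distortionSum (S : IFS ι X) (g : ι → X → ℝ) (β : ℝ) : List ι → X → ℝ
  | [], _ => 1
  | i :: w, x => 1 + Real.exp (β * g i x) * distortionSum S g β w (S.map i x)

variable {S : IFS ι X} {g : ι → X → ℝ} {β C q B : ℝ≥0}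

lemma one_le_distortionSum (β : ℝ) (w : List ι) (x : X) : 1 ≤ S.distortionSum g β w x := by
  induction w generalizing x with
  | nil => exact le_rfl
  | cons i w ih =>
    have := zero_le_one.trans (ih (S.map i x))
    rw [distortionSum]
    linarith [mul_nonneg (Real.exp_nonneg (β * g i x)) this]

/-- `J i` behaves like the logarithm of the Jacobian of `map i` with respect to `μ`: the volumes of
sets near `x` are multiplied by at least about `exp (J i x)`. -/
structure HasLogJacobian [MeasurableSpace X] (S : IFS ι X) (μ : Measure X) (J : ι → X → ℝ)
    (β C : ℝ≥0) : Prop where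
  measurableEmbedding_map : ∀ i, MeasurableEmbedding (S.map i)
  mul_measure_le : ∀ i x (r : ℝ) A, MeasurableSet A → A ⊆ ball x r →
    ENNReal.ofReal (Real.exp (J i x - C * r ^ (β : ℝ))) * μ A ≤ μ (S.map i '' A)

/-- In a ball of radius `exp σ * ρ` around `x`, the distortion along the word stays below
`exp (1 - σ)`. -/
def HasDistortionBudget (S : IFS ι X) (g : ι → X → ℝ) (β C : ℝ≥0) (w : List ι) (x : X) (ρ σ : ℝ) :
    Prop :=
  0 < ρ ∧ 0 ≤ σ ∧ C * Real.exp β * ρ ^ (β : ℝ) * S.distortionSum g β w x + σ ≤ 1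

namespace HasDistortionBudget

variable {w : List ι} {i : ι} {x z : X} {ρ σ : ℝ}

lemma of_distortionSum_le {L : ℝ} (hρ : 0 < ρ) (hL : S.distortionSum g β w x ≤ L)
    (h_le : C * Real.exp β * L * ρ ^ (β : ℝ) ≤ 1) : S.HasDistortionBudget g β C w x ρ 0 := by
  refine ⟨hρ, le_rfl, (add_zero _).trans_le (le_trans ?_ h_le)⟩
  rw [mul_right_comm (C * Real.exp β : ℝ)]
  gcongr

lemma le_one (h : S.HasDistortionBudget g β C w x ρ σ) : σ ≤ 1 := by
  obtain ⟨hρ, -, h_le⟩ := h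
  have h_sum := one_le_distortionSum (S := S) (g := g) β w x
  have : 0 ≤ C * Real.exp β * ρ ^ (β : ℝ) * S.distortionSum g β w x := by positivity
  linarith

lemma tail (h : S.HasDistortionBudget g β C (i :: w) x ρ σ) :
    S.HasDistortionBudget g β C w (S.map i x) (Real.exp (g i x) * ρ)
      (σ + C * Real.exp β * ρ ^ (β : ℝ)) := by
  obtain ⟨hρ, hσ, h_le⟩ := h
  refine ⟨by positivity, by positivity, le_of_eq_of_le ?_ h_le⟩
  rw [distortionSum, Real.mul_rpow (by positivity) hρ.le, ← Real.exp_mul, mul_comm (g i x)]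
  ring

lemma mul_rpow_le (h : S.HasDistortionBudget g β C w x ρ σ) :
    C * (Real.exp σ * ρ) ^ (β : ℝ) ≤ C * Real.exp β * ρ ^ (β : ℝ) := by
  rw [Real.mul_rpow (by positivity) h.1.le, ← Real.exp_mul, mul_assoc]
  have := mul_le_of_le_one_left β.coe_nonneg h.le_one
  have := Real.rpow_nonneg h.1.le (β : ℝ)
  gcongr

lemma dist_map_lt (h : S.HasDistortionBudget g β C (i :: w) x ρ σ) (hS : S.HasLogDeriv g β C q B)
    (hz : dist z x < Real.exp σ * ρ) :
    dist (S.map i z) (S.map i x) <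
      Real.exp (σ + C * Real.exp β * ρ ^ (β : ℝ)) * (Real.exp (g i x) * ρ) := by
  have hρ := h.1
  calc dist (S.map i z) (S.map i x)
      < Real.exp (g i x + C * (Real.exp σ * ρ) ^ (β : ℝ)) * (Real.exp σ * ρ) :=
        hS.dist_map_lt i x z _ hz
    _ ≤ Real.exp (g i x + C * Real.exp β * ρ ^ (β : ℝ)) * (Real.exp σ * ρ) := by
        gcongr ?_ * _
        exact Real.exp_le_exp.2 (by linarith [h.mul_rpow_le])
    _ = _ := by rw [Real.exp_add, Real.exp_add]; ring

lemma dist_wordMap_lt (h : S.HasDistortionBudget g β C w x ρ σ) (hS : S.HasLogDeriv g β C q B)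
    (hz : dist z x < Real.exp σ * ρ) :
    dist (S.wordMap w z) (S.wordMap w x) < Real.exp 1 * (Real.exp (S.wordSum g w x) * ρ) := by
  induction w generalizing x z ρ σ with
  | nil =>
    have hρ := h.1
    rw [wordSum_nil, Real.exp_zero, one_mul]
    exact hz.trans_le (by gcongr; exact h.le_one)
  | cons i w ih =>
    refine (ih h.tail (h.dist_map_lt hS hz)).trans_eq ?_
    rw [wordSum_cons, Real.exp_add]
    ring

lemma abs_wordSum_sub_le (h : S.HasDistortionBudget g β C w x ρ σ) (hS : S.HasLogDeriv g β C q B)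
    {φ : ι → X → ℝ} (hφ : ∀ i, HolderWith C β (φ i)) (hz : dist z x < Real.exp σ * ρ) :
    |S.wordSum φ w z - S.wordSum φ w x| ≤ 1 - σ := by
  induction w generalizing x z ρ σ with
  | nil => simpa using h.le_one
  | cons i w ih =>
    have h_tail := ih h.tail (h.dist_map_lt hS hz)
    have h_head : |φ i z - φ i x| ≤ C * Real.exp β * ρ ^ (β : ℝ) :=
      calc |φ i z - φ i x| ≤ C * dist z x ^ (β : ℝ) := (hφ i).dist_le z x
        _ ≤ C * (Real.exp σ * ρ) ^ (β : ℝ) := by gcongr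
        _ ≤ _ := h.mul_rpow_le
    rw [wordSum_cons, wordSum_cons, add_sub_add_comm]
    linarith [abs_add_le (φ i z - φ i x)
      (S.wordSum φ w (S.map i z) - S.wordSum φ w (S.map i x))]

lemma mul_measure_le_measure_image [MeasurableSpace X] {μ : Measure X} {D : ℝ≥0}
    (h : S.HasDistortionBudget g β C w x ρ σ) (hS : S.HasLogDeriv g β C q B)
    (hμ : S.HasLogJacobian μ (fun i x => D * g i x) β (D * C)) {A : Set X} (hA : MeasurableSet A)
    (hAx : A ⊆ ball x (Real.exp σ * ρ)) :
    ENNReal.ofReal (Real.exp (D * (S.wordSum g w x - (1 - σ)))) * μ A ≤ μ (S.wordMap w '' A) := by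
  induction w generalizing x ρ σ A with
  | nil =>
    rw [wordSum_nil, show S.wordMap [] = id from rfl, Set.image_id]
    exact mul_le_of_le_one_left zero_le <| ENNReal.ofReal_le_one.2 <| Real.exp_le_one_iff.2 <|
      mul_nonpos_of_nonneg_of_nonpos D.coe_nonneg (by linarith only [h.le_one])
  | cons i w ih =>
    have h_image : S.wordMap (i :: w) '' A = S.wordMap w '' (S.map i '' A) :=
      Set.image_comp (S.wordMap w) (S.map i) A
    have h_tail := ih h.tail ((hμ.measurableEmbedding_map i).measurableSet_image.2 hA)
      (Set.image_subset_iff.2 fun z hz => h.dist_map_lt hS (hAx hz))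
    have h_head := hμ.mul_measure_le i x _ A hA hAx
    rw [h_image]
    refine le_trans ?_ ((mul_le_mul_right h_head _).trans h_tail)
    rw [← mul_assoc, ← ENNReal.ofReal_mul (by positivity), ← Real.exp_add]
    gcongr
    rw [wordSum_cons]
    have := mul_le_mul_of_nonneg_left h.mul_rpow_le D.coe_nonneg
    rw [NNReal.coe_mul]
    linarith

end HasDistortionBudget

lemma lintegral_distortionSum_le {β q : ℝ} (hq : q < 1)
    (hS : ∀ x, ∑ i, S.prob i x * Real.exp (β * g i x) ≤ q) (n : ℕ) (x : X) :
    ∫⁻ w, ENNReal.ofReal (S.distortionSum g β w x) ∂S.law n x ≤ ENNReal.ofReal (1 - q)⁻¹ := by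
  have hq' : 0 < 1 - q := sub_pos.2 hq
  induction n generalizing x with
  | zero =>
    rw [lintegral_law_zero]
    refine ENNReal.ofReal_le_ofReal ((one_le_inv₀ hq').2 (sub_le_self _ ?_))
    exact (Finset.sum_nonneg fun i _ => mul_nonneg (S.prob_pos i x).le (Real.exp_nonneg _)).trans
      (hS x)
  | succ n ih =>
    have h_letter (i : ι) : ∫⁻ w, ENNReal.ofReal (S.distortionSum g β (i :: w) x)
        ∂S.law n (S.map i x) ≤ ENNReal.ofReal (1 + Real.exp (β * g i x) * (1 - q)⁻¹) := by
      have h_nonneg (w : List ι) : 0 ≤ S.distortionSum g β w (S.map i x) :=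
        zero_le_one.trans (one_le_distortionSum _ _ _)
      simp only [distortionSum, ENNReal.ofReal_add zero_le_one
        (mul_nonneg (Real.exp_nonneg _) (h_nonneg _)), ENNReal.ofReal_mul (Real.exp_nonneg _)]
      rw [lintegral_add_left measurable_const, lintegral_const, measure_univ, mul_one,
        lintegral_const_mul _ .of_discrete, ENNReal.ofReal_add zero_le_one (by positivity),
        ENNReal.ofReal_mul (Real.exp_nonneg _)]
      gcongr
      exact ih _
    calc ∫⁻ w, ENNReal.ofReal (S.distortionSum g β w x) ∂S.law (n + 1) x
        ≤ ∑ i, ENNReal.ofReal (S.prob i x) *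
            ENNReal.ofReal (1 + Real.exp (β * g i x) * (1 - q)⁻¹) := by
          rw [lintegral_law_succ]
          gcongr with i
          exact h_letter i
      _ = ENNReal.ofReal (1 + (∑ i, S.prob i x * Real.exp (β * g i x)) * (1 - q)⁻¹) := by
          simp only [← ENNReal.ofReal_mul (S.prob_pos _ x).le]
          rw [← ENNReal.ofReal_sum_of_nonneg fun i _ =>
            mul_nonneg (S.prob_pos i x).le (by positivity)]
          simp only [mul_add, mul_one, Finset.sum_add_distrib, S.sum_prob, Finset.sum_mul,
            mul_assoc]
      _ ≤ ENNReal.ofReal (1 + q * (1 - q)⁻¹) := by gcongr; exact hS x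
      _ = ENNReal.ofReal (1 - q)⁻¹ := by congr 1; field_simp; ring

lemma HasLogDeriv.law_lt_distortionSum_le (hS : S.HasLogDeriv g β C q B) {L : ℝ} (hL : 0 < L)
    (n : ℕ) (x : X) :
    S.law n x {w | L < S.distortionSum g β w x} ≤ ENNReal.ofReal ((1 - (q : ℝ))⁻¹ / L) := by
  rw [ENNReal.ofReal_div_of_pos hL]
  calc S.law n x {w | L < S.distortionSum g β w x}
      ≤ S.law n x {w | ENNReal.ofReal L ≤ ENNReal.ofReal (S.distortionSum g β w x)} :=
        measure_mono fun w (hw : L < _) => ENNReal.ofReal_le_ofReal hw.le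
    _ ≤ (∫⁻ w, ENNReal.ofReal (S.distortionSum g β w x) ∂S.law n x) / ENNReal.ofReal L :=
        meas_ge_le_lintegral_div .of_discrete (by simpa) ofReal_ne_top
    _ ≤ _ := by gcongr; exact lintegral_distortionSum_le hS.rate_lt_one hS.sum_exp_le n x

end Distortion

end IFS

/-! ### The upper bound -/

section Covers

variable {X : Type*} [MetricSpace X] [MeasurableSpace X] [BorelSpace X]

lemma hausdorffMeasure_le_of_forall_finset_cover {t : ℝ} (ht : 0 ≤ t) {A : Set X} {c : ℝ≥0∞}
    (h : ∀ δ > 0, ∃ (T : Finset X) (r : ℝ), 0 < r ∧ r ≤ δ ∧ A ⊆ ⋃ z ∈ T, ball z r ∧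
      T.card * ENNReal.ofReal (2 * r) ^ t ≤ c) :
    μH[t] A ≤ c := by
  choose T r hr_pos hr h_cover h_card using fun m : ℕ => h ((1 / 2 : ℝ) ^ m) (by positivity)
  have h_lim : Tendsto (fun m => ENNReal.ofReal (2 * r m)) atTop (nhds 0) := by
    have h_zero : Tendsto r atTop (nhds 0) := squeeze_zero (fun m => (hr_pos m).le) hr
      (tendsto_pow_atTop_nhds_zero_of_lt_one (by norm_num) (by norm_num))
    simpa using ENNReal.tendsto_ofReal (h_zero.const_mul 2)
  have h_ediam (m : ℕ) (z : X) : ediam (ball z (r m)) ≤ ENNReal.ofReal (2 * r m) := by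
    rw [← Metric.eball_ofReal, ENNReal.ofReal_mul zero_le_two, ENNReal.ofReal_ofNat]
    exact Metric.ediam_eball_le
  refine (Measure.hausdorffMeasure_le_liminf_sum t A _ h_lim (ι := fun m => T m)
    (fun m z => ball (z : X) (r m)) (.of_forall fun m _ => h_ediam m _)
    (.of_forall fun m => ?_)).trans (liminf_le_of_frequently_le' (.of_forall fun m => ?_))
  · simpa only [Set.iUnion_subtype] using h_cover m
  · calc ∑ z : T m, ediam (ball (z : X) (r m)) ^ t
        ≤ ∑ _z : T m, ENNReal.ofReal (2 * r m) ^ t :=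
          Finset.sum_le_sum fun _ _ => ENNReal.rpow_le_rpow (h_ediam m _) ht
      _ = (T m).card * ENNReal.ofReal (2 * r m) ^ t := by simp
      _ ≤ c := h_card m

lemma exists_finset_measure_compl_iUnion_ball_le [SecondCountableTopology X] (μ : Measure X)
    [IsFiniteMeasure μ] {r : ℝ} (hr : 0 < r) {δ : ℝ≥0∞} (hδ : 0 < δ) :
    ∃ T : Finset X, μ (⋃ z ∈ T, ball z r)ᶜ ≤ δ := by
  classical
  cases isEmpty_or_nonempty X
  · exact ⟨∅, by simp [Set.eq_empty_of_isEmpty]⟩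
  let u := TopologicalSpace.denseSeq X
  have h_empty : ⋂ n, (ball (u n) r)ᶜ = ∅ := by
    rw [← Set.compl_iUnion, Set.compl_empty_iff, Set.eq_univ_iff_forall]
    intro x
    obtain ⟨n, hn⟩ := (TopologicalSpace.denseRange_denseSeq X).exists_dist_lt x hr
    exact Set.mem_iUnion.2 ⟨n, hn⟩
  obtain ⟨m, hm⟩ := exists_measure_iInter_lt (μ := μ)
    (fun n => (isOpen_ball (x := u n) (ε := r)).measurableSet.compl.nullMeasurableSet) hδ
    ⟨0, measure_ne_top _ _⟩ h_empty
  refine ⟨(Finset.range (m + 1)).image u, le_of_eq_of_le (congrArg μ ?_) hm.le⟩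
  simp [Set.compl_iUnion]

lemma upperDimH_le_of_forall_finset_cover {μ : Measure X} {t : ℝ≥0}
    (h : ∀ δ > 0, ∃ (T : Finset X) (r : ℝ), 0 < r ∧ r ≤ δ ∧
      μ (⋃ z ∈ T, ball z r)ᶜ ≤ ENNReal.ofReal δ ∧
      T.card * ENNReal.ofReal (2 * r) ^ (t : ℝ) ≤ 1) :
    upperDimH μ ≤ t := by
  choose T r hr_pos hr h_meas h_card using fun m : ℕ => h ((1 / 2 : ℝ) ^ m) (by positivity)
  set V : ℕ → Set X := fun m => ⋃ z ∈ T m, ball z (r m)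
  have h_ae : μ {x | ∀ᶠ m in atTop, x ∈ V m}ᶜ = 0 := by
    have h_sum : ∑' m, μ (V m)ᶜ ≠ ∞ := ne_top_of_le_ne_top
      summable_geometric_two.tsum_ofReal_ne_top (ENNReal.tsum_le_tsum h_meas)
    simpa only [Set.notMem_compl_iff] using mem_ae_iff.1 (ae_eventually_notMem h_sum)
  refine (iInf₂_le {x | ∀ᶠ m in atTop, x ∈ V m} h_ae).trans ?_
  have h_iUnion : {x | ∀ᶠ m in atTop, x ∈ V m} = ⋃ j : ℕ, ⋂ m ≥ j, V m := by
    ext x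
    simp [eventually_atTop]
  rw [h_iUnion, dimH_iUnion]
  refine iSup_le fun j => dimH_le_of_hausdorffMeasure_ne_top (ne_top_of_le_ne_top one_ne_top <|
    hausdorffMeasure_le_of_forall_finset_cover t.coe_nonneg fun δ hδ => ?_)
  obtain ⟨m, hm⟩ := exists_pow_lt_of_lt_one hδ one_half_lt_one
  refine ⟨T (max j m), r (max j m), hr_pos _, ?_, Set.biInter_subset_of_mem (le_max_left j m),
    h_card _⟩
  exact (hr _).trans ((pow_le_pow_of_le_one (by norm_num) (by norm_num) (le_max_right j m)).trans
    hm.le)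

end Covers

lemma exists_pos_mul_rpow_le_one {c β : ℝ} (hc : 0 ≤ c) (hβ : β ≠ 0) :
    ∃ ρ > 0, c * ρ ^ β ≤ 1 := by
  refine ⟨(c + 1) ^ (-β⁻¹), by positivity, ?_⟩
  rw [← Real.rpow_mul (by positivity), neg_mul, inv_mul_cancel₀ hβ, Real.rpow_neg_one,
    ← div_eq_mul_inv, div_le_one (by positivity)]
  linarith

namespace IFS

section Exponents

variable {ι X : Type*} [Fintype ι] [TopologicalSpace X] [MeasurableSpace X]

/-- The Lyapunov exponent of the chain with stationary distribution `ν`, where `g` is the logarithm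
of the derivative. It is positive for a contracting system. -/
def lyapunovExponent (S : IFS ι X) (ν : Measure X) (g : ι → X → ℝ) : ℝ :=
  -∫ x, S.stepMean g x ∂ν

/-- The entropy per step of the choices of the chain with stationary distribution `ν`. -/
def entropy (S : IFS ι X) (ν : Measure X) : ℝ := -∫ x, S.stepMean S.logProb x ∂ν

/-- The contraction or the probability of the word `w`, read from `x`, is not within
`exp (w.length * ε)` of its expected size. -/
def Atypical (S : IFS ι X) (ν : Measure X) (g : ι → X → ℝ) (ε : ℝ) (x : X) (w : List ι) : Prop :=
  S.Deviates g (∫ y, S.stepMean g y ∂ν) ε x w ∨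
    S.Deviates S.logProb (∫ y, S.stepMean S.logProb y ∂ν) ε x w

variable {S : IFS ι X} {g : ι → X → ℝ} {ν : Measure X} {ε : ℝ}

lemma entropy_nonneg : 0 ≤ S.entropy ν :=
  neg_nonneg.2 <| integral_nonpos fun x => Finset.sum_nonpos fun i _ =>
    mul_nonpos_of_nonneg_of_nonpos (S.prob_pos i x).le (S.logProb_nonpos i x)

lemma wordSum_mem_Icc_of_not_atypical {x : X} {w : List ι} (h : ¬S.Atypical ν g ε x w) :
    S.wordSum g w x ∈ Set.Icc (-(w.length * (S.lyapunovExponent ν g + ε)))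
      (-(w.length * (S.lyapunovExponent ν g - ε))) ∧
    S.wordSum S.logProb w x ∈ Set.Icc (-(w.length * (S.entropy ν + ε)))
      (-(w.length * (S.entropy ν - ε))) := by
  simp only [Atypical, Deviates, not_or, not_lt, abs_le] at h
  simp only [lyapunovExponent, entropy, Set.mem_Icc]
  exact ⟨⟨by linarith [h.1.1], by linarith [h.1.2]⟩, by linarith [h.2.1], by linarith [h.2.2]⟩

end Exponents

section Typical

variable {ι X : Type*} [Fintype ι] [PseudoMetricSpace X] [SecondCountableTopology X]
  [MeasurableSpace X] [BorelSpace X] {S : IFS ι X} {g : ι → X → ℝ} {ν : Measure X}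
  [IsProbabilityMeasure ν] {β C q B : ℝ≥0}

omit [SecondCountableTopology X] in
lemma HasLogDeriv.lyapunovExponent_pos (hS : S.HasLogDeriv g β C q B) :
    0 < S.lyapunovExponent ν g := by
  have hβ : 0 < (β : ℝ) := hS.exponent_pos
  have h_pointwise (x : X) : S.stepMean g x ≤ (q - 1) / β := by
    rw [le_div_iff₀ hβ, le_sub_iff_add_le]
    calc S.stepMean g x * β + 1 = ∑ i, S.prob i x * (β * g i x + 1) := by
          simp only [mul_add, mul_one, Finset.sum_add_distrib, S.sum_prob, stepMean,
            Finset.sum_mul]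
          congr! 2 with i
          ring
      _ ≤ ∑ i, S.prob i x * Real.exp (β * g i x) := by
          gcongr with i
          · exact (S.prob_pos i x).le
          · exact Real.add_one_le_exp _
      _ ≤ q := hS.sum_exp_le x
  have h_int : ∫ x, S.stepMean g x ∂ν ≤ (q - 1) / β := by
    simpa using integral_mono (μ := ν) (integrable_of_mem_holderClass hS.exponent_pos
      (hS.stepMean_mem_holderClass hS.mem_holderClass)) (integrable_const _) h_pointwise
  have h_neg : ((q : ℝ) - 1) / β < 0 :=
    div_neg_of_neg_of_pos (sub_neg.2 (by exact_mod_cast hS.rate_lt_one)) hβ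
  exact neg_pos.2 (h_int.trans_lt h_neg)

theorem HasLogDeriv.exists_lintegral_law_hasLongSuffix_atypical_le
    (hS : S.HasLogDeriv g β C q B) (hν : S.IsInvariant ν) {ε : ℝ} (hε : 0 < ε) {δ : ℝ≥0∞}
    (hδ : 0 < δ) :
    ∃ n, ∀ N, ∫⁻ x, S.law N x {w | S.HasLongSuffix (S.Atypical ν g ε) n x w} ∂ν ≤ δ := by
  obtain ⟨m, hm⟩ := hS.exists_lintegral_law_hasLongSuffix_deviates_le hν hS.mem_holderClass hε
    (ENNReal.half_pos hδ.ne')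
  obtain ⟨n, hn⟩ := hS.exists_lintegral_law_hasLongSuffix_deviates_le hν
    hS.logProb_mem_holderClass hε (ENNReal.half_pos hδ.ne')
  refine ⟨max m n, fun N =>
    (le_trans ?_ (add_le_add (hm N) (hn N))).trans (ENNReal.add_halves δ).le⟩
  rw [← lintegral_add_left (S.measurable_law_apply N fun w => measurableSet_hasLongSuffix
    (fun v => S.measurableSet_deviates
      (fun i => ((hS.mem_holderClass i).2.continuous hS.exponent_pos).measurable) _ ε v) m w)]
  refine lintegral_mono fun x => le_trans (measure_mono fun w hw => ?_) (measure_union_le _ _)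
  exact (hasLongSuffix_or.1 hw).imp (.mono (le_max_left m n) fun _ _ _ => id)
    (.mono (le_max_right m n) fun _ _ _ => id)

end Typical

section UpperBound

variable {ι X : Type*} [Fintype ι]

lemma card_le_exp [TopologicalSpace X] (S : IFS ι X) {W : Finset (List ι)} {n : ℕ}
    (hW : ∀ w ∈ W, w.length = n) {x : X} {b : ℝ} (hb : ∀ w ∈ W, -b ≤ S.wordSum S.logProb w x) :
    (W.card : ℝ) ≤ Real.exp b := by
  have h_le_one : ∑ _w ∈ W, ENNReal.ofReal (Real.exp (-b)) ≤ 1 :=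
    calc ∑ _w ∈ W, ENNReal.ofReal (Real.exp (-b))
        ≤ ∑ w ∈ W, ENNReal.ofReal (Real.exp (S.wordSum S.logProb w x)) :=
          Finset.sum_le_sum fun w hw =>
            ENNReal.ofReal_le_ofReal (Real.exp_le_exp.2 (hb w hw))
      _ = S.law n x W := (S.law_coe_finset hW x).symm
      _ ≤ 1 := MeasureTheory.prob_le_one
  rw [Finset.sum_const, nsmul_eq_mul, ← ENNReal.ofReal_natCast,
    ← ENNReal.ofReal_mul (Nat.cast_nonneg _), ENNReal.ofReal_le_one, Real.exp_neg,
    ← div_eq_mul_inv, div_le_one (Real.exp_pos b)] at h_le_one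
  exact h_le_one

lemma IsInvariant.lintegral_law_wordMap_mem [TopologicalSpace X] [MeasurableSpace X]
    [BorelSpace X] {S : IFS ι X} {ν : Measure X} (hν : S.IsInvariant ν) (n : ℕ) {A : Set X}
    (hA : MeasurableSet A) : ∫⁻ x, S.law n x {w | S.wordMap w x ∈ A} ∂ν = ν A := by
  rw [← lintegral_indicator_one hA, ← hν.lintegral_lintegral_law n (measurable_one.indicator hA)]
  simp only [← lintegral_indicator_one (MeasurableSet.of_discrete (α := List ι))]
  rfl

lemma IsInvariant.measure_le [TopologicalSpace X] [MeasurableSpace X] [BorelSpace X]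
    {S : IFS ι X} {ν : Measure X} [IsProbabilityMeasure ν] (hν : S.IsInvariant ν) {K A : Set X}
    (hK : MeasurableSet K) (hA : MeasurableSet A) {n : ℕ} {P : X → List ι → Prop} {a : ℝ≥0∞}
    (h : ∀ x ∈ K, S.law n x {w | S.wordMap w x ∈ A ∧ ¬P x w} ≤ a) :
    ν A ≤ ν Kᶜ + (a + ∫⁻ x, S.law n x {w | P x w} ∂ν) := by
  have h_const : a = ∫⁻ _, a ∂ν := by simp
  rw [← hν.lintegral_law_wordMap_mem n hA, ← lintegral_indicator_one hK.compl, h_const,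
    ← lintegral_add_left measurable_const, ← lintegral_add_left (measurable_one.indicator hK.compl)]
  refine lintegral_mono fun x => ?_
  by_cases hx : x ∈ K
  · refine le_add_left ((measure_mono fun w hw => ?_).trans
      ((measure_union_le _ _).trans (add_le_add (h x hx) le_rfl)))
    exact (em (P x w)).symm.imp (⟨hw, ·⟩) id
  · rw [Set.indicator_of_mem hx]
    exact le_add_right MeasureTheory.prob_le_one

variable [MetricSpace X] {S : IFS ι X} {g : ι → X → ℝ} {β C q B : ℝ≥0}

/-- Each word that is probable from some point of the ball is probable from its centre `l`, by
bounded distortion, so there are at most `exp (n * b + 1)` of them. -/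
lemma HasLogDeriv.exists_finset_card_le_dist_wordMap_lt (hS : S.HasLogDeriv g β C q B) (l : X)
    (n : ℕ) (ρ a b : ℝ) :
    ∃ F : Finset X, (F.card : ℝ) ≤ Real.exp (n * b + 1) ∧
      ∀ x ∈ ball l (ρ / 2), ∀ w : List ι, w.length = n →
        S.HasDistortionBudget g β C w x ρ 0 → S.wordSum g w x ≤ -(n * a) →
        -(n * b) ≤ S.wordSum S.logProb w x →
        ∃ z ∈ F, dist (S.wordMap w x) z < Real.exp 1 * (Real.exp (-(n * a)) * ρ) := by
  classical
  let IsGood (w : List ι) (x : X) : Prop := x ∈ ball l (ρ / 2) ∧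
    S.HasDistortionBudget g β C w x ρ 0 ∧ S.wordSum g w x ≤ -(n * a) ∧
    -(n * b) ≤ S.wordSum S.logProb w x
  let W : Finset (List ι) := (List.finite_length_eq ι n).toFinset.filter fun w => ∃ x, IsGood w x
  have h_exists (w : List ι) : ∃ x, w ∈ W → IsGood w x := by
    by_cases hw : w ∈ W
    · exact (Finset.mem_filter.1 hw).2.imp fun _ hx _ => hx
    · exact ⟨l, fun h => absurd h hw⟩
  choose y hy using h_exists
  refine ⟨W.image fun w => S.wordMap w (y w), ?_, fun x hx w hw h_budget hg hp => ?_⟩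
  · refine (Nat.cast_le.2 Finset.card_image_le).trans
      (S.card_le_exp (n := n) (x := l) (fun w hw => ?_) fun w hw => ?_)
    · simpa using (Finset.mem_filter.1 hw).1
    · obtain ⟨h_ball, h_budget, -, hp⟩ := hy w hw
      have h_dist : dist l (y w) < Real.exp 0 * ρ := by
        rw [Real.exp_zero, one_mul, dist_comm]
        exact (mem_ball.1 h_ball).trans (half_lt_self h_budget.1)
      have := h_budget.abs_wordSum_sub_le hS (fun i => (hS.logProb_mem_holderClass i).2) h_dist
      linarith [(abs_le.1 this).1]
  · have hwW : w ∈ W :=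
      Finset.mem_filter.2 ⟨by simpa using hw, x, hx, h_budget, hg, hp⟩
    obtain ⟨h_ball, h_budget', hg', -⟩ := hy w hwW
    refine ⟨_, Finset.mem_image_of_mem _ hwW, ?_⟩
    have h_dist : dist x (y w) < Real.exp 0 * ρ := by
      rw [Real.exp_zero, one_mul]
      linarith [dist_triangle_right x (y w) l, mem_ball.1 hx, mem_ball.1 h_ball]
    refine (h_budget'.dist_wordMap_lt hS h_dist).trans_le ?_
    have := h_budget.1
    gcongr

variable [SecondCountableTopology X] [MeasurableSpace X] [BorelSpace X] {ν : Measure X}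
  [IsProbabilityMeasure ν]

lemma HasLogDeriv.exists_finset_cover (hS : S.HasLogDeriv g β C q B) (hν : S.IsInvariant ν)
    {ε δ : ℝ} (hε : 0 < ε) (hδ : 0 < δ) :
    ∃ c ρ : ℝ, 0 < ρ ∧ ∀ᶠ n : ℕ in atTop, ∃ F : Finset X,
      F.card ≤ c * Real.exp (n * (S.entropy ν + ε)) ∧
      ν (⋃ z ∈ F, ball z (Real.exp (-(n * (S.lyapunovExponent ν g - ε))) * ρ))ᶜ ≤
        ENNReal.ofReal δ := by
  classical
  have hδ' : 0 < δ / 3 := by positivity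
  have h_rate : 0 < 1 - (q : ℝ) := sub_pos.2 (by exact_mod_cast hS.rate_lt_one)
  obtain ⟨L, hL, h_tail⟩ : ∃ L > 0, (1 - (q : ℝ))⁻¹ / L = δ / 3 :=
    ⟨(1 - (q : ℝ))⁻¹ / (δ / 3), by positivity, by field_simp⟩
  obtain ⟨ρ, hρ, hρ_le⟩ := exists_pos_mul_rpow_le_one (c := C * Real.exp β * L) (β := (β : ℝ))
    (by positivity) (by exact_mod_cast hS.exponent_pos.ne')
  obtain ⟨n₀, hn₀⟩ := hS.exists_lintegral_law_hasLongSuffix_atypical_le hν hε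
    (ENNReal.ofReal_pos.2 hδ')
  obtain ⟨T, hT⟩ := exists_finset_measure_compl_iUnion_ball_le ν (half_pos hρ)
    (ENNReal.ofReal_pos.2 hδ')
  refine ⟨T.card * Real.exp 1, Real.exp 1 * ρ, by positivity, ?_⟩
  filter_upwards [eventually_ge_atTop n₀] with n hn
  choose F h_card hF using fun l => hS.exists_finset_card_le_dist_wordMap_lt l n ρ
    (S.lyapunovExponent ν g - ε) (S.entropy ν + ε)
  refine ⟨T.biUnion F, ?_, ?_⟩
  · calc ((T.biUnion F).card : ℝ) ≤ ∑ l ∈ T, ((F l).card : ℝ) := mod_cast Finset.card_biUnion_le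
      _ ≤ ∑ l ∈ T, Real.exp (n * (S.entropy ν + ε) + 1) := Finset.sum_le_sum fun l _ => h_card l
      _ = _ := by rw [Finset.sum_const, nsmul_eq_mul, Real.exp_add]; ring
  · refine (hν.measure_le (P := fun x w => S.HasLongSuffix (S.Atypical ν g ε) n₀ x w)
      (Finset.measurableSet_biUnion T fun _ _ => measurableSet_ball)
      (Finset.measurableSet_biUnion _ fun _ _ => measurableSet_ball).compl
      (a := ENNReal.ofReal (δ / 3)) fun x hx => ?_).trans
      ((add_le_add hT (add_le_add le_rfl (hn₀ n))).trans_eq ?_)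
    · refine le_trans (measure_mono_ae ?_)
        ((hS.law_lt_distortionSum_le hL n x).trans_eq (by rw [h_tail]))
      obtain ⟨l, hl, hxl⟩ := Set.mem_iUnion₂.1 hx
      filter_upwards [S.ae_length_eq n x]
      rintro w rfl ⟨hwV, h_typical⟩
      by_contra hw
      obtain ⟨⟨-, hg⟩, hp, -⟩ := wordSum_mem_Icc_of_not_atypical fun h =>
        h_typical ⟨[], w, rfl, hn, h⟩
      obtain ⟨z, hz, h_dist⟩ := hF l x hxl w rfl (.of_distortionSum_le hρ (not_lt.1 hw) hρ_le) hg hp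
      refine hwV (Set.mem_iUnion₂.2 ⟨z, Finset.mem_biUnion.2 ⟨l, hl, hz⟩, h_dist.trans_eq ?_⟩)
      ring
    · rw [← ENNReal.ofReal_add, ← ENNReal.ofReal_add] <;> first | positivity | (congr; ring)

lemma HasLogDeriv.upperDimH_le (hS : S.HasLogDeriv g β C q B) (hν : S.IsInvariant ν) {t : ℝ≥0}
    (ht : S.entropy ν < t * S.lyapunovExponent ν g) : upperDimH ν ≤ t := by
  refine upperDimH_le_of_forall_finset_cover fun δ hδ => ?_
  set ε := (t * S.lyapunovExponent ν g - S.entropy ν) / (2 * (t + 1)) with hε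
  have hε_pos : 0 < ε := div_pos (sub_pos.2 ht) (by positivity)
  set a := S.lyapunovExponent ν g - ε
  have h_gap : S.entropy ν + ε < t * a := by
    have : 2 * ((t + 1) * ε) = t * S.lyapunovExponent ν g - S.entropy ν := by
      rw [hε]
      field_simp
    nlinarith
  have ha_pos : 0 < a := by
    have := entropy_nonneg (S := S) (ν := ν)
    exact pos_of_mul_pos_right (by linarith : 0 < (t : ℝ) * a) t.coe_nonneg
  obtain ⟨c, ρ, hρ, h_cover⟩ := hS.exists_finset_cover hν hε_pos hδ
  have h_exp {b : ℝ} (hb : b < 0) (c : ℝ) :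
      Tendsto (fun n : ℕ => c * Real.exp (n * b)) atTop (nhds 0) := by
    simpa using (Real.tendsto_exp_atBot.comp
      (tendsto_natCast_atTop_atTop.atTop_mul_const_of_neg hb)).const_mul c
  obtain ⟨n, ⟨F, h_card, hF⟩, h_radius, h_sum⟩ := (h_cover.and
    (((h_exp (neg_neg_iff_pos.2 ha_pos) ρ).eventually_le_const hδ).and
      ((h_exp (sub_neg.2 h_gap) (c * (2 * ρ) ^ (t : ℝ))).eventually_le_const zero_lt_one))).exists
  refine ⟨F, Real.exp (-(n * a)) * ρ, by positivity, ?_, hF, ?_⟩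
  · rwa [mul_neg, mul_comm] at h_radius
  · rw [ENNReal.ofReal_rpow_of_nonneg (by positivity) t.coe_nonneg, ← ENNReal.ofReal_natCast,
      ← ENNReal.ofReal_mul (Nat.cast_nonneg _), ENNReal.ofReal_le_one]
    refine le_trans ?_ h_sum
    calc (F.card : ℝ) * (2 * (Real.exp (-(n * a)) * ρ)) ^ (t : ℝ)
        ≤ c * Real.exp (n * (S.entropy ν + ε)) * (2 * (Real.exp (-(n * a)) * ρ)) ^ (t : ℝ) := by
          gcongr
      _ = c * (2 * ρ) ^ (t : ℝ) * Real.exp (n * (S.entropy ν + ε - t * a)) := by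
          rw [mul_left_comm 2, Real.mul_rpow (by positivity) (by positivity), ← Real.exp_mul,
            show (n : ℝ) * (S.entropy ν + ε - t * a) = n * (S.entropy ν + ε) + -(n * a) * t by ring,
            Real.exp_add]
          ring

end UpperBound

end IFS

/-! ### The lower bound -/

section MassDistribution

variable {X : Type*} [MetricSpace X] [MeasurableSpace X] [BorelSpace X]

lemma exists_ball_cover_of_hausdorffMeasure_eq_zero [Nonempty X] {t : ℝ} (ht : 0 < t) {A : Set X}
    (hA : μH[t] A = 0) {R : ℝ} (hR : 0 < R) {κ : ℝ≥0∞} (hκ : 0 < κ) :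
    ∃ (z : ℕ → X) (r : ℕ → ℝ), (∀ n, 0 < r n ∧ r n ≤ R) ∧ A ⊆ ⋃ n, ball (z n) (r n) ∧
      ∑' n, ENNReal.ofReal (r n) ^ t ≤ κ := by
  obtain ⟨T, hAT, hT_diam, hT_sum⟩ : ∃ T : ℕ → Set X, A ⊆ ⋃ n, T n ∧
      (∀ n, ediam (T n) ≤ ENNReal.ofReal (R / 2)) ∧ ∑' n, ediam (T n) ^ t < κ / 2 := by
    have h_inf := (le_iSup₂_of_le (ENNReal.ofReal (R / 2)) (by positivity) le_rfl).trans_lt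
      ((Measure.hausdorffMeasure_apply t A).symm.trans hA |>.trans_lt (ENNReal.half_pos hκ.ne'))
    simp only [iInf_lt_iff] at h_inf
    obtain ⟨T, hAT, hT_diam, hT_sum⟩ := h_inf
    refine ⟨T, hAT, hT_diam, (ENNReal.tsum_le_tsum fun n => ?_).trans_lt hT_sum⟩
    rcases (T n).eq_empty_or_nonempty with h | h <;> simp [h, ht]
  obtain ⟨κ', hκ', h_sum⟩ := ENNReal.exists_pos_sum_of_countable' (ENNReal.half_pos hκ.ne').ne' ℕ
  have h_radius (n : ℕ) : ∃ r : ℝ, ediam (T n) < ENNReal.ofReal r ∧ r ≤ R ∧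
      ENNReal.ofReal r ^ t ≤ ediam (T n) ^ t + κ' n := by
    have h_diam_lt : ediam (T n) < ENNReal.ofReal R :=
      (hT_diam n).trans_lt ((ENNReal.ofReal_lt_ofReal_iff hR).2 (half_lt_self hR))
    have h_lt : ediam (T n) ^ t < ediam (T n) ^ t + κ' n :=
      ENNReal.lt_add_right (ENNReal.rpow_ne_top_of_nonneg ht.le h_diam_lt.ne_top) (hκ' n).ne'
    have := nhdsGT_neBot_of_exists_gt ⟨_, h_diam_lt⟩
    have h_near := (ENNReal.continuous_rpow_const (y := t)).continuousAt.eventually_lt_const h_lt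
    obtain ⟨e, he_rpow, he⟩ := ((h_near.filter_mono nhdsWithin_le_nhds).and
      (Ioc_mem_nhdsGT h_diam_lt)).exists
    have he_top := (he.2.trans_lt ofReal_lt_top).ne
    exact ⟨e.toReal, by rw [ENNReal.ofReal_toReal he_top]; exact he.1,
      ENNReal.toReal_le_of_le_ofReal hR.le he.2,
      by rw [ENNReal.ofReal_toReal he_top]; exact he_rpow.le⟩
  choose r hr_diam hr_le hr_rpow using h_radius
  have h_center (n : ℕ) : ∃ z, T n ⊆ ball z (r n) := by
    rcases (T n).eq_empty_or_nonempty with h | ⟨z, hz⟩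
    · exact ⟨Classical.arbitrary X, h.trans_subset (Set.empty_subset _)⟩
    · exact ⟨z, fun x hx => edist_lt_ofReal.1 ((edist_le_ediam_of_mem hx hz).trans_lt (hr_diam n))⟩
  choose z hz using h_center
  refine ⟨z, r, fun n => ⟨ENNReal.ofReal_pos.1 (bot_le.trans_lt (hr_diam n)), hr_le n⟩,
    hAT.trans (Set.iUnion_mono hz), ?_⟩
  calc ∑' n, ENNReal.ofReal (r n) ^ t ≤ ∑' n, (ediam (T n) ^ t + κ' n) :=
        ENNReal.tsum_le_tsum hr_rpow
    _ = ∑' n, ediam (T n) ^ t + ∑' n, κ' n := ENNReal.tsum_add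
    _ ≤ κ := (add_le_add hT_sum.le h_sum.le).trans (ENNReal.add_halves κ).le

/-- A mass distribution principle; the error `δ` leaves room for the exceptional words. -/
lemma le_lowerDimH_of_forall_ball_family {μ : Measure X} {t : ℝ≥0} (ht : 0 < t)
    (h : ∀ δ > 0, ∃ (C : ℝ≥0) (R : ℝ), 0 < R ∧ ∀ (I : Finset ℕ) (z : ℕ → X) (r : ℕ → ℝ),
      (∀ i ∈ I, 0 < r i ∧ r i ≤ R) →
      μ (⋃ i ∈ I, ball (z i) (r i)) ≤ δ + ∑ i ∈ I, C * ENNReal.ofReal (r i) ^ (t : ℝ)) :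
    t ≤ lowerDimH μ := by
  refine le_iInf₂ fun A hA => le_dimH_of_hausdorffMeasure_ne_zero fun h_null => hA.ne' ?_
  have : Nonempty X := (nonempty_of_measure_ne_zero hA.ne').to_type
  refine nonpos_iff_eq_zero.1 (le_of_forall_gt_imp_ge_of_dense fun δ hδ => ?_)
  have hδ_half := ENNReal.half_pos hδ.ne'
  obtain ⟨C, R, hR, h_family⟩ := h (δ / 2) hδ_half
  obtain ⟨κ, hκ, hCκ⟩ := ENNReal.exists_nnreal_pos_mul_lt (a := C) coe_ne_top hδ_half.ne'
  obtain ⟨z, r, hr, hA_cover, h_sum⟩ :=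
    exists_ball_cover_of_hausdorffMeasure_eq_zero (by exact_mod_cast ht) h_null hR
      (ENNReal.coe_pos.2 hκ)
  have h_finite (I : Finset ℕ) : μ (⋃ i ∈ I, ball (z i) (r i)) ≤ δ :=
    calc μ (⋃ i ∈ I, ball (z i) (r i))
        ≤ δ / 2 + ∑ i ∈ I, C * ENNReal.ofReal (r i) ^ (t : ℝ) := h_family I z r fun i _ => hr i
      _ ≤ δ / 2 + C * κ := by
        rw [← Finset.mul_sum]
        gcongr
        exact (ENNReal.sum_le_tsum I).trans h_sum
      _ ≤ δ := by
        rw [mul_comm]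
        exact (add_le_add le_rfl hCκ.le).trans (ENNReal.add_halves δ).le
  have h_dir : Directed (· ⊆ ·) fun I : Finset ℕ => ⋃ i ∈ I, ball (z i) (r i) :=
    directed_of_isDirected_le fun I J hIJ => Set.biUnion_mono hIJ fun _ _ => le_rfl
  refine (measure_mono hA_cover).trans ?_
  rw [Set.iUnion_eq_iUnion_finset, h_dir.measure_iUnion]
  exact iSup_le h_finite

end MassDistribution

namespace IFS

section Attraction

variable {ι X : Type*} [Fintype ι]

lemma mapsTo_wordMap [TopologicalSpace X] {S : IFS ι X} {U : Set X}
    (hU : ∀ i, Set.MapsTo (S.map i) U U) (w : List ι) : Set.MapsTo (S.wordMap w) U U := by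
  induction w with
  | nil => exact Set.mapsTo_id U
  | cons i w ih => exact ih.comp (hU i)

/-- A step of the chain preserves the integrals of the truncations of `F`, although it contracts `F`
on average. -/
lemma IsInvariant.ae_eq_zero_of_sum_mul_le [TopologicalSpace X] [MeasurableSpace X] [BorelSpace X]
    {S : IFS ι X} {ν : Measure X} [IsFiniteMeasure ν] (hν : S.IsInvariant ν) {F : X → ℝ≥0∞}
    (hF : Measurable F) (hF_top : ∀ x, F x ≠ ∞) {q : ℝ≥0} (hq : q < 1)
    (h_sum : ∀ x, ∑ i, ENNReal.ofReal (S.prob i x) * F (S.map i x) ≤ q * F x) :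
    ∀ᵐ x ∂ν, F x = 0 := by
  have h_le (x : X) : q * F x ≤ F x := mul_le_of_le_one_left zero_le (mod_cast hq.le)
  have h_step (m : ℕ) (x : X) :
      ∑ i, ENNReal.ofReal (S.prob i x) * min (F (S.map i x)) m ≤ min (q * F x) m := by
    refine le_min (le_trans ?_ (h_sum x)) ?_
    · gcongr
      exact min_le_left _ _
    · calc ∑ i, ENNReal.ofReal (S.prob i x) * min (F (S.map i x)) m
          ≤ ∑ i, ENNReal.ofReal (S.prob i x) * m := by
            gcongr
            exact min_le_right _ _
        _ = m := by rw [← Finset.sum_mul, S.sum_ofReal_prob, one_mul]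
  have h_eq (m : ℕ) : (fun x => min (q * F x) m) =ᵐ[ν] fun x => min (F x) m := by
    refine ae_eq_of_ae_le_of_lintegral_le (.of_forall fun x => min_le_min_right _ (h_le x)) ?_
      (hF.min measurable_const).aemeasurable ?_
    · refine ne_top_of_le_ne_top ?_ (lintegral_mono fun x => min_le_right _ _)
      rw [lintegral_const]
      exact mul_ne_top (natCast_ne_top m) (measure_ne_top ν _)
    · rw [← hν.lintegral_sum (hF.min measurable_const)]
      exact lintegral_mono (h_step m)
  filter_upwards [ae_all_iff.2 h_eq] with x hx
  obtain ⟨m, hm⟩ := ENNReal.exists_nat_gt (hF_top x)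
  have h_fixed : q * F x = F x := by
    simpa only [min_eq_left hm.le, min_eq_left ((h_le x).trans hm.le)] using hx m
  by_contra h
  exact hq.ne (mod_cast (ENNReal.mul_eq_right h (hF_top x)).1 h_fixed)

variable [PseudoMetricSpace X] {S : IFS ι X} {β C q : ℝ≥0} {U : Set X}

lemma IsHolderContracting.sum_infDist_rpow_le (hS : S.IsHolderContracting β C q)
    (hU : U.Nonempty) (h_map : ∀ i, Set.MapsTo (S.map i) U U) (x : X) :
    ∑ i, S.prob i x * infDist (S.map i x) U ^ (β : ℝ) ≤ q * infDist x U ^ (β : ℝ) := by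
  have h_lim : Tendsto (fun r : ℝ => q * r ^ (β : ℝ))
      (nhdsWithin (infDist x U) (Set.Ioi (infDist x U))) (nhds (q * infDist x U ^ (β : ℝ))) :=
    (((Real.continuous_rpow_const β.coe_nonneg).tendsto _).const_mul _).mono_left
      nhdsWithin_le_nhds
  refine ge_of_tendsto h_lim ?_
  filter_upwards [self_mem_nhdsWithin] with r hr
  obtain ⟨y, hy, hxy⟩ := (infDist_lt_iff hU).1 hr
  calc ∑ i, S.prob i x * infDist (S.map i x) U ^ (β : ℝ)
      ≤ ∑ i, S.prob i x * dist (S.map i x) (S.map i y) ^ (β : ℝ) := by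
        gcongr with i
        · exact (S.prob_pos i x).le
        · exact infDist_nonneg
        · exact infDist_le_dist_of_mem (h_map i hy)
    _ ≤ q * dist x y ^ (β : ℝ) := hS.sum_dist_rpow_le x y
    _ ≤ q * r ^ (β : ℝ) := by gcongr

lemma IsInvariant.ae_mem_closure [MeasurableSpace X] [BorelSpace X] {ν : Measure X}
    [IsFiniteMeasure ν] (hν : S.IsInvariant ν) (hS : S.IsHolderContracting β C q)
    (hU : U.Nonempty) (h_map : ∀ i, Set.MapsTo (S.map i) U U) : ∀ᵐ x ∂ν, x ∈ closure U := by
  have h_zero : ∀ᵐ x ∂ν, ENNReal.ofReal (infDist x U ^ (β : ℝ)) = 0 := by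
    refine hν.ae_eq_zero_of_sum_mul_le (measurable_infDist.pow_const _).ennreal_ofReal
      (fun _ => ofReal_ne_top) hS.rate_lt_one fun x => ?_
    calc ∑ i, ENNReal.ofReal (S.prob i x) * ENNReal.ofReal (infDist (S.map i x) U ^ (β : ℝ))
        = ENNReal.ofReal (∑ i, S.prob i x * infDist (S.map i x) U ^ (β : ℝ)) := by
          rw [ENNReal.ofReal_sum_of_nonneg fun i _ => mul_nonneg (S.prob_pos i x).le
            (Real.rpow_nonneg infDist_nonneg _)]
          simp only [ENNReal.ofReal_mul (S.prob_pos _ x).le]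
      _ ≤ q * ENNReal.ofReal (infDist x U ^ (β : ℝ)) := by
          rw [← ENNReal.ofReal_coe_nnreal, ← ENNReal.ofReal_mul q.coe_nonneg]
          exact ENNReal.ofReal_le_ofReal (hS.sum_infDist_rpow_le hU h_map x)
  filter_upwards [h_zero] with x hx
  rw [mem_closure_iff_infDist_zero hU]
  have hβ : (β : ℝ) ≠ 0 := by exact_mod_cast hS.exponent_pos.ne'
  exact (Real.rpow_eq_zero infDist_nonneg hβ).1
    ((ENNReal.ofReal_eq_zero.1 hx).antisymm (Real.rpow_nonneg infDist_nonneg _))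

end Attraction

section Separation

variable {ι X : Type*} [Fintype ι]

lemma injective_wordMap [TopologicalSpace X] {S : IFS ι X} (h_inj : ∀ i, (S.map i).Injective)
    (w : List ι) : (S.wordMap w).Injective := by
  induction w with
  | nil => exact Function.injective_id
  | cons i w ih => exact ih.comp (h_inj i)

lemma disjoint_image_wordMap [TopologicalSpace X] {S : IFS ι X} {U : Set X}
    (h_inj : ∀ i, (S.map i).Injective) (h_map : ∀ i, Set.MapsTo (S.map i) U U)
    (h_disj : ∀ i j, i ≠ j → Disjoint (S.map i '' U) (S.map j '' U)) {v w : List ι}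
    (h_len : v.length = w.length) (h_ne : v ≠ w) :
    Disjoint (S.wordMap v '' U) (S.wordMap w '' U) := by
  have h_image (i : ι) (u : List ι) : S.wordMap (i :: u) '' U = S.wordMap u '' (S.map i '' U) :=
    Set.image_comp (S.wordMap u) (S.map i) U
  induction v generalizing w with
  | nil => exact absurd (List.length_eq_zero_iff.1 h_len.symm).symm h_ne
  | cons i v ih =>
    obtain ⟨j, w, rfl⟩ := List.exists_cons_of_length_eq_add_one h_len.symm
    rw [h_image, h_image]
    rcases eq_or_ne v w with rfl | h_tail
    · rw [Set.disjoint_image_iff (injective_wordMap h_inj v)]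
      exact h_disj i j fun hij => h_ne (by rw [hij])
    · exact (ih (Nat.succ.inj h_len) h_tail).mono (Set.image_mono (h_map i).image_subset)
        (Set.image_mono (h_map j).image_subset)

lemma HasLogJacobian.measurableSet_image_wordMap [PseudoMetricSpace X] [MeasurableSpace X]
    {S : IFS ι X} {μ : Measure X} {J : ι → X → ℝ} {β C : ℝ≥0} (hμ : S.HasLogJacobian μ J β C)
    (w : List ι) {A : Set X} (hA : MeasurableSet A) : MeasurableSet (S.wordMap w '' A) := by
  induction w generalizing A with
  | nil => exact (Set.image_id A).symm ▸ hA
  | cons i w ih =>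
    have h_image : S.wordMap (i :: w) '' A = S.wordMap w '' (S.map i '' A) :=
      Set.image_comp (S.wordMap w) (S.map i) A
    rw [h_image]
    exact ih ((hμ.measurableEmbedding_map i).measurableSet_image.2 hA)

/-- The **regular open set condition** with open set `U`, for a measure `μ` of dimension `D`: the
maps send `U` to disjoint subsets of `U`, and `U` fills a fixed proportion of each small ball that
is centred at one of its points. -/
structure IsRegularOpenSet [PseudoMetricSpace X] [MeasurableSpace X] (S : IFS ι X) (μ : Measure X)
    (U : Set X) (D M : ℝ≥0) (R₂ R₃ : ℝ) : Prop where
  nonempty : U.Nonempty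
  isOpen : IsOpen U
  mapsTo_map : ∀ i, Set.MapsTo (S.map i) U U
  disjoint_image_map : ∀ i j, i ≠ j → Disjoint (S.map i '' U) (S.map j '' U)
  radius_pos : 0 < R₂
  density_pos : 0 < R₃
  le_measure_ball_inter : ∀ x ∈ U, ∀ r, 0 < r → r < R₂ →
    ENNReal.ofReal (R₃ * r ^ (D : ℝ)) ≤ μ (ball x r ∩ U)
  measure_ball_le : ∀ z r, 0 < r → μ (ball z r) ≤ ENNReal.ofReal (M * r ^ (D : ℝ))

variable [PseudoMetricSpace X] [MeasurableSpace X] [BorelSpace X] {S : IFS ι X} {μ : Measure X}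
  {U : Set X} {g : ι → X → ℝ} {β C q B D M : ℝ≥0} {R₂ R₃ : ℝ}

omit [BorelSpace X] in
lemma IsRegularOpenSet.le_measure_ball_inter_of_mem_closure
    (hU : S.IsRegularOpenSet μ U D M R₂ R₃) {y : X} (hy : y ∈ closure U) {ρ : ℝ} (hρ : 0 < ρ)
    (hρ_lt : ρ < 2 * R₂) : ENNReal.ofReal (R₃ * (ρ / 2) ^ (D : ℝ)) ≤ μ (ball y ρ ∩ U) := by
  obtain ⟨x, hx, hyx⟩ := Metric.mem_closure_iff.1 hy _ (half_pos hρ)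
  refine (hU.le_measure_ball_inter x hx _ (half_pos hρ) (by linarith)).trans (measure_mono ?_)
  refine Set.inter_subset_inter_left U (ball_subset_ball' ?_)
  rw [dist_comm x y]
  linarith

lemma IsRegularOpenSet.le_measure_image_wordMap (hU : S.IsRegularOpenSet μ U D M R₂ R₃)
    (hS : S.HasLogDeriv g β C q B) (hμ : S.HasLogJacobian μ (fun i x => D * g i x) β (D * C))
    {w : List ι} {y : X} (hy : y ∈ closure U) {ρ : ℝ} (hρ : ρ < 2 * R₂)
    (h_budget : S.HasDistortionBudget g β C w y ρ 0) :
    ENNReal.ofReal (Real.exp (D * (S.wordSum g w y - 1)) * (R₃ * (ρ / 2) ^ (D : ℝ))) ≤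
      μ (S.wordMap w '' (ball y ρ ∩ U)) := by
  rw [ENNReal.ofReal_mul (Real.exp_nonneg _)]
  refine (mul_le_mul_right (hU.le_measure_ball_inter_of_mem_closure hy h_budget.1 hρ) _).trans ?_
  simpa using h_budget.mul_measure_le_measure_image hS hμ
    (isOpen_ball.inter hU.isOpen).measurableSet
    (Set.inter_subset_left.trans (ball_subset_ball (by simp)))

/-- A packing argument: the images of `ball y ρ ∩ U` under the words of `W` are disjoint subsets of
a single ball. -/
lemma IsRegularOpenSet.card_mul_le (hU : S.IsRegularOpenSet μ U D M R₂ R₃)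
    (hS : S.HasLogDeriv g β C q B) (hμ : S.HasLogJacobian μ (fun i x => D * g i x) β (D * C))
    {n : ℕ} {W : Finset (List ι)} {y z : X} (hy : y ∈ closure U) {r ρ a b : ℝ} (hr : 0 < r)
    (hρ_pos : 0 < ρ) (hρ : ρ < 2 * R₂)
    (hW : ∀ w ∈ W, w.length = n ∧ S.HasDistortionBudget g β C w y ρ 0 ∧
      S.wordSum g w y ∈ Set.Icc (-b) (-a) ∧ S.wordMap w y ∈ ball z r) :
    W.card * (Real.exp (D * (-b - 1)) * (R₃ * (ρ / 2) ^ (D : ℝ))) ≤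
      M * (r + Real.exp 1 * (Real.exp (-a) * ρ)) ^ (D : ℝ) := by
  have h_subset (w : List ι) (hw : w ∈ W) : S.wordMap w '' (ball y ρ ∩ U) ⊆
      ball z (r + Real.exp 1 * (Real.exp (-a) * ρ)) := by
    obtain ⟨-, h_budget, ⟨-, hg⟩, hz⟩ := hW w hw
    rintro _ ⟨x, ⟨hx, -⟩, rfl⟩
    have h_dist := h_budget.dist_wordMap_lt hS (z := x) (by simpa using hx)
    have : Real.exp 1 * (Real.exp (S.wordSum g w y) * ρ) ≤
      Real.exp 1 * (Real.exp (-a) * ρ) := by gcongr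
    rw [mem_ball] at hz ⊢
    linarith [dist_triangle (S.wordMap w x) (S.wordMap w y) z]
  have h_disj : (W : Set (List ι)).PairwiseDisjoint
      fun w => S.wordMap w '' (ball y ρ ∩ U) := fun v hv w hw h_ne =>
    (disjoint_image_wordMap (fun i => (hμ.measurableEmbedding_map i).injective) hU.mapsTo_map
      hU.disjoint_image_map ((hW v hv).1.trans (hW w hw).1.symm) h_ne).mono
      (Set.image_mono Set.inter_subset_right) (Set.image_mono Set.inter_subset_right)
  have hR₃ := hU.density_pos
  rw [← ENNReal.ofReal_le_ofReal_iff (by positivity), ENNReal.ofReal_mul (Nat.cast_nonneg _),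
    ENNReal.ofReal_natCast, ← nsmul_eq_mul, ← Finset.sum_const]
  calc ∑ _w ∈ W, ENNReal.ofReal (Real.exp (D * (-b - 1)) * (R₃ * (ρ / 2) ^ (D : ℝ)))
      ≤ ∑ w ∈ W, μ (S.wordMap w '' (ball y ρ ∩ U)) := by
        gcongr with w hw
        obtain ⟨-, h_budget, ⟨hg, -⟩, -⟩ := hW w hw
        refine le_trans ?_ (hU.le_measure_image_wordMap hS hμ hy hρ h_budget)
        gcongr
    _ = μ (⋃ w ∈ W, S.wordMap w '' (ball y ρ ∩ U)) :=
        (measure_biUnion_finset h_disj fun w _ =>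
          hμ.measurableSet_image_wordMap w (isOpen_ball.inter hU.isOpen).measurableSet).symm
    _ ≤ μ (ball z (r + Real.exp 1 * (Real.exp (-a) * ρ))) :=
        measure_mono (Set.iUnion₂_subset h_subset)
    _ ≤ _ := hU.measure_ball_le z _ (by positivity)

end Separation

end IFS

lemma lowerDimH_le_upperDimH {X : Type*} [EMetricSpace X] [MeasurableSpace X] (μ : Measure X)
    [NeZero μ] : lowerDimH μ ≤ upperDimH μ := by
  refine le_iInf₂ fun s hs => ?_
  have h_pos : 0 < μ s := pos_iff_ne_zero.2 fun h => NeZero.ne μ <|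
    Measure.measure_univ_eq_zero.1 <| by
      rw [← Set.union_compl_self s]
      exact measure_union_null h hs
  exact iInf₂_le s h_pos

lemma exists_nat_exp_le {a r : ℝ} (ha : 0 < a) (hr : 0 < r) {n : ℕ}
    (hrn : r ≤ Real.exp (-(n * a))) :
    ∃ m : ℕ, n ≤ m ∧ Real.exp (-(m * a)) ≤ r ∧ r ≤ Real.exp a * Real.exp (-(m * a)) := by
  have h_log : n ≤ -Real.log r / a := by
    rw [le_div_iff₀ ha]
    linarith [(Real.log_le_iff_le_exp hr).2 hrn]
  have h_ceil := Nat.le_ceil (-Real.log r / a)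
  have h_lt := Nat.ceil_lt_add_one ((Nat.cast_nonneg n).trans h_log)
  refine ⟨⌈-Real.log r / a⌉₊, mod_cast h_log.trans h_ceil, ?_, ?_⟩
  · rw [← Real.le_log_iff_exp_le hr]
    linarith [(div_le_iff₀ ha).1 h_ceil]
  · rw [← Real.exp_add, ← Real.log_le_iff_le_exp hr]
    rw [← sub_lt_iff_lt_add, lt_div_iff₀ ha] at h_lt
    linarith

lemma exp_mul_exp_neg_le_rpow {a b h t x r : ℝ} (hx : 0 ≤ x) (ht : 0 ≤ t) (h_le : t * a + b ≤ h)
    (hr : Real.exp (-(x * a)) ≤ r) : Real.exp (x * b) * Real.exp (-(x * h)) ≤ r ^ t := by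
  calc Real.exp (x * b) * Real.exp (-(x * h))
      ≤ Real.exp (-(x * a) * t) := by
        rw [← Real.exp_add, Real.exp_le_exp]
        linarith [mul_le_mul_of_nonneg_left h_le hx]
    _ = Real.exp (-(x * a)) ^ t := Real.exp_mul _ _
    _ ≤ r ^ t := by gcongr

lemma exp_mul_mul_rpow_half_mul_exp (D R a b : ℝ) {ρ : ℝ} (hρ : 0 ≤ ρ) :
    Real.exp (D * (-a - 1)) * (R * (ρ * Real.exp (-b) / 2) ^ D) =
      Real.exp (-D) * (R * (ρ / 2) ^ D) * Real.exp (-(D * (a + b))) := by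
  have h_exp : Real.exp (D * (-a - 1)) * Real.exp (-b * D) =
      Real.exp (-D) * Real.exp (-(D * (a + b))) := by
    rw [← Real.exp_add, ← Real.exp_add]
    ring_nf
  rw [mul_div_right_comm, Real.mul_rpow (by positivity) (Real.exp_nonneg _), ← Real.exp_mul]
  linear_combination R * (ρ / 2) ^ D * h_exp

lemma exists_pos_lt_mul_sub_add_le_sub {t χ h D β : ℝ} (hχ : 0 < χ) (h_lt : t * χ < h) :
    ∃ ε > 0, ε < χ ∧ t * (χ - ε) + D * (2 * ε + ε / β) ≤ h - ε := by
  have h_tendsto : Tendsto (fun ε : ℝ => t * (χ - ε) + D * (2 * ε + ε / β) + ε)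
      (nhdsWithin 0 (Set.Ioi 0)) (nhds (t * χ)) := by
    refine Tendsto.mono_left ?_ nhdsWithin_le_nhds
    exact Continuous.tendsto' (by fun_prop) _ _ (by simp)
  obtain ⟨ε, h_ε, hε, hεχ⟩ :=
    ((h_tendsto.eventually_lt_const h_lt).and (Ioo_mem_nhdsGT hχ)).exists
  exact ⟨ε, hε, hεχ, (lt_sub_iff_add_lt.2 h_ε).le⟩

namespace IFS

section LowerBound

variable {ι X : Type*} [Fintype ι]

/-- The word `w`, read from `x`, is atypical or distorts the balls of radius
`exp (-(w.length * ε / β))` around `x` too much. -/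
def Exceptional [PseudoMetricSpace X] [MeasurableSpace X] (S : IFS ι X) (ν : Measure X)
    (g : ι → X → ℝ) (β ε : ℝ) (x : X) (w : List ι) : Prop :=
  S.Atypical ν g ε x w ∨ Real.exp (w.length * ε) < S.distortionSum g β w x

variable [MetricSpace X] [MeasurableSpace X] [BorelSpace X] {S : IFS ι X} {μ ν : Measure X}
  {U : Set X} {g : ι → X → ℝ} {β C q B D M t : ℝ≥0} {R₂ R₃ ε : ℝ}

lemma HasLogDeriv.exists_lintegral_law_hasLongSuffix_exceptional_le [SecondCountableTopology X]
    [IsProbabilityMeasure ν] (hS : S.HasLogDeriv g β C q B) (hν : S.IsInvariant ν) (hε : 0 < ε)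
    {δ : ℝ≥0∞} (hδ : 0 < δ) :
    ∃ n, ∀ N, ∫⁻ x, S.law N x {w | S.HasLongSuffix (S.Exceptional ν g β ε) n x w} ∂ν ≤ δ := by
  obtain ⟨m, hm⟩ := hS.exists_lintegral_law_hasLongSuffix_atypical_le hν hε
    (ENNReal.half_pos hδ.ne')
  have h_tail (n : ℕ) (x : X) :
      S.law n x {v | Real.exp (v.length * ε) < S.distortionSum g β v x} ≤
        ENNReal.ofReal ((1 - (q : ℝ))⁻¹ * Real.exp (-(ε * n))) := by
    rw [Real.exp_neg, ← div_eq_mul_inv, mul_comm ε]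
    refine (measure_mono_ae ?_).trans (hS.law_lt_distortionSum_le (Real.exp_pos _) n x)
    filter_upwards [S.ae_length_eq n x]
    rintro w rfl hw
    exact hw
  obtain ⟨n, hn⟩ := exists_law_hasLongSuffix_le hε h_tail (ENNReal.half_pos hδ.ne')
  refine ⟨max m n, fun N => ?_⟩
  calc ∫⁻ x, S.law N x {w | S.HasLongSuffix (S.Exceptional ν g β ε) (max m n) x w} ∂ν
      ≤ ∫⁻ x, (S.law N x {w | S.HasLongSuffix (S.Atypical ν g ε) m x w} + δ / 2) ∂ν := by
        refine lintegral_mono fun x => (measure_mono fun w hw => ?_).trans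
          ((measure_union_le _ _).trans (add_le_add le_rfl (hn N x)))
        exact ((hasLongSuffix_or (P := S.Atypical ν g ε)
          (Q := fun y v => Real.exp (v.length * ε) < S.distortionSum g β v y)).1 hw).imp
          (.mono (le_max_left m n) fun _ _ _ => id) (.mono (le_max_right m n) fun _ _ _ => id)
    _ = ∫⁻ x, S.law N x {w | S.HasLongSuffix (S.Atypical ν g ε) m x w} ∂ν + δ / 2 := by
        rw [lintegral_add_right _ measurable_const, lintegral_const, measure_univ, mul_one]
    _ ≤ δ := (add_le_add (hm N) le_rfl).trans (ENNReal.add_halves δ).le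

omit [MeasurableSpace X] [BorelSpace X] in
lemma IsHolderContracting.exists_hasDistortionBudget (hS : S.IsHolderContracting β C q)
    (g : ι → X → ℝ) (ε : ℝ) {R : ℝ} (hR : 0 < R) :
    ∃ ρ > 0, ρ ≤ R ∧ ∀ (w : List ι) (y : X),
      S.distortionSum g β w y ≤ Real.exp (w.length * ε) →
      S.HasDistortionBudget g β C w y (ρ * Real.exp (-(w.length * (ε / β)))) 0 := by
  have hβ : (β : ℝ) ≠ 0 := by exact_mod_cast hS.exponent_pos.ne'
  obtain ⟨ρ, hρ, h_le⟩ := exists_pos_mul_rpow_le_one (c := C * Real.exp β) (by positivity) hβ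
  refine ⟨min ρ R, lt_min hρ hR, min_le_right ρ R, fun w y h_sum =>
    .of_distortionSum_le (mul_pos (lt_min hρ hR) (Real.exp_pos _)) h_sum ?_⟩
  have h_exp : Real.exp (w.length * ε) * Real.exp (-(w.length * (ε / β))) ^ (β : ℝ) = 1 := by
    rw [← Real.exp_mul, ← Real.exp_add, Real.exp_eq_one_iff]
    field_simp
    ring
  calc C * Real.exp β * Real.exp (w.length * ε) *
        (min ρ R * Real.exp (-(w.length * (ε / β)))) ^ (β : ℝ)
      = C * Real.exp β * min ρ R ^ (β : ℝ) := by
        rw [Real.mul_rpow (lt_min hρ hR).le (Real.exp_nonneg _)]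
        linear_combination C * Real.exp β * min ρ R ^ (β : ℝ) * h_exp
    _ ≤ C * Real.exp β * ρ ^ (β : ℝ) := by
        have := (lt_min hρ hR).le
        gcongr
        exact min_le_left ρ R
    _ ≤ 1 := h_le

lemma HasLogDeriv.exists_card_le (hS : S.HasLogDeriv g β C q B)
    (hμ : S.HasLogJacobian μ (fun i x => D * g i x) β (D * C))
    (hU : S.IsRegularOpenSet μ U D M R₂ R₃) (ν : Measure X) (hε : 0 < ε) :
    ∃ c : ℝ, ∀ (n : ℕ) (W : Finset (List ι)), ∀ y ∈ closure U, ∀ z r, 0 < r →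
      r ≤ Real.exp (S.lyapunovExponent ν g - ε) *
        Real.exp (-(n * (S.lyapunovExponent ν g - ε))) →
      (∀ w ∈ W, w.length = n ∧ S.wordMap w y ∈ ball z r ∧ ¬S.Exceptional ν g β ε y w) →
      W.card ≤ c * Real.exp (n * (D * (2 * ε + ε / β))) := by
  have hR₂ := hU.radius_pos
  have hR₃ := hU.density_pos
  obtain ⟨ρ₀, hρ₀, hρ₀_le, h_budget⟩ := hS.exists_hasDistortionBudget g ε hR₂
  set χ := S.lyapunovExponent ν g
  set κ := Real.exp (-D) * (R₃ * (ρ₀ / 2) ^ (D : ℝ))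
  have hκ : 0 < κ := by positivity
  refine ⟨M * (Real.exp (χ - ε) + Real.exp 1 * ρ₀) ^ (D : ℝ) / κ,
    fun n W y hy z r hr hr_le hW => ?_⟩
  set ρ := ρ₀ * Real.exp (-(n * (ε / β)))
  have hρ_le : ρ ≤ ρ₀ := mul_le_of_le_one_right hρ₀.le <| Real.exp_le_one_iff.2 <|
    neg_nonpos.2 <| by positivity
  have h_packing := hU.card_mul_le hS hμ (n := n) (W := W) (a := n * (χ - ε)) (b := n * (χ + ε))
    hy hr (by positivity) (hρ_le.trans_lt (by linarith)) fun w hw => by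
      obtain ⟨rfl, hz, h_typical⟩ := hW w hw
      obtain ⟨h_typical, h_dist⟩ := not_or.1 h_typical
      exact ⟨rfl, h_budget w y (not_lt.1 h_dist), (wordSum_mem_Icc_of_not_atypical h_typical).1, hz⟩
  have h_volume : Real.exp (D * (-(n * (χ + ε)) - 1)) * (R₃ * (ρ / 2) ^ (D : ℝ)) =
      κ * Real.exp (-(n * (χ - ε)) * D - n * (D * (2 * ε + ε / β))) := by
    rw [exp_mul_mul_rpow_half_mul_exp _ _ _ _ hρ₀.le]
    exact congrArg (κ * Real.exp ·) (by ring)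
  have h_radius : r + Real.exp 1 * (Real.exp (-(n * (χ - ε))) * ρ) ≤
      (Real.exp (χ - ε) + Real.exp 1 * ρ₀) * Real.exp (-(n * (χ - ε))) := by
    have : Real.exp 1 * (Real.exp (-(n * (χ - ε))) * ρ) ≤
      Real.exp 1 * (Real.exp (-(n * (χ - ε))) * ρ₀) := by gcongr
    linarith
  rw [div_mul_eq_mul_div, le_div_iff₀ hκ]
  refine le_of_mul_le_mul_right ?_ (Real.exp_pos (-(n * (χ - ε)) * D - n * (D * (2 * ε + ε / β))))
  calc W.card * κ * Real.exp (-(n * (χ - ε)) * D - n * (D * (2 * ε + ε / β)))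
      ≤ M * (r + Real.exp 1 * (Real.exp (-(n * (χ - ε))) * ρ)) ^ (D : ℝ) := by
        rw [mul_assoc, ← h_volume]
        exact h_packing
    _ ≤ M * ((Real.exp (χ - ε) + Real.exp 1 * ρ₀) * Real.exp (-(n * (χ - ε)))) ^ (D : ℝ) := by
        gcongr
    _ = _ := by
        rw [Real.mul_rpow (by positivity) (Real.exp_nonneg _), ← Real.exp_mul,
          mul_assoc _ (Real.exp _) (Real.exp _), ← Real.exp_add, mul_assoc, add_sub_cancel]

omit [MetricSpace X] [BorelSpace X] in
lemma law_coe_finset_le_of_not_atypical [TopologicalSpace X] {S : IFS ι X} {n : ℕ} {x : X}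
    {W : Finset (List ι)} (hW : ∀ w ∈ W, w.length = n ∧ ¬S.Atypical ν g ε x w) :
    S.law n x W ≤ ENNReal.ofReal (W.card * Real.exp (-(n * (S.entropy ν - ε)))) := by
  have h_prob : ∀ w ∈ W, Real.exp (S.wordSum S.logProb w x) ≤ Real.exp (-(n * (S.entropy ν - ε))) :=
    fun w hw => by
      obtain ⟨rfl, h_typical⟩ := hW w hw
      exact Real.exp_le_exp.2 (wordSum_mem_Icc_of_not_atypical h_typical).2.2
  calc S.law n x W
      ≤ ∑ _w ∈ W, ENNReal.ofReal (Real.exp (-(n * (S.entropy ν - ε)))) := by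
        rw [S.law_coe_finset fun w hw => (hW w hw).1]
        exact Finset.sum_le_sum fun w hw => ENNReal.ofReal_le_ofReal (h_prob w hw)
    _ = ENNReal.ofReal (W.card * Real.exp (-(n * (S.entropy ν - ε)))) := by
        rw [Finset.sum_const, nsmul_eq_mul, ENNReal.ofReal_mul (Nat.cast_nonneg _),
          ENNReal.ofReal_natCast]

lemma HasLogDeriv.exists_law_le (hS : S.HasLogDeriv g β C q B)
    (hμ : S.HasLogJacobian μ (fun i x => D * g i x) β (D * C))
    (hU : S.IsRegularOpenSet μ U D M R₂ R₃) (ν : Measure X) (hε : 0 < ε)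
    (ht : t * (S.lyapunovExponent ν g - ε) + D * (2 * ε + ε / β) ≤ S.entropy ν - ε) :
    ∃ c : ℝ≥0, ∀ (n : ℕ), ∀ y ∈ closure U, ∀ (z : X) (r : ℝ),
      Real.exp (-(n * (S.lyapunovExponent ν g - ε))) ≤ r →
      r ≤ Real.exp (S.lyapunovExponent ν g - ε) *
        Real.exp (-(n * (S.lyapunovExponent ν g - ε))) →
      S.law n y {w | S.wordMap w y ∈ ball z r ∧ ¬S.Exceptional ν g β ε y w} ≤
        c * ENNReal.ofReal r ^ (t : ℝ) := by
  classical
  obtain ⟨c, hc⟩ := hS.exists_card_le hμ hU ν hε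
  refine ⟨c.toNNReal, fun n y hy z r hr hr_le => ?_⟩
  let W : Finset (List ι) := (List.finite_length_eq ι n).toFinset.filter fun w =>
    S.wordMap w y ∈ ball z r ∧ ¬S.Exceptional ν g β ε y w
  have hW : ∀ w ∈ W, w.length = n ∧ S.wordMap w y ∈ ball z r ∧ ¬S.Exceptional ν g β ε y w :=
    fun w hw => by simpa [W] using hw
  have hr_pos := (Real.exp_pos _).trans_le hr
  have h_card : W.card ≤ c.toNNReal * Real.exp (n * (D * (2 * ε + ε / β))) := by
    refine (hc n W y hy z r hr_pos hr_le hW).trans ?_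
    gcongr
    exact Real.le_coe_toNNReal c
  calc S.law n y {w | S.wordMap w y ∈ ball z r ∧ ¬S.Exceptional ν g β ε y w}
      ≤ S.law n y W := by
        refine measure_mono_ae ?_
        filter_upwards [S.ae_length_eq n y] with w hw h
        exact Finset.mem_filter.2 ⟨by simpa using hw, h⟩
    _ ≤ ENNReal.ofReal (W.card * Real.exp (-(n * (S.entropy ν - ε)))) :=
        law_coe_finset_le_of_not_atypical fun w hw => ⟨(hW w hw).1, (not_or.1 (hW w hw).2.2).1⟩
    _ ≤ ENNReal.ofReal (c.toNNReal * r ^ (t : ℝ)) := by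
        refine ENNReal.ofReal_le_ofReal ((mul_le_mul_of_nonneg_right h_card
          (Real.exp_nonneg _)).trans ?_)
        rw [mul_assoc]
        gcongr
        exact exp_mul_exp_neg_le_rpow n.cast_nonneg t.coe_nonneg ht hr
    _ = c.toNNReal * ENNReal.ofReal r ^ (t : ℝ) := by
        rw [ENNReal.ofReal_mul (NNReal.coe_nonneg _), ENNReal.ofReal_coe_nnreal,
          ENNReal.ofReal_rpow_of_nonneg hr_pos.le t.coe_nonneg]

omit [MetricSpace X] [MeasurableSpace X] [BorelSpace X] in
lemma law_wordMap_mem_biUnion_le [TopologicalSpace X] {S : IFS ι X} {P : X → List ι → Prop}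
    {K : Set X} (hK : ∀ i, Set.MapsTo (S.map i) K K) {α : Type*} {I : Finset α} {A : α → Set X}
    {m : α → ℕ} {a : α → ℝ≥0∞} {n N : ℕ} (hm : ∀ i ∈ I, n ≤ m i ∧ m i ≤ N)
    (h : ∀ i ∈ I, ∀ y ∈ K, S.law (m i) y {v | S.wordMap v y ∈ A i ∧ ¬P y v} ≤ a i)
    {x : X} (hx : x ∈ K) :
    S.law N x {w | S.wordMap w x ∈ ⋃ i ∈ I, A i ∧ ¬S.HasLongSuffix P n x w} ≤ ∑ i ∈ I, a i := by
  let Q (i : α) (y : X) (v : List ι) : Prop := y ∈ K ∧ S.wordMap v y ∈ A i ∧ ¬P y v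
  have h_suffix : ∀ i ∈ I, S.law N x
      {w | ∃ u v, w = u ++ v ∧ v.length = m i ∧ Q i (S.wordMap u x) v} ≤ a i := fun i hi => by
    refine law_exists_suffix_le (fun y => ?_) N x
    by_cases hy : y ∈ K
    · simpa [Q, hy] using h i hi y hy
    · simp [Q, hy]
  refine (measure_mono_ae ?_).trans
    ((measure_biUnion_finset_le I _).trans (Finset.sum_le_sum h_suffix))
  filter_upwards [S.ae_length_eq N x] with w hw
  rintro ⟨h_mem, h_suffix⟩
  obtain ⟨i, hi, h_mem⟩ := Set.mem_iUnion₂.1 h_mem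
  set u := w.take (N - m i)
  set v := w.drop (N - m i)
  have h_split : u ++ v = w := List.take_append_drop _ _
  have h_length : v.length = m i := by
    rw [List.length_drop, hw, Nat.sub_sub_self (hm i hi).2]
  rw [← h_split, wordMap_append] at h_mem
  exact Set.mem_iUnion₂.2 ⟨i, hi, u, v, h_split.symm, h_length, mapsTo_wordMap hK u hx, h_mem,
    fun hP => h_suffix ⟨u, v, h_split.symm, (hm i hi).1.trans_eq h_length.symm, hP⟩⟩

lemma HasLogDeriv.exists_measure_biUnion_ball_le [SecondCountableTopology X]
    [IsProbabilityMeasure ν] (hS : S.HasLogDeriv g β C q B)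
    (hμ : S.HasLogJacobian μ (fun i x => D * g i x) β (D * C))
    (hU : S.IsRegularOpenSet μ U D M R₂ R₃) (hν : S.IsInvariant ν)
    (ht : t * S.lyapunovExponent ν g < S.entropy ν) {δ : ℝ≥0∞} (hδ : 0 < δ) :
    ∃ (c : ℝ≥0) (R : ℝ), 0 < R ∧ ∀ (I : Finset ℕ) (z : ℕ → X) (r : ℕ → ℝ),
      (∀ i ∈ I, 0 < r i ∧ r i ≤ R) →
      ν (⋃ i ∈ I, ball (z i) (r i)) ≤ δ + ∑ i ∈ I, c * ENNReal.ofReal (r i) ^ (t : ℝ) := by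
  set χ := S.lyapunovExponent ν g
  obtain ⟨ε, hε, hεχ, h_gap⟩ :=
    exists_pos_lt_mul_sub_add_le_sub (D := D) (β := β) hS.lyapunovExponent_pos ht
  have ha : 0 < χ - ε := sub_pos.2 hεχ
  obtain ⟨n, hn⟩ := hS.exists_lintegral_law_hasLongSuffix_exceptional_le hν hε hδ
  obtain ⟨c, hc⟩ := hS.exists_law_le hμ hU ν hε h_gap
  refine ⟨c, Real.exp (-(n * (χ - ε))), Real.exp_pos _, fun I z r hr => ?_⟩
  choose! m hm using fun i (hi : i ∈ I) => exists_nat_exp_le ha (hr i hi).1 (hr i hi).2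
  have h_null : ν (closure U)ᶜ = 0 :=
    hν.ae_mem_closure hS.toIsHolderContracting hU.nonempty hU.mapsTo_map
  have h_law : ∀ x ∈ closure U, S.law (I.sup m) x
      {w | S.wordMap w x ∈ ⋃ i ∈ I, ball (z i) (r i) ∧
        ¬S.HasLongSuffix (S.Exceptional ν g β ε) n x w} ≤
      ∑ i ∈ I, c * ENNReal.ofReal (r i) ^ (t : ℝ) := fun x hx =>
    law_wordMap_mem_biUnion_le (fun i => (hU.mapsTo_map i).closure (S.continuous_map i))
      (fun i hi => ⟨(hm i hi).1, Finset.le_sup hi⟩)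
      (fun i hi y hy => hc (m i) y hy (z i) (r i) (hm i hi).2.1 (hm i hi).2.2) hx
  calc ν (⋃ i ∈ I, ball (z i) (r i))
      ≤ ν (closure U)ᶜ + (∑ i ∈ I, c * ENNReal.ofReal (r i) ^ (t : ℝ) +
          ∫⁻ x, S.law (I.sup m) x
            {w | S.HasLongSuffix (S.Exceptional ν g β ε) n x w} ∂ν) :=
        hν.measure_le isClosed_closure.measurableSet
          (Finset.measurableSet_biUnion I fun _ _ => measurableSet_ball) h_law
    _ ≤ δ + ∑ i ∈ I, c * ENNReal.ofReal (r i) ^ (t : ℝ) := by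
        rw [h_null, zero_add, add_comm]
        exact add_le_add (hn _) le_rfl

lemma HasLogDeriv.le_lowerDimH [SecondCountableTopology X] [IsProbabilityMeasure ν]
    (hS : S.HasLogDeriv g β C q B) (hμ : S.HasLogJacobian μ (fun i x => D * g i x) β (D * C))
    (hU : S.IsRegularOpenSet μ U D M R₂ R₃) (hν : S.IsInvariant ν)
    (ht : t * S.lyapunovExponent ν g < S.entropy ν) : t ≤ lowerDimH ν := by
  rcases eq_zero_or_pos t with rfl | ht_pos
  · exact zero_le
  · exact le_lowerDimH_of_forall_ball_family ht_pos fun δ hδ =>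
      hS.exists_measure_biUnion_ball_le hμ hU hν ht hδ

end LowerBound

section Dimension

variable {ι X : Type*} [Fintype ι] [MetricSpace X] [MeasurableSpace X] [BorelSpace X]
  [SecondCountableTopology X] {S : IFS ι X} {μ ν : Measure X} {U : Set X} {g : ι → X → ℝ}
  {β C q B D M : ℝ≥0} {R₂ R₃ : ℝ}

theorem HasLogDeriv.lowerDimH_eq_and_upperDimH_eq [IsProbabilityMeasure ν]
    (hS : S.HasLogDeriv g β C q B) (hμ : S.HasLogJacobian μ (fun i x => D * g i x) β (D * C))
    (hU : S.IsRegularOpenSet μ U D M R₂ R₃) (hν : S.IsInvariant ν) :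
    lowerDimH ν = ENNReal.ofReal (S.entropy ν / S.lyapunovExponent ν g) ∧
      upperDimH ν = ENNReal.ofReal (S.entropy ν / S.lyapunovExponent ν g) := by
  have hχ : 0 < S.lyapunovExponent ν g := hS.lyapunovExponent_pos
  have h_lower : ENNReal.ofReal (S.entropy ν / S.lyapunovExponent ν g) ≤ lowerDimH ν :=
    ENNReal.le_of_forall_nnreal_lt fun t ht =>
      hS.le_lowerDimH hμ hU hν <| (lt_div_iff₀ hχ).1 <| ENNReal.coe_lt_ofReal.1 ht
  have h_upper : upperDimH ν ≤ ENNReal.ofReal (S.entropy ν / S.lyapunovExponent ν g) := by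
    by_contra! h_lt
    obtain ⟨t, ht, ht_lt⟩ := ENNReal.lt_iff_exists_nnreal_btwn.1 h_lt
    rw [ENNReal.ofReal_lt_coe_iff (div_nonneg entropy_nonneg hχ.le), div_lt_iff₀ hχ] at ht
    exact (hS.upperDimH_le hν ht).not_gt ht_lt
  have h_le := lowerDimH_le_upperDimH ν
  exact ⟨(h_le.trans h_upper).antisymm h_lower, h_upper.antisymm (h_lower.trans h_le)⟩

end Dimension

end IFS

/-! ### Conformal maps -/

section ConformalMap

variable {E F : Type*} [NormedAddCommGroup E] [NormedSpace ℝ E] [Nontrivial E]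
  [NormedAddCommGroup F] [NormedSpace ℝ F]

lemma norm_apply_of_isConformalMap {f : E →L[ℝ] F} (hf : IsConformalMap f) (v : E) :
    ‖f v‖ = ‖f‖ * ‖v‖ := by
  obtain ⟨c, -, li, rfl⟩ := hf
  have h_norm (v : E) : ‖(c • li.toContinuousLinearMap) v‖ = ‖c‖ * ‖v‖ := by simp [norm_smul]
  rw [h_norm, ContinuousLinearMap.homothety_norm _ h_norm]

lemma norm_pos_of_isConformalMap {f : E →L[ℝ] F} (hf : IsConformalMap f) : 0 < ‖f‖ :=
  norm_pos_iff.2 hf.ne_zero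

variable [FiniteDimensional ℝ E] {f : E →L[ℝ] E}

lemma exists_continuousLinearEquiv_of_isConformalMap (hf : IsConformalMap f) :
    ∃ A : E ≃L[ℝ] E, (A : E →L[ℝ] E) = f ∧ ‖(A.symm : E →L[ℝ] E)‖ ≤ ‖f‖⁻¹ := by
  let A := (LinearEquiv.ofInjectiveEndo (f : E →ₗ[ℝ] E) hf.injective).toContinuousLinearEquiv
  refine ⟨A, by ext; rfl, ContinuousLinearMap.opNorm_le_bound _ (by positivity) fun y => ?_⟩
  have h_norm : ‖y‖ = ‖f‖ * ‖A.symm y‖ := by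
    rw [← norm_apply_of_isConformalMap hf]
    exact congr_arg norm (A.apply_symm_apply y).symm
  rw [h_norm, inv_mul_cancel_left₀ (norm_pos_of_isConformalMap hf).ne']
  rfl

lemma abs_det_of_isConformalMap (hf : IsConformalMap f) :
    |f.det| = ‖f‖ ^ Module.finrank ℝ E := by
  borelize E
  let μ : Measure E := Measure.addHaar
  have hf_pos := norm_pos_of_isConformalMap hf
  obtain ⟨A, rfl, -⟩ := exists_continuousLinearEquiv_of_isConformalMap hf
  set f := (A : E →L[ℝ] E)
  have h_image : f '' ball 0 1 = ball 0 ‖f‖ := by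
    have h_symm (y : E) : f (A.symm y) = y := A.apply_symm_apply y
    refine (A.image_eq_preimage_symm _).trans ?_
    ext y
    rw [Set.mem_preimage, mem_ball_zero_iff, mem_ball_zero_iff]
    nth_rw 2 [← h_symm y]
    rw [norm_apply_of_isConformalMap hf, mul_lt_iff_lt_one_right hf_pos]
  have h_measure := Measure.addHaar_image_continuousLinearMap μ f (ball 0 1)
  rw [h_image, Measure.addHaar_ball_of_pos μ _ hf_pos, ENNReal.mul_left_inj
    (measure_ball_pos μ 0 one_pos).ne' measure_ball_lt_top.ne,
    ENNReal.ofReal_eq_ofReal_iff (by positivity) (abs_nonneg _)] at h_measure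
  exact h_measure.symm

lemma ofReal_pow_mul_measure_le_measure_image [MeasurableSpace E] [BorelSpace E] (μ : Measure E)
    [μ.IsAddHaarMeasure] {h : E → E} (h_diff : Differentiable ℝ h)
    (h_conf : ∀ x, IsConformalMap (fderiv ℝ h x)) {A : Set E} (h_inj : A.InjOn h)
    (hA : MeasurableSet A) {m : ℝ} (hm : 0 ≤ m) (h_le : ∀ x ∈ A, m ≤ ‖fderiv ℝ h x‖) :
    ENNReal.ofReal (m ^ Module.finrank ℝ E) * μ A ≤ μ (h '' A) := by
  rw [← lintegral_abs_det_fderiv_eq_addHaar_image μ hA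
    (fun x _ => (h_diff x).hasFDerivAt.hasFDerivWithinAt) h_inj, ← setLIntegral_const]
  refine setLIntegral_mono' hA fun x hx => ENNReal.ofReal_le_ofReal ?_
  rw [abs_det_of_isConformalMap (h_conf x)]
  exact pow_le_pow_left₀ hm (h_le x hx) _

omit [FiniteDimensional ℝ E] [Nontrivial E] in
lemma tendsto_dist_div_dist_norm_fderiv {h : E → F} {x : E} (h_diff : DifferentiableAt ℝ h x)
    {v : E} (hv : ‖v‖ = 1) :
    Tendsto (fun t : ℝ => dist (h x) (h (x + t • v)) / dist x (x + t • v)) (nhdsWithin 0 {0}ᶜ)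
      (nhds ‖fderiv ℝ h x v‖) := by
  have h_line : HasDerivAt (fun t : ℝ => h (x + t • v)) (fderiv ℝ h x v) 0 :=
    h_diff.hasFDerivAt.hasLineDerivAt v
  refine (hasDerivAt_iff_tendsto_slope.1 h_line).norm.congr fun t => ?_
  simp [slope_def_module, dist_eq_norm', norm_smul, hv, inv_mul_eq_div]

end ConformalMap

/-! ### Hölder functions -/

section Holder

lemma lipschitzOnWith_log {δ : ℝ≥0} (hδ : 0 < δ) :
    LipschitzOnWith δ⁻¹ Real.log (Set.Ici δ) := by
  have h_pos {x : ℝ} (hx : x ∈ Set.Ici (δ : ℝ)) : 0 < x := (NNReal.coe_pos.2 hδ).trans_le hx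
  refine (convex_Ici _).lipschitzOnWith_of_nnnorm_hasDerivWithin_le
    (fun x hx => (Real.hasDerivAt_log (h_pos hx).ne').hasDerivWithinAt) fun x hx => ?_
  rw [← NNReal.coe_le_coe, coe_nnnorm, Real.norm_of_nonneg (inv_pos.2 (h_pos hx)).le,
    NNReal.coe_inv]
  exact inv_anti₀ (NNReal.coe_pos.2 hδ) hx

variable {ι X : Type*} [Finite ι] [PseudoMetricSpace X] {α : ℝ≥0}

lemma holderWith_log_comp {f : X → ℝ} {C δ : ℝ≥0} (hf : HolderWith C α f) (hδ : 0 < δ)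
    (h_le : ∀ x, δ ≤ f x) : HolderWith (δ⁻¹ * C) α fun x => Real.log (f x) := by
  simpa [Function.comp_def] using (lipschitzOnWith_log hδ).holderOnWith.comp_holderWith hf h_le

lemma holderWith_zero_of_abs_le {f : X → ℝ} {B : ℝ≥0} (hf : ∀ x, |f x| ≤ B) :
    HolderWith (2 * B) 0 f := by
  refine holderWith_iff_dist_le.2 fun x y => ?_
  rw [NNReal.coe_zero, Real.rpow_zero, mul_one, Real.dist_eq, NNReal.coe_mul, NNReal.coe_ofNat,
    two_mul]
  exact (abs_sub _ _).trans (add_le_add (hf x) (hf y))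

lemma holderClass_mono {β B B' C C' : ℝ≥0} (hB : B ≤ B') (hC : C ≤ C') :
    holderClass X β B C ⊆ holderClass X β B' C' := fun _ hf =>
  ⟨fun x => (hf.1 x).trans (NNReal.coe_le_coe.2 hB), hf.2.mono hC⟩

lemma exists_forall_mem_holderClass {f : ι → X → ℝ} {B : ℝ≥0} (hB : ∀ i x, |f i x| ≤ B)
    (hf : ∀ i, ∃ C, HolderWith C α (f i)) : ∃ C, ∀ β ≤ α, ∀ i, f i ∈ holderClass X β B C := by
  choose C hC using hf
  obtain ⟨C', hC'⟩ := (Set.finite_range C).bddAbove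
  refine ⟨max (2 * B) C', fun β hβ i => ⟨hB i, ?_⟩⟩
  exact ((holderWith_zero_of_abs_le (hB i)).of_le_of_le (hC i) zero_le hβ).mono
    (max_le_max_left _ (hC' ⟨i, rfl⟩))

end Holder

/-! ### Contraction on average -/

section AverageContraction

lemma exists_exponent_forall_sum_mul_exp_le {ι : Type*} [Fintype ι] {α : ℝ≥0} (hα : 0 < α)
    {b : ℝ} (hb : 0 < b) (M : ℝ) :
    ∃ β q : ℝ≥0, 0 < β ∧ β ≤ α ∧ q < 1 ∧ ∀ p t : ι → ℝ, (∀ i, 0 ≤ p i) → ∑ i, p i = 1 →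
      (∀ i, |t i| ≤ M) → ∑ i, p i * t i ≤ -b → ∑ i, p i * Real.exp (β * t i) ≤ q := by
  have h_small (c : ℝ) {d : ℝ} (hd : 0 < d) :
      ∀ᶠ β : ℝ≥0 in nhdsWithin 0 (Set.Ioi 0), β * c < d := by
    have h_cont : Continuous fun β : ℝ≥0 => (β : ℝ) * c := by fun_prop
    have h_lim : Tendsto (fun β : ℝ≥0 => (β : ℝ) * c) (nhds 0) (nhds 0) :=
      h_cont.tendsto' _ _ (by simp)
    exact (h_lim.eventually_lt_const hd).filter_mono nhdsWithin_le_nhds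
  obtain ⟨β, ⟨h_lin, h_sq⟩, hβ_pos, hβ_le⟩ :=
    (((h_small M one_pos).and (h_small (M ^ 2) (half_pos hb))).and (Ioc_mem_nhdsGT hα)).exists
  refine ⟨β, (1 - β * b / 2).toNNReal, hβ_pos, hβ_le, ?_, fun p t hp hp_sum ht h_mean => ?_⟩
  · have : (0 : ℝ) < β * b := mul_pos hβ_pos hb
    rw [Real.toNNReal_lt_one]
    linarith
  · refine le_trans ?_ (Real.le_coe_toNNReal _)
    have h_exp := sum_mul_exp_le hp hp_sum β.coe_nonneg ht h_lin.le
    nlinarith [mul_le_mul_of_nonneg_left h_mean β.coe_nonneg,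
      mul_le_mul_of_nonneg_left h_sq.le β.coe_nonneg]

variable {ι X Y : Type*} [Fintype ι] [MetricSpace X]

lemma abs_log_dist_div_dist_le [MetricSpace Y] {f : X → Y} {K : ℝ≥0} (hf : LipschitzWith K f)
    (hf' : AntilipschitzWith K f) {x y : X} (hxy : x ≠ y) :
    |Real.log (dist (f x) (f y) / dist x y)| ≤ Real.log K := by
  have h_dist : 0 < dist x y := dist_pos.2 hxy
  have h_dist_map : 0 < dist (f x) (f y) := dist_pos.2 (hf'.injective.ne hxy)
  have hK : (0 : ℝ) < K :=
    pos_of_mul_pos_left (h_dist_map.trans_le (hf.dist_le_mul x y)) h_dist.le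
  rw [abs_le, ← Real.log_inv]
  refine ⟨Real.log_le_log (inv_pos.2 hK) ?_, Real.log_le_log (div_pos h_dist_map h_dist) ?_⟩
  · rw [le_div_iff₀ h_dist, inv_mul_le_iff₀ hK]
    exact hf'.le_mul_dist x y
  · rw [div_le_iff₀ h_dist]
    exact hf.dist_le_mul x y

namespace IFS

variable {S : IFS ι X} {K : ℝ≥0}

lemma exists_exponent_forall_sum_dist_div_dist_rpow_le (h_lip : ∀ i, LipschitzWith K (S.map i))
    (h_anti : ∀ i, AntilipschitzWith K (S.map i)) {b : ℝ} (hb : 0 < b)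
    (h_log : ∀ x y, x ≠ y →
      ∑ i, S.prob i x * Real.log (dist (S.map i x) (S.map i y) / dist x y) < -b)
    {α : ℝ≥0} (hα : 0 < α) :
    ∃ β q : ℝ≥0, 0 < β ∧ β ≤ α ∧ q < 1 ∧ ∀ x y, x ≠ y →
      ∑ i, S.prob i x * (dist (S.map i x) (S.map i y) / dist x y) ^ (β : ℝ) ≤ q := by
  obtain ⟨β, q, hβ, hβα, hq, h_sum⟩ :=
    exists_exponent_forall_sum_mul_exp_le (ι := ι) hα hb (Real.log K)
  refine ⟨β, q, hβ, hβα, hq, fun x y hxy => ?_⟩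
  have h_rpow (i : ι) : (dist (S.map i x) (S.map i y) / dist x y) ^ (β : ℝ) =
      Real.exp (β * Real.log (dist (S.map i x) (S.map i y) / dist x y)) := by
    rw [Real.rpow_def_of_pos, mul_comm]
    exact div_pos (dist_pos.2 ((h_anti i).injective.ne hxy)) (dist_pos.2 hxy)
  simp only [h_rpow]
  exact h_sum _ _ (fun i => (S.prob_pos i x).le) (S.sum_prob x)
    (fun i => abs_log_dist_div_dist_le (h_lip i) (h_anti i) hxy) (h_log x y hxy).le

lemma sum_dist_rpow_le_of_sum_dist_div_dist_rpow_le {β q : ℝ} (hβ : 0 < β)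
    (h_le : ∀ x y, x ≠ y →
      ∑ i, S.prob i x * (dist (S.map i x) (S.map i y) / dist x y) ^ β ≤ q) (x y : X) :
    ∑ i, S.prob i x * dist (S.map i x) (S.map i y) ^ β ≤ q * dist x y ^ β := by
  rcases eq_or_ne x y with rfl | hxy
  · simp [Real.zero_rpow hβ.ne']
  · have h_sum := h_le x y hxy
    simp only [Real.div_rpow dist_nonneg dist_nonneg, ← mul_div_assoc, ← Finset.sum_div] at h_sum
    rwa [div_le_iff₀ (Real.rpow_pos_of_pos (dist_pos.2 hxy) _)] at h_sum

end IFS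

end AverageContraction

/-! ### Conformal iterated function systems -/

namespace IFS

section Conformal

variable {ι E : Type*} [Fintype ι] [NormedAddCommGroup E] [NormedSpace ℝ E]

/-- The maps of the system are continuously differentiable and conformal. -/
structure IsConformal (S : IFS ι E) : Prop where
  contDiff_map : ∀ i, ContDiff ℝ 1 (S.map i)
  isConformalMap_fderiv : ∀ i x, IsConformalMap (fderiv ℝ (S.map i) x)

/-- The logarithm of the scaling factor of `map i` at `x`. -/
def logDeriv (S : IFS ι E) (i : ι) (x : E) : ℝ := Real.log ‖fderiv ℝ (S.map i) x‖

variable {S : IFS ι E} {β C q B : ℝ≥0}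

namespace IsConformal

lemma differentiable_map (hS : S.IsConformal) (i : ι) : Differentiable ℝ (S.map i) :=
  (hS.contDiff_map i).differentiable one_ne_zero

variable [Nontrivial E]

lemma exp_logDeriv (hS : S.IsConformal) (i : ι) (x : E) :
    Real.exp (S.logDeriv i x) = ‖fderiv ℝ (S.map i) x‖ :=
  Real.exp_log (norm_pos_of_isConformalMap (hS.isConformalMap_fderiv i x))

lemma lipschitzWith_map (hS : S.IsConformal) {i : ι} {M : ℝ} (hM : ∀ x, |S.logDeriv i x| ≤ M) :
    LipschitzWith (Real.exp M).toNNReal (S.map i) := by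
  refine lipschitzWith_of_nnnorm_fderiv_le (hS.differentiable_map i) fun x => ?_
  rw [← NNReal.coe_le_coe, coe_nnnorm, Real.coe_toNNReal _ (Real.exp_nonneg M),
    ← hS.exp_logDeriv, Real.exp_le_exp]
  exact (abs_le.1 (hM x)).2

lemma antilipschitzWith_map [FiniteDimensional ℝ E] (hS : S.IsConformal) {i : ι} {M : ℝ}
    (hM : ∀ x, |S.logDeriv i x| < M) : AntilipschitzWith (Real.exp M).toNNReal (S.map i) := by
  refine antilipschitzWith_of_nnnorm_fderiv_symm_lt (hS.contDiff_map i) fun x => ?_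
  obtain ⟨A, hA, hA_norm⟩ :=
    exists_continuousLinearEquiv_of_isConformalMap (hS.isConformalMap_fderiv i x)
  refine ⟨A, hA, ?_⟩
  rw [← NNReal.coe_lt_coe, coe_nnnorm, Real.coe_toNNReal _ (Real.exp_nonneg M)]
  refine hA_norm.trans_lt ?_
  rw [← hS.exp_logDeriv, ← Real.exp_neg, Real.exp_lt_exp]
  exact neg_lt.1 (abs_lt.1 (hM x)).1

lemma dist_map_lt (hS : S.IsConformal) {i : ι} (hg : S.logDeriv i ∈ holderClass E β B C) {x z : E}
    {r : ℝ} (hzx : dist z x < r) :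
    dist (S.map i z) (S.map i x) < Real.exp (S.logDeriv i x + C * r ^ (β : ℝ)) * r := by
  have hr : 0 < r := dist_nonneg.trans_lt hzx
  have h_bound : ∀ y ∈ ball x r,
      ‖fderiv ℝ (S.map i) y‖ ≤ Real.exp (S.logDeriv i x + C * r ^ (β : ℝ)) := fun y hy => by
    rw [← hS.exp_logDeriv, Real.exp_le_exp, ← sub_le_iff_le_add']
    refine (le_abs_self _).trans (((mem_holderClass.1 hg).2 y x).trans ?_)
    gcongr
    exact (mem_ball.1 hy).le
  rw [dist_eq_norm]
  refine ((convex_ball x r).norm_image_sub_le_of_norm_fderiv_le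
    (fun y _ => hS.differentiable_map i y) h_bound (mem_ball_self hr) hzx).trans_lt ?_
  rw [← dist_eq_norm]
  exact mul_lt_mul_of_pos_left hzx (Real.exp_pos _)

-- Conformality identifies the difference quotients in one direction with the scaling factors.
lemma sum_exp_le (hS : S.IsConformal) {β q : ℝ} (h_le : ∀ x y, x ≠ y →
      ∑ i, S.prob i x * (dist (S.map i x) (S.map i y) / dist x y) ^ β ≤ q) (x : E) :
    ∑ i, S.prob i x * Real.exp (β * S.logDeriv i x) ≤ q := by
  obtain ⟨v, hv⟩ := exists_norm_eq E zero_le_one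
  have h_ne : ∀ᶠ t : ℝ in nhdsWithin 0 {0}ᶜ, x ≠ x + t • v := by
    filter_upwards [self_mem_nhdsWithin] with t ht
    simpa [← norm_eq_zero (a := v), hv] using ht
  refine le_of_tendsto (tendsto_finsetSum _ fun i _ => Tendsto.const_mul _ ?_)
    (h_ne.mono fun t => h_le x _)
  have h_lim := tendsto_dist_div_dist_norm_fderiv (hS.differentiable_map i x) hv
  rw [norm_apply_of_isConformalMap (hS.isConformalMap_fderiv i x), hv, mul_one,
    ← hS.exp_logDeriv] at h_lim
  rw [mul_comm, Real.exp_mul]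
  exact h_lim.rpow_const (Or.inl (Real.exp_ne_zero _))

lemma hasLogJacobian [FiniteDimensional ℝ E] [MeasurableSpace E] [BorelSpace E]
    (hS : S.IsConformal) (μ : Measure E) [μ.IsAddHaarMeasure]
    (hg : ∀ i, S.logDeriv i ∈ holderClass E β B C) :
    S.HasLogJacobian μ (fun i x => (Module.finrank ℝ E : ℝ≥0) * S.logDeriv i x) β
      (Module.finrank ℝ E * C) := by
  have h_inj (i : ι) : Function.Injective (S.map i) :=
    (hS.antilipschitzWith_map fun x => (((mem_holderClass.1 (hg i)).1 x).trans_lt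
      (lt_add_one (B : ℝ)))).injective
  have := FiniteDimensional.complete ℝ E
  refine ⟨fun i => (S.continuous_map i).measurableEmbedding (h_inj i), fun i x r A hA hAr => ?_⟩
  have h_bound : ∀ y ∈ A,
      Real.exp (S.logDeriv i x - C * r ^ (β : ℝ)) ≤ ‖fderiv ℝ (S.map i) y‖ := fun y hy => by
    rw [← hS.exp_logDeriv, Real.exp_le_exp, sub_le_comm]
    refine (le_abs_self _).trans (((mem_holderClass.1 (hg i)).2 x y).trans ?_)
    rw [dist_comm]
    gcongr
    exact (mem_ball.1 (hAr hy)).le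
  convert! ofReal_pow_mul_measure_le_measure_image μ (hS.differentiable_map i)
    (hS.isConformalMap_fderiv i) (h_inj i).injOn hA (Real.exp_nonneg _) h_bound using 3
  rw [← Real.exp_nat_mul]
  push_cast
  ring_nf

lemma exists_hasLogDeriv [FiniteDimensional ℝ E] (hS : S.IsConformal) {α M δ : ℝ≥0} (hα : 0 < α)
    (hg : ∀ i, ∃ C, HolderWith C α (S.logDeriv i)) (hM : ∀ i x, |S.logDeriv i x| ≤ M)
    (hp : ∀ i, ∃ C, HolderWith C α (S.prob i)) (hδ : 0 < δ) (hδ_le : ∀ i x, δ ≤ S.prob i x)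
    {b : ℝ} (hb : 0 < b) (h_log : ∀ x y, x ≠ y →
      ∑ i, S.prob i x * Real.log (dist (S.map i x) (S.map i y) / dist x y) < -b) :
    ∃ β C q B, S.HasLogDeriv S.logDeriv β C q B := by
  have hM' (i : ι) (x : E) : |S.logDeriv i x| < M + 1 := (hM i x).trans_lt (lt_add_one _)
  obtain ⟨β, q, hβ, hβα, hq, h_rpow⟩ := exists_exponent_forall_sum_dist_div_dist_rpow_le
    (fun i => hS.lipschitzWith_map fun x => (hM' i x).le)
    (fun i => hS.antilipschitzWith_map (hM' i)) hb h_log hα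
  have hp_le (i : ι) (x : E) : |S.prob i x| ≤ (1 : ℝ≥0) :=
    (abs_of_pos (S.prob_pos i x)).trans_le (S.prob_le_one i x)
  have h_logProb_le (i : ι) (x : E) : |S.logProb i x| ≤ (-Real.log δ).toNNReal := by
    rw [abs_of_nonpos (S.logProb_nonpos i x)]
    exact (neg_le_neg (Real.log_le_log hδ (hδ_le i x))).trans (Real.le_coe_toNNReal _)
  obtain ⟨C₁, hC₁⟩ := exists_forall_mem_holderClass hp_le hp
  obtain ⟨C₂, hC₂⟩ := exists_forall_mem_holderClass hM hg
  obtain ⟨C₃, hC₃⟩ := exists_forall_mem_holderClass h_logProb_le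
    fun i => (hp i).imp' _ fun C hC => holderWith_log_comp hC hδ (hδ_le i)
  let C := max C₁ (max C₂ C₃)
  let B := max M (-Real.log δ).toNNReal
  have hg_mem (i : ι) : S.logDeriv i ∈ holderClass E β B C := holderClass_mono (le_max_left _ _)
    ((le_max_left _ _).trans (le_max_right _ _)) (hC₂ β hβα i)
  exact ⟨β, C, q, B,
    { exponent_pos := hβ
      rate_lt_one := hq
      holderWith_prob := fun i => (hC₁ β hβα i).2.mono (le_max_left _ _)
      sum_dist_rpow_le :=
        sum_dist_rpow_le_of_sum_dist_div_dist_rpow_le (NNReal.coe_pos.2 hβ) h_rpow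
      mem_holderClass := hg_mem
      logProb_mem_holderClass := fun i => holderClass_mono (le_max_right _ _)
        ((le_max_right _ _).trans (le_max_right _ _)) (hC₃ β hβα i)
      sum_exp_le := hS.sum_exp_le h_rpow
      dist_map_lt := fun i x z r => hS.dist_map_lt (hg_mem i) }⟩

end IsConformal

lemma isRegularOpenSet_of_isAddHaarMeasure [FiniteDimensional ℝ E] [MeasurableSpace E]
    [BorelSpace E] (μ : Measure E) [μ.IsAddHaarMeasure] {U : Set E} {R₂ R₃ : ℝ}
    (hU_nonempty : U.Nonempty) (hU : IsOpen U) (h_subset : ∀ i, S.map i '' U ⊆ U)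
    (h_disjoint : ∀ i j, i ≠ j → S.map i '' U ∩ S.map j '' U = ∅) (hR₂ : 0 < R₂) (hR₃ : 0 < R₃)
    (h_density : ∀ x ∈ U, ∀ r : ℝ, 0 < r → r < R₂ →
      ENNReal.ofReal (R₃ * r ^ Module.finrank ℝ E) ≤ μ (ball x r ∩ U)) :
    S.IsRegularOpenSet μ U (Module.finrank ℝ E) (μ (ball 0 1)).toNNReal R₂ R₃ where
  nonempty := hU_nonempty
  isOpen := hU
  mapsTo_map i := Set.mapsTo_iff_image_subset.2 (h_subset i)
  disjoint_image_map i j hij := Set.disjoint_iff_inter_eq_empty.2 (h_disjoint i j hij)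
  radius_pos := hR₂
  density_pos := hR₃
  le_measure_ball_inter := by simpa using h_density
  measure_ball_le z r hr := by
    rw [Measure.addHaar_ball_of_pos μ z hr, mul_comm (_ : ℝ), ENNReal.ofReal_mul (by positivity),
      ENNReal.ofReal_coe_nnreal, ENNReal.coe_toNNReal measure_ball_lt_top.ne]
    simp

end Conformal

end IFS

/-! ### The dimension formula -/

theorem dimH_invariant_measure_ROSC_general {ι E : Type*} [Fintype ι] [NormedAddCommGroup E]
    [NormedSpace ℝ E] [FiniteDimensional ℝ E] [Nontrivial E] [MeasurableSpace E] [BorelSpace E]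
    (μ : Measure E) [μ.IsAddHaarMeasure] {α : ℝ≥0} (hα : 0 < α) {h : ι → E → E} {p : ι → E → ℝ}
    (hsmooth : ∀ i, ContDiff ℝ 1 (h i))
    (hholder : ∀ i, ∃ C : ℝ≥0, HolderWith C α fun x => Real.log ‖fderiv ℝ (h i) x‖)
    (hlogbdd : ∃ M : ℝ, ∀ i x, |Real.log ‖fderiv ℝ (h i) x‖| ≤ M)
    (hpholder : ∀ i, ∃ C : ℝ≥0, HolderWith C α (p i))
    (hpbelow : ∃ δ > (0 : ℝ), ∀ i x, δ ≤ p i x)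
    (hpsum : ∀ x, ∑ i, p i x = 1)
    (hcoa : ∃ b > (0 : ℝ), ∀ x y, x ≠ y →
      ∑ j, p j x * Real.log (dist (h j x) (h j y) / dist x y) < -b)
    (hconf : ∀ i x, IsConformalMap (fderiv ℝ (h i) x))
    (hROSC : ∃ U : Set E, U.Nonempty ∧ IsOpen U ∧ (∀ i, h i '' U ⊆ U) ∧
      (∀ i j, i ≠ j → h i '' U ∩ h j '' U = ∅) ∧
      ∃ R₂ > (0 : ℝ), ∃ R₃ > (0 : ℝ), ∀ x ∈ U, ∀ r : ℝ, 0 < r → r < R₂ →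
        ENNReal.ofReal (R₃ * r ^ Module.finrank ℝ E) ≤ μ (ball x r ∩ U))
    (ν : Measure E) [IsProbabilityMeasure ν]
    (hinv : ν = ∑ i, Measure.map (h i) (ν.withDensity fun x => ENNReal.ofReal (p i x))) :
    lowerDimH ν = upperDimH ν ∧
    upperDimH ν = ENNReal.ofReal
      ((∫ x, ∑ i, p i x * Real.log (p i x) ∂ν) /
        (∫ x, ∑ i, p i x * Real.log ‖fderiv ℝ (h i) x‖ ∂ν)) := by
  obtain ⟨M, hM⟩ := hlogbdd
  obtain ⟨δ, hδ, hδ_le⟩ := hpbelow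
  obtain ⟨b, hb, h_log⟩ := hcoa
  obtain ⟨U, hU_nonempty, hU, h_subset, h_disjoint, R₂, hR₂, R₃, hR₃, h_density⟩ := hROSC
  lift δ to ℝ≥0 using hδ.le
  let S : IFS ι E :=
    { map := h
      prob := p
      continuous_map := fun i => (hsmooth i).continuous
      continuous_prob := fun i => let ⟨_, hC⟩ := hpholder i; hC.continuous hα
      prob_pos := fun i x => hδ.trans_le (hδ_le i x)
      sum_prob := hpsum }
  have hS : S.IsConformal := ⟨hsmooth, hconf⟩
  obtain ⟨β, C, q, B, hS_log⟩ := hS.exists_hasLogDeriv hα hholder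
    (fun i x => (hM i x).trans (Real.le_coe_toNNReal M)) hpholder hδ hδ_le hb h_log
  obtain ⟨h_lower, h_upper⟩ := hS_log.lowerDimH_eq_and_upperDimH_eq
    (hS.hasLogJacobian μ hS_log.mem_holderClass) (IFS.isRegularOpenSet_of_isAddHaarMeasure μ
      hU_nonempty hU h_subset h_disjoint hR₂ hR₃ h_density) hinv
  rw [IFS.entropy, IFS.lyapunovExponent, neg_div_neg_eq] at h_lower h_upper
  exact ⟨h_lower.trans h_upper.symm, h_upper⟩

/-- For a conformal contracting-on-average IFS satisfying the regular open set condition,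
the Hausdorff dimension of the invariant measure exists and is given by the
Eckmann–Ruelle formula. -/
theorem dimH_invariant_measure_ROSC
    (d k : ℕ) (hd : 1 ≤ d) (hk : 2 ≤ k) (α : ℝ≥0) (hα0 : 0 < α) (hα1 : α ≤ 1)
    (h : Fin k → EuclideanSpace ℝ (Fin d) → EuclideanSpace ℝ (Fin d))
    (p : Fin k → EuclideanSpace ℝ (Fin d) → ℝ)
    -- the maps are C¹ with α-Hölder, uniformly bounded logarithmic derivative
    (hsmooth : ∀ i, ContDiff ℝ 1 (h i))
    (hholder : ∀ i, ∃ C : ℝ≥0, HolderWith C α fun x => Real.log ‖fderiv ℝ (h i) x‖)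
    (hlogbdd : ∃ M : ℝ, ∀ i x, |Real.log ‖fderiv ℝ (h i) x‖| ≤ M)
    -- the probabilities are α-Hölder, with values in (0,1), uniformly bounded away from 0
    (hpholder : ∀ i, ∃ C : ℝ≥0, HolderWith C α (p i))
    (hprange : ∀ i x, p i x ∈ Set.Ioo (0 : ℝ) 1)
    (hpbelow : ∃ δ > (0 : ℝ), ∀ i x, δ ≤ p i x)
    (hpsum : ∀ x, ∑ i, p i x = 1)
    -- contraction on average
    (hcoa : ∃ b > (0 : ℝ), ∀ x y, x ≠ y →
      ∑ j, p j x * Real.log (dist (h j x) (h j y) / dist x y) < -b)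
    -- conformality of the maps
    (hconf : ∀ i x, IsConformalMap (fderiv ℝ (h i) x))
    -- regular open set condition
    (hROSC : ∃ U : Set (EuclideanSpace ℝ (Fin d)), U.Nonempty ∧ IsOpen U ∧
      (∀ i, h i '' U ⊆ U) ∧
      (∀ i j, i ≠ j → h i '' U ∩ h j '' U = ∅) ∧
      ∃ R₂ > (0 : ℝ), ∃ R₃ > (0 : ℝ), ∀ x ∈ U, ∀ r : ℝ, 0 < r → r < R₂ →
        ENNReal.ofReal (R₃ * r ^ d) ≤ volume (Metric.ball x r ∩ U))
    -- the (unique) invariant probability measure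
    (ν : Measure (EuclideanSpace ℝ (Fin d))) [IsProbabilityMeasure ν]
    (hinv : ν = ∑ i, Measure.map (h i)
      (ν.withDensity fun x => ENNReal.ofReal (p i x))) :
    lowerDimH ν = upperDimH ν ∧
    upperDimH ν = ENNReal.ofReal
      ((∫ x, ∑ i, p i x * Real.log (p i x) ∂ν) /
        (∫ x, ∑ i, p i x * Real.log ‖fderiv ℝ (h i) x‖ ∂ν)) := by
  have : Nonempty (Fin d) := ⟨⟨0, hd⟩⟩
  exact dimH_invariant_measure_ROSC_general volume hα0 hsmooth hholder hlogbdd hpholder hpbelow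
    hpsum hcoa hconf (by simpa only [finrank_euclideanSpace_fin] using hROSC) ν hinv
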